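/- There exist absolute constants ε > 0 and K ≥ 1 with εK ≤ 10^{−10} such that for every δ > 0 there is N ∈ ℕ with the following property. Let G be a finite abelian group (written additively) of order n ≥ N, let k be an integer with 3 ≤ k ≤ (log n)^{10}, let p be a real with n^{−ε} ≤ p ≤ 1, and let m be a positive multiple of k with m ≤ (p/(k·log n))^K · n. Let R₁, R₂ be independent p-random subsets of G. Then with probability at least 1 − δ the following holds: for every U ⊆ G with |U| ≤ n^{4/5}, there exist subsets V ⊆ R₁ ∖ U and C ⊆ R₂ ∖ U such that for all V' ⊆ G ∖ V and C' ⊆ G ∖ C with |V'| = |C'| = m, ∑_{c∈C'} c = 0 and 0 ∉ C', there exists a permutation σ of V ∪ V' all of whose cycles have length exactly k such that v ↦ v − σ(v) is a bijection from V ∪ V' onto C ∪ C'. -/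

import Mathlib

open scoped Classical

/-- The probability that a `p`-random subset of the finite type `G` (each element included
independently with probability `p`) equals the finset `A`. -/
noncomputable def setProb (G : Type) [Fintype G] [DecidableEq G] (p : ℝ) (A : Finset G) : ℝ :=
  p ^ A.card * (1 - p) ^ (Fintype.card G - A.card)

/-- A rainbow directed `C_k`-factor of `K_G` on vertex set `V` with colour set `C`:
a permutation `σ` of `V` all of whose cycles have length exactly `k` such that
`v ↦ v - σ v` is a bijection from `V` onto `C`. -/
def IsRainbowCycleFactor {G : Type} [AddCommGroup G] [Fintype G] [DecidableEq G]
    (k : ℕ) (V C : Finset G) : Prop :=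
  ∃ σ : Equiv.Perm G, σ.support = V ∧ (∀ c ∈ σ.cycleType, c = k) ∧
    Set.BijOn (fun v : G => v - σ v) ↑V ↑C

namespace ZeroSumAbsorption

section Decomposition

variable {G : Type} [AddCommGroup G]

/-- The element of `G ⊕ G` standing for the vertex `g`. -/
abbrev vx (g : G) : G ⊕ G := Sum.inl g

/-- The element of `G ⊕ G` standing for the colour `g`. -/
abbrev cl (g : G) : G ⊕ G := Sum.inr g

/-- The colours of the path through a list of vertices, continued by an edge to `e`. -/
def closeCols (e : G) : List G → Multiset (G ⊕ G)
  | [] => 0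
  | [x] => {cl (x - e)}
  | x :: y :: l => cl (x - y) ::ₘ closeCols e (y :: l)

/-- The vertices and colours of the closed walk through a list of vertices. -/
def cyc (L : List G) : Multiset (G ⊕ G) :=
  (L.map vx : Multiset (G ⊕ G)) + closeCols (L.headD 0) L

/-- Multisets of vertices and colours which decompose into closed walks of length `k`. -/
inductive Dec (k : ℕ) : Multiset (G ⊕ G) → Prop
  | zero : Dec k 0
  | add (L : List G) (s : Multiset (G ⊕ G)) (h : L.length = k) (hs : Dec k s) : Dec k (cyc L + s)

theorem Dec.of_cyc {k : ℕ} {L : List G} (h : L.length = k) : Dec k (cyc L) := by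
  simpa using Dec.add L 0 h Dec.zero

theorem Dec.append {k : ℕ} {s t : Multiset (G ⊕ G)} (hs : Dec k s) (ht : Dec k t) :
    Dec k (s + t) := by
  induction hs with
  | zero => simpa
  | add L s h _ ih => rw [add_assoc]; exact Dec.add L _ h ih

theorem Dec.sum {k : ℕ} {ι : Type*} (s : Finset ι) (f : ι → Multiset (G ⊕ G))
    (h : ∀ i ∈ s, Dec k (f i)) : Dec k (∑ i ∈ s, f i) := by
  induction s using Finset.induction_on with
  | empty => simpa using Dec.zero
  | insert a s ha ih =>
    rw [Finset.sum_insert ha]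
    exact (h a (Finset.mem_insert_self _ _)).append
      (ih fun i hi => h i (Finset.mem_insert_of_mem hi))

theorem closeCols_cons (e x : G) (l : List G) :
    closeCols e (x :: l) = (List.zipWith (fun a b => cl (a - b)) (x :: l) (l ++ [e]) :) := by
  induction l generalizing x with
  | nil => simp [closeCols]
  | cons y l ih => simp [closeCols, ih]

theorem map_formPerm_cons {H : Type*} [DecidableEq H] (x : H) (l : List H) (h : (x :: l).Nodup) :
    (x :: l).map (x :: l).formPerm = l ++ [x] := by
  apply List.ext_getElem
  · simp
  · intro i h1 h2
    rw [List.getElem_map, List.formPerm_apply_getElem _ h]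
    simp only [List.length_map, List.length_cons] at h1
    rcases Nat.lt_succ_iff_lt_or_eq.1 h1 with hi | hi
    · have : (i + 1) % (x :: l).length = i + 1 := Nat.mod_eq_of_lt (by simpa using hi)
      simp only [List.length_cons] at this
      simp [this, List.getElem_append_left hi]
    · subst hi
      simp

theorem closeCols_formPerm [DecidableEq G] (x : G) (l : List G) (h : (x :: l).Nodup) :
    closeCols x (x :: l) =
      (((x :: l).map fun v => cl (v - (x :: l).formPerm v) : List (G ⊕ G)) : Multiset (G ⊕ G)) := by
  rw [closeCols_cons, ← map_formPerm_cons x l h, List.zipWith_map_right, List.zipWith_self]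

theorem isRainbowCycleFactor_of_cyc [Fintype G] [DecidableEq G] {k : ℕ} (hk : 2 ≤ k) (L : List G)
    (hL : L.length = k) (hn : (cyc L).Nodup) :
    ∃ σ : Equiv.Perm G, (∀ v, v ∈ σ.support ↔ vx v ∈ cyc L) ∧ (∀ c ∈ σ.cycleType, c = k) ∧
      Set.BijOn (fun v => v - σ v) {v | vx v ∈ cyc L} {c | cl c ∈ cyc L} := by
  obtain ⟨x, l, rfl⟩ : ∃ x l, L = x :: l := by
    cases L with
    | nil => simp at hL; omega
    | cons x l => exact ⟨x, l, rfl⟩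
  have hLn : (x :: l).Nodup := by
    have := (Multiset.nodup_add.1 hn).1
    exact List.Nodup.of_map vx (Multiset.coe_nodup.1 this)
  have hc := (Multiset.nodup_add.1 hn).2.1
  rw [List.headD_cons, closeCols_formPerm x l hLn, Multiset.coe_nodup] at hc
  have h2 : 2 ≤ (x :: l).length := by omega
  have hV : ∀ v, vx v ∈ cyc (x :: l) ↔ v ∈ x :: l := by
    intro v
    rw [cyc, List.headD_cons, closeCols_formPerm x l hLn, Multiset.mem_add, Multiset.mem_coe,
      Multiset.mem_coe]
    simp only [List.mem_map, Sum.inl.injEq, exists_eq_right]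
    simp
  have hC : ∀ v, cl v ∈ cyc (x :: l) ↔ ∃ w ∈ x :: l, w - (x :: l).formPerm w = v := by
    intro v
    rw [cyc, List.headD_cons, closeCols_formPerm x l hLn, Multiset.mem_add, Multiset.mem_coe,
      Multiset.mem_coe]
    simp only [List.mem_map, Sum.inr.injEq]
    simp
  refine ⟨(x :: l).formPerm, fun v => ?_, ?_, ?_⟩
  · rw [hV, List.support_formPerm_of_nodup _ hLn (by rintro y hy; rw [hy] at h2; simp at h2),
      List.mem_toFinset]
  · rw [(List.isCycle_formPerm hLn h2).cycleType,
      List.support_formPerm_of_nodup _ hLn (by rintro y hy; rw [hy] at h2; simp at h2),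
      List.toFinset_card_of_nodup hLn, hL]
    simp
  · refine ⟨fun v hv => ?_, ?_, ?_⟩
    · exact (hC _).2 ⟨v, (hV v).1 hv, rfl⟩
    · intro v hv w hw h
      exact List.inj_on_of_nodup_map hc ((hV v).1 hv) ((hV w).1 hw) (congrArg cl h)
    · intro c hc
      obtain ⟨w, hw, rfl⟩ := (hC c).1 hc
      exact ⟨w, (hV w).2 hw, rfl⟩

theorem Dec.exists_perm [Fintype G] [DecidableEq G] {k : ℕ} (hk : 2 ≤ k) {s : Multiset (G ⊕ G)}
    (hs : Dec k s) (hn : s.Nodup) :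
    ∃ σ : Equiv.Perm G, (∀ v, v ∈ σ.support ↔ vx v ∈ s) ∧ (∀ c ∈ σ.cycleType, c = k) ∧
      Set.BijOn (fun v => v - σ v) {v | vx v ∈ s} {c | cl c ∈ s} := by
  induction hs with
  | zero => exact ⟨1, by simp, by simp, by simp⟩
  | add L s hL _ ih =>
    obtain ⟨n1, n2, hd⟩ := Multiset.nodup_add.1 hn
    obtain ⟨σ, a1, a2, a3⟩ := isRainbowCycleFactor_of_cyc hk L hL n1
    obtain ⟨τ, b1, b2, b3⟩ := ih n2
    have hdis : Equiv.Perm.Disjoint σ τ := by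
      rw [Equiv.Perm.disjoint_iff_disjoint_support, Finset.disjoint_left]
      intro v hv hv'
      exact Multiset.disjoint_left.1 hd ((a1 v).1 hv) ((b1 v).1 hv')
    have e1 : ∀ v, vx v ∈ cyc L → (σ * τ) v = σ v := by
      intro v hv
      have : τ v = v := by
        rw [← Equiv.Perm.notMem_support, b1]
        exact Multiset.disjoint_left.1 hd hv
      simp [this]
    have e2 : ∀ v, vx v ∈ s → (σ * τ) v = τ v := by
      intro v hv
      have : σ v = v := by
        rw [← Equiv.Perm.notMem_support, a1]
        exact fun h => Multiset.disjoint_left.1 hd h hv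
      rw [hdis.commute.eq]
      simp [this]
    refine ⟨σ * τ, fun v => ?_, fun c hc => ?_, ?_⟩
    · rw [hdis.support_mul, Finset.mem_union, a1, b1, Multiset.mem_add]
    · rw [hdis.cycleType_mul, Multiset.mem_add] at hc
      exact hc.elim (a2 c) (b2 c)
    · have c1 : Set.BijOn (fun v => v - (σ * τ) v) {v | vx v ∈ cyc L} {c | cl c ∈ cyc L} :=
        a3.congr fun v hv => by simp only [e1 v hv]
      have c2 : Set.BijOn (fun v => v - (σ * τ) v) {v | vx v ∈ s} {c | cl c ∈ s} :=
        b3.congr fun v hv => by simp only [e2 v hv]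
      have := c1.union c2 ?_
      · simpa only [Multiset.mem_add, Set.ofPred_or] using this
      · rw [Set.injOn_union]
        · refine ⟨c1.injOn, c2.injOn, fun v hv w hw h => ?_⟩
          have h1 := c1.mapsTo hv
          have h2 := c2.mapsTo hw
          simp only [Set.mem_ofPred_eq] at h1 h2
          change v - (σ * τ) v = w - (σ * τ) w at h
          rw [h] at h1
          exact Multiset.disjoint_left.1 hd h1 h2
        · rw [Set.disjoint_left]
          exact fun v hv hw => Multiset.disjoint_left.1 hd hv hw

theorem Dec.isRainbowCycleFactor [Fintype G] [DecidableEq G] {k : ℕ} (hk : 2 ≤ k)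
    {s : Multiset (G ⊕ G)} (hs : Dec k s) (hn : s.Nodup) {V C : Finset G}
    (hV : ∀ v, v ∈ V ↔ vx v ∈ s) (hC : ∀ c, c ∈ C ↔ cl c ∈ s) : IsRainbowCycleFactor k V C := by
  obtain ⟨σ, h1, h2, h3⟩ := hs.exists_perm hk hn
  refine ⟨σ, by ext v; rw [h1, hV], h2, ?_⟩
  convert h3 using 1
  · ext v; simp [hV]
  · ext v; simp [hC]

/-- The sum of the colours in a multiset of vertices and colours. -/
def colSum : Multiset (G ⊕ G) →+ G where
  toFun s := (s.map (Sum.elim (fun _ => 0) id)).sum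
  map_zero' := by simp
  map_add' := by simp

theorem colSum_apply (s : Multiset (G ⊕ G)) :
    colSum s = (s.map (Sum.elim (fun _ => 0) id)).sum := rfl

@[simp] theorem colSum_singleton_vx (g : G) : colSum {vx g} = 0 := by simp [colSum_apply]

@[simp] theorem colSum_singleton_cl (g : G) : colSum {cl g} = g := by simp [colSum_apply]

@[simp] theorem colSum_cons_vx (g : G) (s) : colSum (vx g ::ₘ s) = colSum s := by simp [colSum_apply]

@[simp] theorem colSum_cons_cl (g : G) (s) : colSum (cl g ::ₘ s) = g + colSum s := by
  simp [colSum_apply]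

theorem colSum_closeCols (e x : G) (l : List G) : colSum (closeCols e (x :: l)) = x - e := by
  induction l generalizing x with
  | nil => simp [closeCols]
  | cons y l ih => simp [closeCols, ih]

theorem colSum_map_vx (s : Multiset G) : colSum (s.map vx) = 0 := by
  simp [colSum_apply]

theorem colSum_map_cl (s : Multiset G) : colSum (s.map cl) = s.sum := by
  simp [colSum_apply]

theorem Dec.colSum_eq_zero {k : ℕ} {s : Multiset (G ⊕ G)} (hs : Dec k s) : colSum s = 0 := by
  induction hs with
  | zero => simp
  | add L s h _ ih =>
    rw [map_add, ih, add_zero, cyc, map_add, ← Multiset.map_coe, colSum_map_vx]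
    cases L with
    | nil => simp [closeCols]
    | cons x l => simp [colSum_closeCols]

end Decomposition

section Forms

variable {G : Type} [AddCommGroup G] [Fintype G]

/-- The subgroup of doubles has bounded order. -/
def FewDoubles (G : Type) [AddCommGroup G] [Fintype G] : Prop :=
  (Finset.univ.image fun y : G => y + y).card ≤ 400

/-- `g` is a double, and there are few doubles. -/
def Dbl (g : G) : Prop := FewDoubles G ∧ ∃ y, g = y + y

theorem Dbl.shift {g h : G} (hg : Dbl g) (y : G) (e : h = g + (y + y)) : Dbl h := by
  obtain ⟨hs, z, rfl⟩ := hg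
  exact ⟨hs, z + y, by rw [e]; abel⟩

theorem Dbl.neg_shift {g h : G} (hg : Dbl g) (y : G) (e : h = -g + (y + y)) : Dbl h := by
  obtain ⟨hs, z, rfl⟩ := hg
  exact ⟨hs, -z + y, by rw [e]; abel⟩

theorem Dbl.neg {g : G} (hg : Dbl g) : Dbl (-g) := hg.neg_shift 0 (by simp)

theorem Dbl.add {g h : G} (hg : Dbl g) (hh : Dbl h) : Dbl (g + h) := by
  obtain ⟨_, y, rfl⟩ := hh
  exact hg.shift y rfl

theorem card_filter_dbl : (Finset.univ.filter fun g : G => Dbl g).card ≤ 400 := by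
  by_cases hs : FewDoubles G
  · refine le_trans (Finset.card_le_card fun g hg => ?_) hs
    obtain ⟨_, y, rfl⟩ := (Finset.mem_filter.1 hg).2
    exact Finset.mem_image_of_mem _ (Finset.mem_univ y)
  · rw [Finset.card_eq_zero.2]
    · simp
    · rw [Finset.filter_eq_empty_iff]
      exact fun g _ hg => hs hg.1

/-- `x` differs from all elements of `E`, and not by a double from any element of `D`. -/
def Avoid (E D : List G) (x : G) : Prop := (∀ z ∈ E, x ≠ z) ∧ ∀ z ∈ D, ¬ Dbl (x - z)

theorem card_filter_not_avoid (E D : List G) :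
    (Finset.univ.filter fun x : G => ¬ Avoid E D x).card ≤ 400 * (E.length + D.length) := by
  have : (Finset.univ.filter fun x : G => ¬ Avoid E D x) ⊆
      E.toFinset ∪ D.toFinset.biUnion fun z =>
        (Finset.univ.filter fun g : G => Dbl g).image fun g => g + z := by
    intro x hx
    have hx := (Finset.mem_filter.1 hx).2
    rw [Avoid, not_and_or] at hx
    rw [Finset.mem_union]
    rcases hx with hx | hx
    · push Not at hx
      obtain ⟨z, hz, rfl⟩ := hx
      exact Or.inl (List.mem_toFinset.2 hz)
    · push Not at hx
      obtain ⟨z, hz, h⟩ := hx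
      refine Or.inr (Finset.mem_biUnion.2 ⟨z, List.mem_toFinset.2 hz, ?_⟩)
      exact Finset.mem_image.2 ⟨x - z, by simpa using h, by abel⟩
  refine (Finset.card_le_card this).trans ((Finset.card_union_le _ _).trans ?_)
  have h1 : E.toFinset.card ≤ E.length := List.toFinset_card_le E
  have h2 : D.toFinset.card ≤ D.length := List.toFinset_card_le D
  have h3 := Finset.card_biUnion_le_card_mul D.toFinset
    (fun z => (Finset.univ.filter fun g : G => Dbl g).image fun g => g + z) 400
    fun z _ => Finset.card_image_le.trans card_filter_dbl
  nlinarith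

theorem card_double_fiber (hs : ¬ FewDoubles G) (d : G) :
    400 * (Finset.univ.filter fun x : G => x + x = d).card ≤ Fintype.card G := by
  rcases (Finset.univ.filter fun x : G => x + x = d).eq_empty_or_nonempty with h | ⟨x₀, h⟩
  · simp [h]
  · have hx₀ : x₀ + x₀ = d := (Finset.mem_filter.1 h).2
    rw [FewDoubles, not_le] at hs
    have key : ∀ b ∈ Finset.univ.image (fun y : G => y + y),
        (Finset.univ.filter fun x : G => x + x = d).card ≤
          (Finset.univ.filter fun x : G => x + x = b).card := by
      intro b hb
      obtain ⟨y, -, rfl⟩ := Finset.mem_image.1 hb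
      refine Finset.card_le_card_of_injOn (fun x => x - x₀ + y) (fun x hx => ?_) ?_
      · have hx : x + x = d := by simpa using hx
        have : x - x₀ + y + (x - x₀ + y) = y + y := by
          rw [show x - x₀ + y + (x - x₀ + y) = (x + x) - (x₀ + x₀) + (y + y) by abel, hx, hx₀]
          abel
        simpa using this
      · intro x _ x' _ hxx
        simpa using hxx
    have := Finset.card_eq_sum_card_image (fun y : G => y + y) Finset.univ
    have h2 := Finset.card_nsmul_le_sum _ _ _ key
    rw [← this, smul_eq_mul, Finset.card_univ] at h2
    nlinarith

theorem card_double_fiber_le_half {d : G} (h : d ≠ 0 ∨ ∃ y : G, y + y ≠ 0) :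
    2 * (Finset.univ.filter fun x : G => x + x = d).card ≤ Fintype.card G := by
  obtain ⟨y, hy⟩ : ∃ y : G, y + y ≠ 0 ∨ ¬ ∃ x : G, x + x = d := by
    by_cases hd : ∃ y : G, y + y ≠ 0
    · exact hd.imp fun y hy => Or.inl hy
    · refine ⟨0, Or.inr ?_⟩
      push Not at hd
      rintro ⟨x, rfl⟩
      rcases h with h | ⟨y, hy⟩
      · exact h (hd x)
      · exact hy (hd y)
  rcases hy with hy | hy
  · have : ((Finset.univ.filter fun x : G => x + x = d) ∪
        (Finset.univ.filter fun x : G => x + x = d).image fun x => x + y).card ≤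
        Fintype.card G := Finset.card_le_univ _
    rw [Finset.card_union_of_disjoint, Finset.card_image_of_injective _ (add_left_injective y)]
      at this
    · omega
    · rw [Finset.disjoint_left]
      intro x hx hx'
      obtain ⟨z, hz, rfl⟩ := Finset.mem_image.1 hx'
      have h1 := (Finset.mem_filter.1 hx).2
      have h2 := (Finset.mem_filter.1 hz).2
      apply hy
      rw [show z + y + (z + y) = (z + z) + (y + y) by abel, h2] at h1
      simpa using h1
  · rw [Finset.card_eq_zero.2]
    · simp
    · rw [Finset.filter_eq_empty_iff]
      exact fun x _ hx => hy ⟨x, hx⟩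

/-- Vertices and colours depending affinely, with slope `1` or `-1`, on a group element. -/
inductive Form (G : Type) : Type
  | vp (s : G)
  | vm (s : G)
  | cp (s : G)
  | cm (s : G)

namespace Form

/-- The value of a form. -/
def eval (x : G) : Form G → G ⊕ G
  | vp s => vx (s + x)
  | vm s => vx (s - x)
  | cp s => cl (s + x)
  | cm s => cl (s - x)

/-- A condition ensuring that two forms seldom agree. -/
def Compat : Form G → Form G → Prop
  | vp s, vp t => s ≠ t
  | vm s, vm t => s ≠ t
  | vp s, vm t => ¬ Dbl (s - t)
  | vm s, vp t => ¬ Dbl (s - t)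
  | cp s, cp t => s ≠ t
  | cm s, cm t => s ≠ t
  | cp s, cm t => ¬ Dbl (s - t)
  | cm s, cp t => ¬ Dbl (s - t)
  | _, _ => True

theorem card_eq_of_not_dbl {s t : G} (h : ¬ Dbl (s - t)) :
    400 * (Finset.univ.filter fun x : G => s + x = t - x).card ≤ Fintype.card G := by
  by_cases hs : FewDoubles G
  · rw [Finset.card_eq_zero.2]
    · simp
    · rw [Finset.filter_eq_empty_iff]
      intro x _ hx
      refine h ⟨hs, -x, ?_⟩
      rw [eq_sub_iff_add_eq] at hx
      rw [← hx]; abel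
  · convert card_double_fiber hs (t - s) using 4
    rw [eq_sub_iff_add_eq, eq_sub_iff_add_eq]
    constructor <;> intro h <;> rw [← h] <;> abel

theorem Compat.card_le {f g : Form G} (h : Compat f g) :
    400 * (Finset.univ.filter fun x : G => f.eval x = g.eval x).card ≤ Fintype.card G := by
  have key : ∀ {s t : G}, ¬ Dbl (s - t) →
      400 * (Finset.univ.filter fun x : G => s - x = t + x).card ≤ Fintype.card G := by
    intro s t h
    have : ¬ Dbl (t - s) := fun h' => h (by simpa using h'.neg)
    convert card_eq_of_not_dbl this using 4
    exact eq_comm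
  cases f <;> cases g <;> simp only [Compat, ne_eq] at h <;>
    simp only [eval, vx, cl, Sum.inl.injEq, Sum.inr.injEq, reduceCtorEq, add_left_inj, sub_left_inj,
      Finset.filter_false, h, Finset.card_empty, mul_zero, zero_le]
  · exact card_eq_of_not_dbl h
  · exact key h
  · exact card_eq_of_not_dbl h
  · exact key h

theorem card_bad (l : List (Form G)) (h : l.Pairwise Compat) :
    400 * (Finset.univ.filter fun x : G => ¬ (l.map (eval x)).Nodup).card ≤
      l.length ^ 2 * Fintype.card G := by
  induction l with
  | nil => simp
  | cons f l ih =>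
    rw [List.pairwise_cons] at h
    have h1 : ∀ l' : List (Form G), (∀ g ∈ l', Compat f g) →
        400 * (Finset.univ.filter fun x : G => f.eval x ∈ l'.map (eval x)).card ≤
          l'.length * Fintype.card G := by
      intro l' hl'
      induction l' with
      | nil => simp
      | cons g l' ih' =>
        have a1 := ih' fun g hg => hl' g (List.mem_cons_of_mem _ hg)
        have a2 := (hl' g List.mem_cons_self).card_le
        have a3 : (Finset.univ.filter fun x : G => f.eval x ∈ (g :: l').map (eval x)) =
            (Finset.univ.filter fun x : G => f.eval x = g.eval x) ∪
            (Finset.univ.filter fun x : G => f.eval x ∈ l'.map (eval x)) := by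
          ext x; simp [eq_comm]
        rw [a3]
        refine (Nat.mul_le_mul_left _ (Finset.card_union_le _ _)).trans ?_
        rw [List.length_cons]
        linarith
    have a1 := h1 l h.1
    have a2 := ih h.2
    have a3 : (Finset.univ.filter fun x : G => ¬ ((f :: l).map (eval x)).Nodup) =
        (Finset.univ.filter fun x : G => f.eval x ∈ l.map (eval x)) ∪
        (Finset.univ.filter fun x : G => ¬ (l.map (eval x)).Nodup) := by
      ext x
      simp only [List.map_cons, List.nodup_cons, Finset.mem_filter, Finset.mem_union,
        Finset.mem_univ, true_and]
      tauto
    rw [a3]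
    refine (Nat.mul_le_mul_left _ (Finset.card_union_le _ _)).trans ?_
    rw [List.length_cons]
    nlinarith

omit [Fintype G] in
theorem eval_injective (f : Form G) : Function.Injective fun x => f.eval x := by
  intro x y h
  cases f <;> simpa [eval, vx, cl] using h

end Form

/-- `s` consists of distinct elements of `R` outside `X`. -/
def Fresh (R : Set (G ⊕ G)) (X s : Multiset (G ⊕ G)) : Prop :=
  s.Nodup ∧ ∀ e ∈ s, e ∈ R ∧ e ∉ X

/-- Lists of at most `14` forms which are often nondegenerate have, outside any set of size at
most `c`, a nondegenerate evaluation inside `R`. -/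
def Rich (R : Set (G ⊕ G)) (c : ℕ) : Prop :=
  ∀ l : List (Form G), l.length ≤ 14 →
    Fintype.card G ≤ 4 * (Finset.univ.filter fun x : G => (l.map (Form.eval x)).Nodup).card →
    ∀ X : Multiset (G ⊕ G), Multiset.card X ≤ c → ∃ x, Fresh R X (l.map (Form.eval x))

end Forms

section Fresh
variable {G : Type} {R R' : Set (G ⊕ G)} {X Y s t : Multiset (G ⊕ G)}

theorem Fresh.nil : Fresh R X 0 := ⟨by simp, by simp⟩

theorem Fresh.append (hs : Fresh R X s) (ht : Fresh R (s + X) t) : Fresh R X (s + t) := by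
  refine ⟨Multiset.nodup_add.2 ⟨hs.1, ht.1, ?_⟩, fun e he => ?_⟩
  · rw [Multiset.disjoint_left]
    exact fun he he' => (ht.2 _ he').2 (Multiset.mem_add.2 (Or.inl he))
  · rcases Multiset.mem_add.1 he with h | h
    · exact hs.2 e h
    · exact ⟨(ht.2 e h).1, fun h' => (ht.2 e h).2 (Multiset.mem_add.2 (Or.inr h'))⟩

theorem Fresh.sub (hs : Fresh R X s) (h : t ≤ s) : Fresh R X t :=
  ⟨Multiset.nodup_of_le h hs.1, fun e he => hs.2 e (Multiset.mem_of_le h he)⟩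

theorem Fresh.mono (hs : Fresh R X s) (hR : R ⊆ R') (hX : Y ⊆ X) : Fresh R' Y s :=
  ⟨hs.1, fun e he => ⟨hR (hs.2 e he).1, fun h => (hs.2 e he).2 (hX h)⟩⟩

end Fresh

section Rich
variable {G : Type} [AddCommGroup G] [Fintype G] {R : Set (G ⊕ G)} {c : ℕ} {X : Multiset (G ⊕ G)}

theorem Rich.exists_avoid (hR : Rich R c) (P : G → Prop) (N : ℕ)
    (hP : (Finset.univ.filter fun x => ¬ P x).card ≤ N) (f : Form G) (l : List (Form G))
    (hl : l.length ≤ 13)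
    (hn : Fintype.card G ≤
      4 * (Finset.univ.filter fun x : G => ((f :: l).map (Form.eval x)).Nodup).card)
    (hX : Multiset.card X + N ≤ c) :
    ∃ x, Fresh R X ((f :: l).map (Form.eval x)) ∧ P x := by
  obtain ⟨x, hx⟩ := hR (f :: l) (by rw [List.length_cons]; lia) hn
    (X + (Finset.univ.filter fun x => ¬ P x).val.map fun x => f.eval x) (by
      rw [Multiset.card_add, Multiset.card_map]
      exact (Nat.add_le_add_left hP _).trans hX)
  refine ⟨x, hx.mono subset_rfl (Multiset.subset_of_le (Multiset.le_add_right _ _)), ?_⟩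
  by_contra hPx
  refine (hx.2 (f.eval x) (by simp)).2 (Multiset.mem_add.2 (Or.inr ?_))
  exact Multiset.mem_map_of_mem _ (by simpa using hPx)

theorem Rich.exists_fresh (hR : Rich R c) (f : Form G) (l : List (Form G)) (hl : l.length ≤ 13)
    (hn : (f :: l).Pairwise Form.Compat) (E D : List G)
    (hX : Multiset.card X + 400 * (E.length + D.length) ≤ c) :
    ∃ x, Fresh R X ((f :: l).map (Form.eval x)) ∧ Avoid E D x := by
  refine hR.exists_avoid _ _ (card_filter_not_avoid E D) f l hl ?_ hX
  have h1 := Form.card_bad _ hn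
  have h2 := Finset.card_filter_add_card_filter_not (s := (Finset.univ : Finset G))
    (fun x : G => ((f :: l).map (Form.eval x)).Nodup)
  rw [Finset.card_univ] at h2
  have h3 : (f :: l).length ^ 2 ≤ 196 := by
    have : (f :: l).length ≤ 14 := by rw [List.length_cons]; lia
    nlinarith
  nlinarith [Nat.mul_le_mul_right (Fintype.card G) h3]

end Rich

section Split

variable {G : Type} [AddCommGroup G]

theorem Dec.congr {k : ℕ} {s t : Multiset (G ⊕ G)} (hs : Dec k s) (h : t = s) : Dec k t := h ▸ hs

theorem coe_cons_eq {α : Type*} (a : α) (l : List α) :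
    ((a :: l : List α) : Multiset α) = {a} + (l : Multiset α) := by
  rw [Multiset.singleton_add, Multiset.cons_coe]

/-- `W` consists of the edge colours and all vertices but `p` of a path on `k - 2` vertices
from `q` to `p`. -/
def Split (k : ℕ) (p q : G) (W : Multiset (G ⊕ G)) : Prop :=
  ∃ l : List G, l.length + 3 = k ∧ ∀ e, (((q :: l).map vx : List (G ⊕ G)) : Multiset (G ⊕ G)) +
    closeCols e (q :: l) = {vx p} + {cl (p - e)} + W

theorem Split.refl (p : G) : Split 3 p p 0 := ⟨[], rfl, by simp [closeCols]⟩

theorem Split.cons {k : ℕ} {p q : G} {W : Multiset (G ⊕ G)} (h : Split k p q W) (q' : G) :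
    Split (k + 1) p q' (W + {vx q'} + {cl (q' - q)}) := by
  obtain ⟨l, hl, h⟩ := h
  refine ⟨q :: l, by simp [← hl], fun e => ?_⟩
  rw [List.map_cons, closeCols, coe_cons_eq, ← Multiset.singleton_add]
  calc _ = {vx q'} + {cl (q' - q)} + (((List.map vx (q :: l) : List _) : Multiset _) +
        closeCols e (q :: l)) := by abel
    _ = _ := by rw [h e]; abel

theorem Split.dec {k : ℕ} {p q : G} {W : Multiset (G ⊕ G)} (h : Split k p q W)
    (y₁ y₂ c₁ c₂ c₃ : G) (h₁ : c₁ = p - y₁) (h₂ : c₂ = y₁ - y₂) (h₃ : c₃ = y₂ - q) :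
    Dec k ({vx p} + W + {vx y₁} + {vx y₂} + {cl c₁} + {cl c₂} + {cl c₃}) := by
  subst h₁ h₂ h₃
  obtain ⟨l, hl, h⟩ := h
  refine (Dec.of_cyc (L := y₁ :: y₂ :: q :: l) (by simp [← hl])).congr ?_
  rw [cyc, List.headD_cons, closeCols, closeCols, List.map_cons, List.map_cons, coe_cons_eq,
    coe_cons_eq, ← Multiset.singleton_add, ← Multiset.singleton_add]
  calc _ = {vx y₁} + {vx y₂} + {cl (y₁ - y₂)} + {cl (y₂ - q)} +
      ({vx p} + {cl (p - y₁)} + W) := by abel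
    _ = _ := by rw [← h y₁]; abel

variable [Fintype G] {R : Set (G ⊕ G)} {c : ℕ}

theorem Avoid.mono {E D E' D' : List G} {x : G} (h : Avoid E D x) (hE : E' ⊆ E) (hD : D' ⊆ D) :
    Avoid E' D' x := ⟨fun z hz => h.1 z (hE hz), fun z hz => h.2 z (hD hz)⟩

theorem Rich.exists_split_mates (hR : Rich R c) {a : G} (ha : ¬ Dbl a) (p : G) (P : G → Prop)
    (N : ℕ) (hN : (Finset.univ.filter fun x => ¬ P x).card ≤ N) (hp : P p) (j : ℕ) (X : Multiset (G ⊕ G))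
    (hX : Multiset.card X + 3 * j + N ≤ c) :
    ∃ (q : G) (vs cs : Multiset G), Multiset.card vs = j ∧ Multiset.card cs = j ∧
      Fresh R X (vs.map vx + cs.map cl + cs.map fun y => cl (a - y)) ∧
      Split (j + 3) p q (vs.map vx + cs.map cl) ∧ P q := by
  induction j with
  | zero => exact ⟨p, 0, 0, rfl, rfl, by simpa using Fresh.nil, by simpa using Split.refl p, hp⟩
  | succ j ih =>
    obtain ⟨q, vs, cs, h1, h2, h3, h4, h5⟩ := ih (by lia)
    have hb := Form.card_bad [Form.vp 0, .cp (-q), .cm (a + q)] (by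
      simp only [Form.Compat, List.pairwise_cons, List.mem_cons, List.not_mem_nil, or_false,
        forall_eq_or_imp, forall_eq, true_and, and_true, IsEmpty.forall_iff, implies_true,
        List.Pairwise.nil, and_self]
      exact fun h => ha (h.neg_shift (-q) (by abel)))
    have hb2 := Finset.card_filter_add_card_filter_not (s := (Finset.univ : Finset G))
      (fun x : G => ([Form.vp 0, .cp (-q), .cm (a + q)].map (Form.eval x)).Nodup)
    rw [Finset.card_univ] at hb2
    obtain ⟨x, hx, hP⟩ := hR.exists_avoid P N hN (.vp 0) [.cp (-q), .cm (a + q)] (by simp)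
      (X := vs.map vx + cs.map cl + (cs.map fun y => cl (a - y)) + X) (by
        simp only [List.length_cons, List.length_nil] at hb
        lia) (by simp only [Multiset.card_add, Multiset.card_map, h1, h2]; lia)
    refine ⟨x, vs + {x}, cs + {x - q}, by simp [h1], by simp [h2], ?_, ?_, hP⟩
    · have := h3.append hx
      simp only [Form.eval, List.map_cons, List.map_nil, coe_cons_eq, Multiset.coe_nil,
        zero_add] at this
      convert this using 1
      rw [show -q + x = x - q by abel, show a + q - x = a - (x - q) by abel]
      simp only [Multiset.map_add, Multiset.map_singleton]
      abel
    · convert h4.cons x using 1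
      simp only [Multiset.map_add, Multiset.map_singleton]
      abel

theorem Rich.exists_split (hR : Rich R c) {a : G} (ha : ¬ Dbl a) {k : ℕ} (hk : 3 ≤ k) (p : G)
    (E D : List G) (hp : Avoid E D p) (X : Multiset (G ⊕ G))
    (hX : Multiset.card X + 3 * k + 400 * (E.length + D.length) ≤ c) :
    ∃ (q : G) (W : Multiset (G ⊕ G)), Multiset.card W ≤ 2 * k ∧ Fresh R X W ∧ Split k p q W ∧
      Avoid E D q := by
  obtain ⟨q, vs, cs, h1, h2, h3, h4, h5⟩ := hR.exists_split_mates ha p (Avoid E D) _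
    (card_filter_not_avoid E D) hp (k - 3) X (by lia)
  refine ⟨q, _, ?_, h3.sub (Multiset.le_add_right _ _), ?_, h5⟩
  · simp only [Multiset.card_add, Multiset.card_map]; lia
  · convert h4 using 1; lia

end Split

section Gadgets

variable {G : Type} [AddCommGroup G] [Fintype G] {R : Set (G ⊕ G)} {c : ℕ}

theorem card_le_nodup_vertex_pair {g s : G} (hg : g ≠ 0 ∨ ∃ y : G, y + y ≠ 0) :
    Fintype.card G ≤ 4 * (Finset.univ.filter fun x : G =>
      ([Form.vp 0, .vm g, .cp s].map (Form.eval x)).Nodup).card := by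
  have h1 := card_double_fiber_le_half hg
  have h2 := Finset.card_filter_add_card_filter_not (s := (Finset.univ : Finset G))
    (fun x : G => x + x = g)
  rw [Finset.card_univ] at h2
  have h3 : (Finset.univ.filter fun x : G =>
      ([Form.vp 0, .vm g, .cp s].map (Form.eval x)).Nodup) =
      Finset.univ.filter fun x : G => ¬ x + x = g := by
    ext x
    simp [Form.eval, eq_sub_iff_add_eq]
  rw [h3]
  lia

theorem Rich.exists_vertex_edge (hR : Rich R c) {a : G} (ha : ¬ Dbl a) {k : ℕ} (hk : 3 ≤ k)
    {w₁ w₂ : G} (hw : w₁ ≠ w₂) (X : Multiset (G ⊕ G)) (hX : Multiset.card X + 1000 * k ≤ c) :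
    ∃ S, Multiset.card S ≤ 8 * k ∧ Fresh R X S ∧ Dec k (S + {vx w₁}) ∧ Dec k (S + {vx w₂}) := by
  obtain ⟨p₁, f₁, hp₁⟩ := hR.exists_fresh (.vp 0) [.cp (-w₁)] (by simp) (by simp [Form.Compat])
    [w₁] [w₁, w₂] (X := X) (by simp; lia)
  simp only [List.map_cons, List.map_nil, Form.eval, zero_add, coe_cons_eq, Multiset.coe_nil,
    add_zero] at f₁
  simp [Avoid] at hp₁
  obtain ⟨q₁, W₁, cW₁, fW₁, s₁, hq₁⟩ := hR.exists_split ha hk p₁ [p₁ + w₁ - w₂] [w₁] (by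
    simp [Avoid, hp₁]; grind) ({vx p₁} + {cl (-w₁ + p₁)} + X) (by simp; lia)
  replace f₁ := f₁.append fW₁
  simp [Avoid] at hq₁
  obtain ⟨p₂, f₂, hp₂⟩ := hR.exists_avoid (Avoid [w₂, p₁, w₂ - w₁ + p₁] [w₂, w₁ - p₁ - q₁]) _
    (card_filter_not_avoid _ _) (.vp 0) [.vm (w₂ - w₁ + p₁ + q₁), .cp (-w₂)] (by simp)
    (card_le_nodup_vertex_pair (by
      by_cases h : ∃ y : G, y + y ≠ 0
      · exact Or.inr h
      · push Not at h
        left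
        have := h p₁
        intro h'
        apply hq₁.1
        calc q₁ = (w₂ - w₁ + p₁ + q₁) - (p₁ + p₁) + (p₁ + w₁ - w₂) := by abel
          _ = _ := by rw [h', this]; abel)) (X := {vx p₁} + {cl (-w₁ + p₁)} + W₁ + X) (by simp; lia)
  simp only [List.map_cons, List.map_nil, Form.eval, zero_add, coe_cons_eq, Multiset.coe_nil,
    add_zero] at f₂
  have hp₂' : p₂ ≠ w₂ - w₁ + p₁ + q₁ - p₂ := by
    have := f₂.1
    simp at this
    tauto
  simp [Avoid] at hp₂
  replace f₂ := f₁.append (f₂.sub (t := {vx p₂} + {cl (-w₂ + p₂)})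
    (Multiset.le_iff_exists_add.2 ⟨{vx (w₂ - w₁ + p₁ + q₁ - p₂)}, by abel⟩))
  obtain ⟨q₂, W₂, cW₂, fW₂, s₂, hq₂⟩ := hR.exists_split ha hk p₂ [w₂ - p₂ - w₁ + p₁ + q₁]
    [w₂, w₂ - p₁ - p₂] (by
      simp [Avoid, hp₂]
      exact ⟨by grind, fun h => hp₁.2.2 (h.shift (-p₂) (by abel))⟩)
    ({vx p₁} + {cl (-w₁ + p₁)} + W₁ + ({vx p₂} + {cl (-w₂ + p₂)}) + X) (by simp; lia)
  replace f₂ := f₂.append fW₂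
  simp [Avoid] at hq₂
  obtain ⟨u, f₃, -⟩ := hR.exists_fresh (.vp 0) [.vp (w₁ - p₁), .vp (w₂ - p₂), .cm p₁, .cm p₂,
    .cp (w₁ - p₁ - q₁), .cp (w₂ - p₂ - q₂)] (by simp) (by
      simp [Form.Compat]
      exact ⟨⟨by grind, by grind⟩, by grind, ⟨by grind, fun h => hq₁.2 (h.shift (-p₁) (by abel)),
        fun h => hq₂.2.2 (h.shift 0 (by abel))⟩, ⟨fun h => hp₂.2.2 (h.shift 0 (by abel)),
        fun h => hq₂.2.1 (h.shift (-p₂) (by abel))⟩, by grind⟩) [] [] 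
    (X := {vx p₁} + {cl (-w₁ + p₁)} + W₁ + ({vx p₂} + {cl (-w₂ + p₂)}) + W₂ + X) (by simp; lia)
  simp only [List.map_cons, List.map_nil, Form.eval, zero_add, coe_cons_eq, Multiset.coe_nil,
    add_zero] at f₃
  refine ⟨_, ?_, f₂.append f₃, ?_, ?_⟩
  · simp; lia
  · refine ((s₁.dec w₁ (w₁ - p₁ + u) (-w₁ + p₁) (p₁ - u) (w₁ - p₁ - q₁ + u) (by abel) (by abel)
      (by abel)).append (s₂.dec u (w₂ - p₂ + u) (p₂ - u) (-w₂ + p₂) (w₂ - p₂ - q₂ + u) (by abel)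
      (by abel) (by abel))).congr ?_
    abel
  · refine ((s₁.dec u (w₁ - p₁ + u) (p₁ - u) (-w₁ + p₁) (w₁ - p₁ - q₁ + u) (by abel) (by abel)
      (by abel)).append (s₂.dec w₂ (w₂ - p₂ + u) (-w₂ + p₂) (p₂ - u) (w₂ - p₂ - q₂ + u) (by abel)
      (by abel) (by abel))).congr ?_
    abel

end Gadgets

section Gadgets

variable {G : Type} [AddCommGroup G] [Fintype G] {R : Set (G ⊕ G)} {c : ℕ}

/-- Nonzero, and not one of few doubles. -/
def Good (g : G) : Prop := g ≠ 0 ∧ ¬ Dbl g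

omit [AddCommGroup G] [Fintype G] in
theorem Fresh.exists_eq {X s : Multiset (G ⊕ G)} (h : Fresh R X s) : ∃ t, t = s ∧ Fresh R X t :=
  ⟨s, rfl, h⟩

theorem Rich.exists_colour_edge (hR : Rich R c) {a : G} (ha : ¬ Dbl a) {k : ℕ} (hk : 3 ≤ k)
    {s s' d d' : G} (hs : Good s) (hs' : Good s') (hd : Good d) (hd' : Good d') (h : s + s' = d + d')
    (hsd : s ≠ d) (hsd' : s ≠ d') (X : Multiset (G ⊕ G)) (hX : Multiset.card X + 10000 * k ≤ c) :
    ∃ S, Multiset.card S ≤ 24 * k ∧ Fresh R X S ∧ Dec k (S + ({cl s} + {cl s'})) ∧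
      Dec k (S + ({cl d} + {cl d'})) := by
  obtain ⟨p₁, f₁, -⟩ := hR.exists_fresh (.vp 0) [] (by simp) (by simp [Form.Compat])
    [] [] (X := X) (by simp; lia)
  simp only [List.map_cons, List.map_nil, Form.eval, zero_add, coe_cons_eq, Multiset.coe_nil,
    add_zero] at f₁
  obtain ⟨q₁, W₁, cW₁, fW₁, s₁, hq₁⟩ := hR.exists_split ha hk p₁ [p₁ + d' - s] [p₁ - s, p₁ + d] (by
    simp [Avoid, hs.2]
    exact ⟨by grind, fun h => hd.2 (h.neg_shift 0 (by simp))⟩) ({vx p₁} + X) (by simp; lia)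
  replace f₁ := f₁.append fW₁
  simp [Avoid] at hq₁
  obtain ⟨p₂, f₂, hp₂⟩ := hR.exists_fresh (.vp 0) [] (by simp) (by simp [Form.Compat])
    [q₁ + s - d', q₁ + s, q₁ + d, q₁ - d', q₁, q₁ + d - s, q₁ + s - d - d', q₁ + s - d] []
    (X := {vx p₁} + W₁ + X) (by simp; lia)
  simp only [List.map_cons, List.map_nil, Form.eval, zero_add, coe_cons_eq, Multiset.coe_nil,
    add_zero] at f₂
  replace f₂ := f₁.append f₂
  simp [Avoid] at hp₂
  obtain ⟨q₂, W₂, cW₂, fW₂, s₂, hq₂⟩ := hR.exists_split ha hk p₂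
    [q₁ + s - d', q₁ + s, q₁ + d, q₁ - d', q₁, q₁ + d - s, q₁ + s - d - d', q₁ + s - d,
    p₂ - p₁ + q₁ + s - d'] [p₂ - d', p₂ - s'] (by
      simp [Avoid, hp₂, hd'.2, hs'.2]
      grind) ({vx p₁} + W₁ + {vx p₂} + X) (by simp; lia)
  replace f₂ := f₂.append fW₂
  simp [Avoid] at hq₂
  obtain ⟨x, f₃, -⟩ := hR.exists_fresh (.vp (q₁ + s)) [.vp q₁, .vp (q₁ + s - d), .vp (q₂ + d'),
    .vp q₂, .vp (q₂ + s - d), .cp 0, .cp (s - d), .cm (p₁ - q₁ - s), .cm (p₂ - q₂ - d')]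
    (by simp) (by
      simp [Form.Compat]
      have e : s' = d + d' - s := by rw [← h]; abel
      have := hs.1
      have := hs'.1
      have := hd.1
      have := hd'.1
      rw [e] at hq₂
      and_intros
      all_goals first
        | grind
        | exact fun h => hq₁.2.1 (h.shift 0 (by abel1))
        | exact fun h => hq₂.2.1 (h.shift 0 (by abel1))
        | exact fun h => hq₁.2.2 (h.shift (-s) (by abel1))
        | exact fun h => hq₂.2.2 (h.shift (d - s) (by abel1))) [] []
    (X := {vx p₁} + W₁ + {vx p₂} + W₂ + X) (by simp; lia)
  simp only [List.map_cons, List.map_nil, Form.eval, zero_add, coe_cons_eq, Multiset.coe_nil,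
    add_zero] at f₃
  obtain ⟨S, e, f⟩ := (f₂.append f₃).exists_eq
  obtain ⟨T₁, cT₁, fT₁, T₁a, T₁b⟩ := hR.exists_vertex_edge ha hk
    (w₁ := q₁ + x) (w₂ := q₁ + s - d + x) (by grind) (S + X) (by
      simp [e]; lia)
  replace f := f.append fT₁
  obtain ⟨T₂, cT₂, fT₂, T₂a, T₂b⟩ := hR.exists_vertex_edge ha hk
    (w₁ := q₂ + x) (w₂ := q₂ + s - d + x) (by grind) (S + T₁ + X) (by
      simp [e]; lia)
  refine ⟨_, ?_, f.append fT₂, ?_, ?_⟩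
  · simp [e]; lia
  · refine ((s₁.dec (q₁ + s + x) (q₁ + x) (p₁ - q₁ - s - x) s x (by abel) (by abel)
      (by abel)).append ((s₂.dec (q₂ + d' + x) (q₂ + s - d + x) (p₂ - q₂ - d' - x) s' (s - d + x)
      (by abel) (by grind) (by abel)).append (T₁b.append T₂a))).congr ?_
    rw [e]
    abel
  · refine ((s₁.dec (q₁ + s + x) (q₁ + s - d + x) (p₁ - q₁ - s - x) d (s - d + x) (by abel) (by abel)
      (by abel)).append ((s₂.dec (q₂ + d' + x) (q₂ + x) (p₂ - q₂ - d' - x) d' x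
      (by abel) (by abel) (by abel)).append (T₁a.append T₂b))).congr ?_
    rw [e]
    abel

end Gadgets

section Gadgets

variable {G : Type} [AddCommGroup G] [Fintype G] {R : Set (G ⊕ G)} {c : ℕ}

theorem Rich.exists_colour_half (hR : Rich R c) {a : G} (ha : ¬ Dbl a) {k : ℕ} (hk : 3 ≤ k)
    {c₁ c₂ c₃ : G} (h₁ : Good c₁) (h₂ : Good c₂) (h₃ : Good c₃) (h₁₂ : c₁ ≠ c₂) (h₁₃ : c₁ ≠ c₃)
    (h₂₃ : c₂ ≠ c₃) (X : Multiset (G ⊕ G)) (hX : Multiset.card X + 10000 * k ≤ c) :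
    ∃ h S, Multiset.card S ≤ 24 * k ∧
      Fresh R X (S + {cl (-c₁ + h)} + {cl (-c₂ + h)} + {cl (-c₃ + h)}) ∧
      Dec k (S + {cl c₁} + {cl (-c₁ + h)}) ∧ Dec k (S + {cl c₂} + {cl (-c₂ + h)}) ∧
      Dec k (S + {cl c₃} + {cl (-c₃ + h)}) := by
  obtain ⟨p, f₁, -⟩ := hR.exists_fresh (.vp 0) [] (by simp) (by simp [Form.Compat])
    [] [] (X := X) (by simp; lia)
  simp only [List.map_cons, List.map_nil, Form.eval, zero_add, coe_cons_eq, Multiset.coe_nil,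
    add_zero] at f₁
  obtain ⟨q, W, cW, fW, s, hq⟩ := hR.exists_split ha hk p [] [p + c₁, p + c₂, p + c₃] (by
    simp [Avoid]
    exact ⟨fun h => h₁.2 (h.neg_shift 0 (by simp)), fun h => h₂.2 (h.neg_shift 0 (by simp)),
      fun h => h₃.2 (h.neg_shift 0 (by simp))⟩) ({vx p} + X) (by simp; lia)
  simp [Avoid] at hq
  obtain ⟨h, f₂, -⟩ := hR.exists_fresh (.vp q) [.vp (q - c₁), .vp (q - c₂), .vp (q - c₃),
    .cm (p - q), .cp (-c₁), .cp (-c₂), .cp (-c₃)]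
    (by simp) (by
      simp [Form.Compat, h₁₂, h₁₃, h₂₃]
      and_intros
      · have := h₁.1; grind
      · have := h₂.1; grind
      · have := h₃.1; grind
      · exact fun h => hq.1 (h.neg_shift 0 (by abel))
      · exact fun h => hq.2.1 (h.neg_shift 0 (by abel))
      · exact fun h => hq.2.2 (h.neg_shift 0 (by abel))) [] []
    (X := {vx p} + W + X) (by simp; lia)
  simp only [List.map_cons, List.map_nil, Form.eval, coe_cons_eq, Multiset.coe_nil,
    add_zero] at f₂
  obtain ⟨S, e, f⟩ := ((f₁.append fW).append f₂).exists_eq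
  obtain ⟨T₁, cT₁, fT₁, T₁a, T₁b⟩ := hR.exists_vertex_edge ha hk
    (w₁ := q - c₁ + h) (w₂ := q - c₂ + h) (by grind) (S + X) (by
      simp [e]; lia)
  replace f := f.append fT₁
  obtain ⟨T₂, cT₂, fT₂, T₂a, T₂b⟩ := hR.exists_vertex_edge ha hk
    (w₁ := q - c₂ + h) (w₂ := q - c₃ + h) (by grind) (S + T₁ + X) (by
      simp [e]; lia)
  replace f := f.append fT₂
  refine ⟨h, {vx p} + W + {vx (q + h)} + {vx (q - c₁ + h)} + {vx (q - c₂ + h)} +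
    {vx (q - c₃ + h)} + {cl (p - q - h)} + T₁ + T₂, ?_, ?_, ?_, ?_, ?_⟩
  · simp; lia
  · convert f using 1
    rw [e]; abel
  · refine ((s.dec (q + h) (q - c₁ + h) (p - q - h) c₁ (-c₁ + h) (by abel) (by abel)
      (by abel)).append (T₁b.append T₂b)).congr ?_
    abel
  · refine ((s.dec (q + h) (q - c₂ + h) (p - q - h) c₂ (-c₂ + h) (by abel) (by abel)
      (by abel)).append (T₁a.append T₂b)).congr ?_
    abel
  · refine ((s.dec (q + h) (q - c₃ + h) (p - q - h) c₃ (-c₃ + h) (by abel) (by abel)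
      (by abel)).append (T₁a.append T₂a)).congr ?_
    abel

theorem Rich.exists_colour_triangle (hR : Rich R c) {a : G} (ha : ¬ Dbl a) {k : ℕ} (hk : 3 ≤ k)
    (hg : ∀ g, cl g ∈ R → Good g)
    {c₁ c₂ c₃ d₁ d₂ d₃ : G} (h₁ : Good c₁) (h₂ : Good c₂) (h₃ : Good c₃)
    (k₁ : Good d₁) (k₂ : Good d₂) (k₃ : Good d₃) (e₁₂ : c₁ + d₁ = c₂ + d₂) (e₂₃ : c₂ + d₂ = c₃ + d₃)
    (h₁₂ : c₁ ≠ c₂) (h₁₃ : c₁ ≠ c₃)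
    (h₂₃ : c₂ ≠ c₃) (X : Multiset (G ⊕ G)) (hX : Multiset.card X + 20000 * k ≤ c) :
    ∃ S, Multiset.card S ≤ 100 * k ∧ Fresh R X S ∧
      Dec k (S + ({cl c₁} + {cl d₁})) ∧ Dec k (S + ({cl c₂} + {cl d₂})) ∧
      Dec k (S + ({cl c₃} + {cl d₃})) := by
  obtain ⟨h, S₁, cS₁, f₁, S₁a, S₁b, S₁c⟩ := hR.exists_colour_half ha hk h₁ h₂ h₃ h₁₂ h₁₃ h₂₃ X
    (by lia)
  obtain ⟨h', S₂, cS₂, f₂, S₂a, S₂b, S₂c⟩ := hR.exists_colour_half ha hk k₁ k₂ k₃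
    (by grind) (by grind) (by grind)
    (S₁ + {cl (-c₁ + h)} + {cl (-c₂ + h)} + {cl (-c₃ + h)} + X) (by simp; lia)
  obtain ⟨S, e, f⟩ := (f₁.append f₂).exists_eq
  have gd : ∀ g, cl g ∈ S → Good g := fun g h => hg g (f.2 _ h).1
  have nd : S.Nodup := f.1
  rw [e] at nd
  have n₁ : -c₁ + h ≠ -d₂ + h' := by
    rintro h
    rw [h] at nd
    simp [Multiset.nodup_add] at nd
  have n₂ : -c₂ + h ≠ -d₃ + h' := by
    rintro h
    rw [h] at nd
    simp [Multiset.nodup_add] at nd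
  obtain ⟨T₁, cT₁, fT₁, T₁a, T₁b⟩ := hR.exists_colour_edge ha hk
    (s := -c₁ + h) (s' := -d₁ + h') (d := -c₂ + h) (d' := -d₂ + h')
    (gd _ (by simp [e])) (gd _ (by simp [e])) (gd _ (by simp [e])) (gd _ (by simp [e]))
    (by grind) (by grind) n₁ (S + X) (by simp [e]; lia)
  replace f := f.append fT₁
  obtain ⟨T₂, cT₂, fT₂, T₂a, T₂b⟩ := hR.exists_colour_edge ha hk
    (s := -c₂ + h) (s' := -d₂ + h') (d := -c₃ + h) (d' := -d₃ + h')
    (gd _ (by simp [e])) (gd _ (by simp [e])) (gd _ (by simp [e])) (gd _ (by simp [e]))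
    (by grind) (by grind) n₂ (S + T₁ + X) (by simp [e]; lia)
  refine ⟨_, ?_, f.append fT₂, ?_, ?_, ?_⟩
  · simp [e]; lia
  · refine ((S₁a.append S₂a).append (T₁b.append T₂b)).congr ?_
    rw [e]
    abel
  · refine ((S₁b.append S₂b).append (T₁a.append T₂b)).congr ?_
    rw [e]
    abel
  · refine ((S₁c.append S₂c).append (T₁a.append T₂a)).congr ?_
    rw [e]
    abel

theorem Rich.exists_vertex_triangle (hR : Rich R c) {a : G} (ha : ¬ Dbl a) {k : ℕ} (hk : 3 ≤ k)
    (hg : ∀ g, cl g ∈ R → Good g) {w₁ w₂ w₃ : G} (h₁₂ : w₁ ≠ w₂) (h₁₃ : w₁ ≠ w₃)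
    (h₂₃ : w₂ ≠ w₃) (X : Multiset (G ⊕ G)) (hX : Multiset.card X + 20000 * k ≤ c) :
    ∃ S, Multiset.card S ≤ 100 * k ∧ Fresh R X S ∧
      Dec k (S + {vx w₁}) ∧ Dec k (S + {vx w₂}) ∧ Dec k (S + {vx w₃}) := by
  obtain ⟨p, f₁, hp⟩ := hR.exists_fresh (.vp 0) [.cp (-w₁), .cp (-w₂), .cp (-w₃)] (by simp)
    (by simp [Form.Compat, h₁₂, h₁₃, h₂₃]) [] [w₁, w₂, w₃] (X := X) (by simp; lia)
  simp only [List.map_cons, List.map_nil, Form.eval, zero_add, coe_cons_eq, Multiset.coe_nil,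
    add_zero] at f₁
  obtain ⟨q, W, cW, fW, s, hq⟩ := hR.exists_split ha hk p [] [w₁, w₂, w₃] hp
    ({vx p} + ({cl (-w₁ + p)} + ({cl (-w₂ + p)} + {cl (-w₃ + p)})) + X) (by simp; lia)
  simp [Avoid] at hq
  obtain ⟨y, f₂, -⟩ := hR.exists_fresh (.vp 0) [.cm w₁, .cm w₂, .cm w₃, .cp (-q)]
    (by simp) (by
      simp [Form.Compat, h₁₂, h₁₃, h₂₃]
      and_intros
      · exact fun h => hq.1 (h.shift (-w₁) (by abel))
      · exact fun h => hq.2.1 (h.shift (-w₂) (by abel))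
      · exact fun h => hq.2.2 (h.shift (-w₃) (by abel))) [] []
    (X := {vx p} + ({cl (-w₁ + p)} + ({cl (-w₂ + p)} + {cl (-w₃ + p)})) + W + X) (by simp; lia)
  simp only [List.map_cons, List.map_nil, Form.eval, zero_add, coe_cons_eq, Multiset.coe_nil,
    add_zero] at f₂
  obtain ⟨S, e, f⟩ := ((f₁.append fW).append f₂).exists_eq
  have gd : ∀ g, cl g ∈ S → Good g := fun g h => hg g (f.2 _ h).1
  have nd : S.Nodup := f.1
  rw [e] at nd
  have n₁ : -w₁ + p ≠ w₂ - y := by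
    rintro h
    rw [h] at nd
    simp [Multiset.nodup_add] at nd
  have n₂ : -w₂ + p ≠ w₃ - y := by
    rintro h
    rw [h] at nd
    simp [Multiset.nodup_add] at nd
  obtain ⟨T₁, cT₁, fT₁, T₁a, T₁b⟩ := hR.exists_colour_edge ha hk
    (s := -w₁ + p) (s' := w₁ - y) (d := -w₂ + p) (d' := w₂ - y)
    (gd _ (by simp [e])) (gd _ (by simp [e])) (gd _ (by simp [e])) (gd _ (by simp [e]))
    (by abel) (by grind) n₁ (S + X) (by simp [e]; lia)
  replace f := f.append fT₁
  obtain ⟨T₂, cT₂, fT₂, T₂a, T₂b⟩ := hR.exists_colour_edge ha hk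
    (s := -w₂ + p) (s' := w₂ - y) (d := -w₃ + p) (d' := w₃ - y)
    (gd _ (by simp [e])) (gd _ (by simp [e])) (gd _ (by simp [e])) (gd _ (by simp [e]))
    (by abel) (by grind) n₂ (S + T₁ + X) (by simp [e]; lia)
  refine ⟨_, ?_, f.append fT₂, ?_, ?_, ?_⟩
  · simp [e]; lia
  · refine ((s.dec w₁ y (-w₁ + p) (w₁ - y) (-q + y) (by abel) (by abel)
      (by abel)).append (T₁b.append T₂b)).congr ?_
    rw [e]
    abel
  · refine ((s.dec w₂ y (-w₂ + p) (w₂ - y) (-q + y) (by abel) (by abel)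
      (by abel)).append (T₁a.append T₂b)).congr ?_
    rw [e]
    abel
  · refine ((s.dec w₃ y (-w₃ + p) (w₃ - y) (-q + y) (by abel) (by abel)
      (by abel)).append (T₁a.append T₂a)).congr ?_
    rw [e]
    abel

theorem Rich.exists_cycle_of_colour (hR : Rich R c) {a : G} (ha : ¬ Dbl a) (ha0 : a ≠ 0) {k : ℕ}
    (hk : 3 ≤ k) (X : Multiset (G ⊕ G)) (hX : Multiset.card X + 1000 * k ≤ c) :
    ∃ S, Multiset.card S ≤ 4 * k ∧ Fresh R X S ∧ Dec k (S + {cl (-a)}) := by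
  obtain ⟨p, f₁, -⟩ := hR.exists_fresh (.vp 0) [] (by simp)
    (by simp [Form.Compat]) [] [] (X := X) (by simp; lia)
  simp only [List.map_cons, List.map_nil, Form.eval, zero_add, coe_cons_eq, Multiset.coe_nil,
    add_zero] at f₁
  obtain ⟨q, W, cW, fW, s, hq⟩ := hR.exists_split ha hk p [] [a - p] (by
    simp [Avoid]
    exact fun h => ha (h.neg_shift p (by abel))) ({vx p} + X) (by simp; lia)
  simp [Avoid] at hq
  obtain ⟨y, f₂, -⟩ := hR.exists_fresh (.vp 0) [.vp a, .cm p, .cp (a - q)]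
    (by simp) (by
      simp [Form.Compat, ha0.symm]
      exact fun h => hq (h.shift 0 (by abel))) [] [] (X := {vx p} + W + X) (by simp; lia)
  simp only [List.map_cons, List.map_nil, Form.eval, zero_add, coe_cons_eq, Multiset.coe_nil,
    add_zero] at f₂
  refine ⟨_, ?_, (f₁.append fW).append f₂, ?_⟩
  · simp; lia
  · refine (s.dec y (a + y) (p - y) (-a) (a - q + y) (by abel) (by abel) (by abel)).congr ?_
    abel

end Gadgets

section Concentrator

/-- The number of elements of `A` below `i`. -/
noncomputable def rank (A : Finset ℕ) (i : ℕ) : ℕ := (A.filter (· < i)).card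

theorem rank_le (A : Finset ℕ) (i : ℕ) : rank A i ≤ i := by
  refine (Finset.card_le_card (t := Finset.range i) fun x hx => ?_).trans (by simp)
  simpa using (Finset.mem_filter.1 hx).2

theorem rank_lt_rank {A : Finset ℕ} {i j : ℕ} (hi : i ∈ A) (h : i < j) :
    rank A i < rank A j := by
  refine Finset.card_lt_card ⟨fun x hx => ?_, fun hx => ?_⟩
  · rw [Finset.mem_filter] at hx ⊢
    exact ⟨hx.1, hx.2.trans h⟩
  · simpa using hx (Finset.mem_filter.2 ⟨hi, h⟩)

theorem rank_le_rank_add (A : Finset ℕ) (i j : ℕ) :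
    rank A j ≤ rank A i + (j - i) := by
  have : A.filter (· < j) ⊆ A.filter (· < i) ∪ Finset.Ico i j := by
    intro x hx
    simp at hx ⊢
    lia
  exact (Finset.card_le_card this).trans ((Finset.card_union_le _ _).trans (by simp [rank]))

theorem rank_lt_card {A : Finset ℕ} {i : ℕ} (hi : i ∈ A) : rank A i < A.card := by
  refine Finset.card_lt_card ⟨Finset.filter_subset _ _, fun h => ?_⟩
  simpa using h hi

/-- The position after `j` steps of the element `i` of `A`, when the elements of `A` are moved
to the left by successive powers of two until they fill an initial segment. -/
noncomputable def slide (A : Finset ℕ) (j i : ℕ) : ℕ := i - (i - rank A i) % 2 ^ j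

theorem slide_zero (A : Finset ℕ) (i : ℕ) : slide A 0 i = i := by simp [slide, Nat.mod_one]

theorem slide_succ (A : Finset ℕ) (j i : ℕ) : slide A (j + 1) i = slide A j i ∨
    2 ^ j ≤ slide A j i ∧ slide A (j + 1) i = slide A j i - 2 ^ j := by
  have h := Nat.mod_pow_succ (b := 2) (k := j) (x := i - rank A i)
  have h2 := Nat.mod_le (i - rank A i) (2 ^ (j + 1))
  rw [slide, slide, h]
  rcases Nat.mod_two_eq_zero_or_one ((i - rank A i) / 2 ^ j) with h' | h' <;> rw [h'] at h ⊢
  · simp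
  · right; rw [mul_one] at h ⊢; lia

theorem slide_eq (A : Finset ℕ) (j i : ℕ) :
    slide A j i = rank A i + 2 ^ j * ((i - rank A i) / 2 ^ j) := by
  have h := Nat.mod_add_div (i - rank A i) (2 ^ j)
  have := rank_le A i
  rw [slide]
  lia

theorem slide_lt_slide {A : Finset ℕ} (j : ℕ) {i i' : ℕ} (hi : i ∈ A) (h : i < i') :
    slide A j i < slide A j i' := by
  rw [slide_eq, slide_eq]
  have h1 := rank_lt_rank hi h
  have h2 := rank_le_rank_add A i i'
  have h3 : 2 ^ j * ((i - rank A i) / 2 ^ j) ≤ 2 ^ j * ((i' - rank A i') / 2 ^ j) :=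
    Nat.mul_le_mul_left _ (Nat.div_le_div_right (by lia))
  lia

theorem slide_injOn (A : Finset ℕ) (j : ℕ) : Set.InjOn (slide A j) A := by
  intro i hi i' hi' h
  rcases lt_trichotomy i i' with h' | h' | h'
  · exact absurd h (slide_lt_slide j hi h').ne
  · exact h'
  · exact absurd h (slide_lt_slide j hi' h').ne'

theorem slide_of_lt {A : Finset ℕ} {j i : ℕ} (h : i < 2 ^ j) : slide A j i = rank A i := by
  rw [slide, Nat.mod_eq_of_lt (by lia)]
  have := rank_le A i
  lia

theorem slide_le (A : Finset ℕ) (j i : ℕ) : slide A j i ≤ i := Nat.sub_le _ _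

variable {G : Type} [AddCommGroup G]

theorem Dec.concentrate {k : ℕ} {r N : ℕ} (hN : N ≤ 2 ^ (r + 1)) (I Γ : ℕ → ℕ → Multiset (G ⊕ G))
    (h₀ : ∀ j < r + 1, ∀ i < N, Dec k (Γ j i + I j i))
    (h₁ : ∀ j < r + 1, ∀ i < N, Dec k (Γ j i + I (j + 1) i))
    (h₂ : ∀ j < r + 1, ∀ i < N, 2 ^ j ≤ i → Dec k (Γ j i + I (j + 1) (i - 2 ^ j)))
    {A : Finset ℕ} (hA : A ⊆ Finset.range N) :
    Dec k (∑ j ∈ Finset.range (r + 1), ∑ i ∈ Finset.range N, Γ j i +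
      ∑ i ∈ Finset.range N \ A, I 0 i +
      ∑ j ∈ Finset.range r, ∑ i ∈ Finset.range N, I (j + 1) i +
      ∑ i ∈ Finset.range A.card, I (r + 1) i) := by
  have hs : ∀ j, A.image (slide A j) ⊆ Finset.range N := by
    intro j i hi
    obtain ⟨i, hi', rfl⟩ := Finset.mem_image.1 hi
    have := Finset.mem_range.1 (hA hi')
    exact Finset.mem_range.2 ((slide_le A j i).trans_lt this)
  have sd : ∀ (f : ℕ → Multiset (G ⊕ G)) j, ∑ i ∈ Finset.range N, f i =
      ∑ i ∈ Finset.range N \ A.image (slide A j), f i + ∑ i ∈ A, f (slide A j i) := by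
    intro f j
    rw [← Finset.sum_sdiff (hs j), Finset.sum_image (slide_injOn A j)]
  have lev : ∀ j < r + 1, Dec k (∑ i ∈ Finset.range N, Γ j i +
      (∑ i ∈ Finset.range N \ A.image (slide A j), I j i +
        ∑ i ∈ A, I (j + 1) (slide A (j + 1) i))) := by
    intro j hj
    have d₁ : Dec k (∑ i ∈ Finset.range N \ A.image (slide A j), (Γ j i + I j i)) :=
      Dec.sum _ _ fun i hi => h₀ j hj i (Finset.mem_range.1 (Finset.mem_sdiff.1 hi).1)
    have d₂ : Dec k (∑ i ∈ A, (Γ j (slide A j i) + I (j + 1) (slide A (j + 1) i))) := by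
      refine Dec.sum _ _ fun i hi => ?_
      have hi' := (slide_le A j i).trans_lt (Finset.mem_range.1 (hA hi))
      rcases slide_succ A j i with h | ⟨h, h'⟩
      · rw [h]; exact h₁ j hj _ hi'
      · rw [h']; exact h₂ j hj _ hi' h
    refine (d₁.append d₂).congr ?_
    rw [sd (Γ j) j, Finset.sum_add_distrib, Finset.sum_add_distrib]
    abel
  have key : ∀ s ≤ r, Dec k (∑ j ∈ Finset.range (s + 1), ∑ i ∈ Finset.range N, Γ j i +
      ∑ i ∈ Finset.range N \ A, I 0 i +
      ∑ j ∈ Finset.range s, ∑ i ∈ Finset.range N, I (j + 1) i +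
      ∑ i ∈ A, I (s + 1) (slide A (s + 1) i)) := by
    intro s hs
    induction s with
    | zero =>
      refine (lev 0 (by lia)).congr ?_
      have : A.image (slide A 0) = A := by
        rw [show slide A 0 = id from funext (slide_zero A), Finset.image_id]
      simp [this]
      abel
    | succ s ih =>
      refine ((ih (by lia)).append (lev (s + 1) (by lia))).congr ?_
      rw [Finset.sum_range_succ _ (s + 1),
        Finset.sum_range_succ (fun j => ∑ i ∈ Finset.range N, I (j + 1) i) s, sd (I (s + 1)) (s + 1)]
      abel
  refine (key r le_rfl).congr ?_
  congr 1
  rw [← Finset.sum_image (slide_injOn A (r + 1))]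
  congr 1
  symm
  refine Finset.eq_of_subset_of_card_le (fun i hi => ?_) ?_
  · obtain ⟨i, hi', rfl⟩ := Finset.mem_image.1 hi
    rw [slide_of_lt ((Finset.mem_range.1 (hA hi')).trans_le hN)]
    exact Finset.mem_range.2 (rank_lt_card hi')
  · rw [Finset.card_image_of_injOn (slide_injOn A _), Finset.card_range]

end Concentrator

section Builder

variable {G : Type} {R : Set (G ⊕ G)}

/-- Finitely many objects, each of which can be chosen freshly, can be chosen simultaneously. -/
theorem exists_fresh_family {ι α : Type*} (f : α → Multiset (G ⊕ G)) (P : ι → α → Prop)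
    (s : Finset ι) (B c : ℕ) (X : Multiset (G ⊕ G)) (hX : Multiset.card X + s.card * B ≤ c)
    (h : ∀ i ∈ s, ∀ Y : Multiset (G ⊕ G), Multiset.card Y ≤ c → X ≤ Y →
      ∃ x, Multiset.card (f x) ≤ B ∧ Fresh R Y (f x) ∧ P i x) (x₀ : ι → α) :
    ∃ x : ι → α, (∀ i ∈ s, Multiset.card (f (x i)) ≤ B) ∧ Fresh R X (∑ i ∈ s, f (x i)) ∧
      ∀ i ∈ s, P i (x i) := by
  induction s using Finset.induction_on with
  | empty => exact ⟨x₀, by simp, by simpa using Fresh.nil, by simp⟩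
  | insert a s ha ih =>
    rw [Finset.card_insert_of_notMem ha] at hX
    obtain ⟨x, h1, h2, h3⟩ := ih (by nlinarith)
      fun i hi => h i (Finset.mem_insert_of_mem hi)
    have hc : Multiset.card (∑ i ∈ s, f (x i)) ≤ s.card * B := by
      rw [Multiset.card_sum]
      simpa using Finset.sum_le_card_nsmul s _ B h1
    obtain ⟨y, g1, g2, g3⟩ := h a (Finset.mem_insert_self _ _) (∑ i ∈ s, f (x i) + X)
      (by rw [Multiset.card_add]; nlinarith) (Multiset.le_add_left _ _)
    have hx : ∀ i ∈ s, Function.update x a y i = x i := fun i hi =>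
      Function.update_of_ne (by rintro rfl; exact ha hi) _ _
    refine ⟨Function.update x a y, ?_, ?_, ?_⟩
    · intro i hi
      rcases Finset.mem_insert.1 hi with rfl | hi
      · simpa using g1
      · rw [hx i hi]; exact h1 i hi
    · rw [Finset.sum_insert ha, Finset.sum_congr rfl fun i hi => by rw [hx i hi],
        Function.update_self, add_comm]
      exact h2.append g2
    · intro i hi
      rcases Finset.mem_insert.1 hi with rfl | hi
      · simpa using g3
      · rw [hx i hi]; exact h3 i hi

end Builder

section Concentrators

variable {G : Type} {R : Set (G ⊕ G)} {c : ℕ}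

theorem Fresh.ne_of_sum {ι α : Type*} {X : Multiset (G ⊕ G)} {s : Finset ι} {x : ι → α}
    {b : α → Multiset (G ⊕ G)} {e : α → G ⊕ G} (he : ∀ x, e x ∈ b x)
    (h : Fresh R X (∑ i ∈ s, b (x i))) {i j : ι} (hi : i ∈ s) (hj : j ∈ s) (hij : i ≠ j) :
    x i ≠ x j := by
  intro hx
  have h1 := h.1
  rw [← Finset.add_sum_erase s _ hi, ← Finset.add_sum_erase (s.erase i) _
    (Finset.mem_erase.2 ⟨hij.symm, hj⟩), Multiset.nodup_add, Multiset.disjoint_left] at h1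
  exact h1.2.2 (he (x i)) (Multiset.mem_add.2 (Or.inl (hx ▸ he (x i))))

theorem Fresh.notMem_of_sum {ι α : Type*} {X : Multiset (G ⊕ G)} {s : Finset ι} {x : ι → α}
    {b : α → Multiset (G ⊕ G)} {e : α → G ⊕ G} (he : ∀ x, e x ∈ b x)
    (h : Fresh R X (∑ i ∈ s, b (x i))) {i : ι} (hi : i ∈ s) : e (x i) ∉ X := by
  refine (h.2 _ ?_).2
  rw [← Finset.add_sum_erase s _ hi]
  exact Multiset.mem_add.2 (Or.inl (he _))

variable [AddCommGroup G]

theorem exists_concentrator {k r N M : ℕ} (hk : 3 ≤ k) (b : G → Multiset (G ⊕ G)) (Q : G → Prop)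
    (e : G → G ⊕ G) (he : ∀ x, e x ∈ b x)
    (hi : ∀ Y : Multiset (G ⊕ G), Multiset.card Y ≤ c →
      ∃ x, Multiset.card (b x) ≤ 2 ∧ Fresh R Y (b x) ∧ Q x)
    (ht : ∀ x₁ x₂ x₃, Q x₁ → Q x₂ → Q x₃ → x₁ ≠ x₂ → x₁ ≠ x₃ → x₂ ≠ x₃ →
      ∀ Y : Multiset (G ⊕ G), Multiset.card Y ≤ c → ∃ S, Multiset.card S ≤ 100 * k ∧ Fresh R Y S ∧
        Dec k (S + b x₁) ∧ Dec k (S + b x₂) ∧ Dec k (S + b x₃))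
    (u : ℕ → G) (hQ : ∀ i < N, Q (u i))
    (X : Multiset (G ⊕ G)) (hX : ∀ i < N, e (u i) ∈ X) (hN : N ≤ 2 ^ (r + 1)) (hM : M ≤ N)
    (hc : Multiset.card X + (r + 1) * (N + 1) * (200 * k) ≤ c) :
    ∃ S, Multiset.card S ≤ (r + 1) * (N + 1) * (200 * k) ∧ Fresh R X S ∧
      ∀ A ⊆ Finset.range N, A.card = M → Dec k (S + ∑ i ∈ Finset.range N \ A, b (u i)) := by
  obtain ⟨x, x1, x2, x3⟩ := exists_fresh_family (R := R) b (fun (_ : ℕ × ℕ) x => Q x)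
    (Finset.range (r + 1) ×ˢ Finset.range (N + 1)) 2 c X (by
      rw [Finset.card_product, Finset.card_range, Finset.card_range]
      refine le_trans ?_ hc
      gcongr
      lia) (fun i _ Y hY _ => hi Y hY) (fun _ => 0)
  obtain ⟨I, hI⟩ : ∃ I : ℕ → ℕ → G, ∀ j i, I j i = if j = 0 then u i else x (j - 1, i) :=
    ⟨_, fun _ _ => rfl⟩
  have I0 : ∀ i, I 0 i = u i := fun i => by rw [hI, if_pos rfl]
  have I1 : ∀ j i, I (j + 1) i = x (j, i) := fun j i => by
    rw [hI, if_neg (by lia), Nat.add_sub_cancel]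
  have IQ : ∀ j < r + 2, ∀ i < N + 1, (j = 0 → i < N) → Q (I j i) := by
    intro j hj i hi h
    rcases j with _ | j
    · rw [I0]; exact hQ i (h rfl)
    · rw [I1]; exact x3 _ (by simp; lia)
  have Ine : ∀ j < r + 1, ∀ i < N, ∀ i' < N + 1, I j i ≠ I (j + 1) i' := by
    intro j hj i hi i' hi'
    rw [I1]
    rcases j with _ | j
    · rw [I0]
      intro h
      refine x2.notMem_of_sum he (i := (0, i')) (by simp; lia) ?_
      rw [← h]; exact hX i hi
    · rw [I1]
      exact x2.ne_of_sum he (by simp; lia) (by simp; lia) (by simp)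
  have Ine' : ∀ j < r + 1, ∀ i < N + 1, ∀ i' < N + 1, i ≠ i' → I (j + 1) i ≠ I (j + 1) i' := by
    intro j hj i hi i' hi' h
    rw [I1, I1]
    exact x2.ne_of_sum he (by simp; lia) (by simp; lia) (by simpa using h)
  have cx : Multiset.card (∑ i ∈ Finset.range (r + 1) ×ˢ Finset.range (N + 1), b (x i)) ≤
      (r + 1) * (N + 1) * 2 := by
    rw [Multiset.card_sum]
    refine (Finset.sum_le_card_nsmul _ _ 2 x1).trans ?_
    simp
  have hc2 : (r + 1) * (N + 1) * 2 + (r + 1) * (N + 1) * (100 * k) ≤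
      (r + 1) * (N + 1) * (200 * k) := by
    rw [← mul_add]
    gcongr
    lia
  obtain ⟨Γ, g1, g2, g3⟩ := exists_fresh_family (R := R) (fun S => S)
    (fun (t : ℕ × ℕ) S => Dec k (S + b (I t.1 t.2)) ∧ Dec k (S + b (I (t.1 + 1) t.2)) ∧
      Dec k (S + b (I (t.1 + 1) (if 2 ^ t.1 ≤ t.2 then t.2 - 2 ^ t.1 else t.2 + 1))))
    (Finset.range (r + 1) ×ˢ Finset.range N) (100 * k) c
    ((∑ i ∈ Finset.range (r + 1) ×ˢ Finset.range (N + 1), b (x i)) + X) (by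
      rw [Finset.card_product, Finset.card_range, Finset.card_range, Multiset.card_add]
      have : (r + 1) * N * (100 * k) ≤ (r + 1) * (N + 1) * (100 * k) := by gcongr; lia
      lia) (fun t ht' Y hY _ => by
      simp only [Finset.mem_product, Finset.mem_range] at ht'
      have p2 := Nat.one_le_two_pow (n := t.1)
      refine ht _ _ _ (IQ _ (by lia) _ (by lia) fun _ => by lia)
        (IQ _ (by lia) _ (by lia) fun _ => by lia)
        (IQ _ (by lia) _ (by split_ifs <;> lia) fun _ => by lia)
        (Ine _ (by lia) _ (by lia) _ (by lia))
        (Ine _ (by lia) _ (by lia) _ (by split_ifs <;> lia))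
        (Ine' _ (by lia) _ (by lia) _ (by split_ifs <;> lia) (by split_ifs <;> lia)) Y hY)
      (fun _ => 0)
  have cg : Multiset.card (∑ i ∈ Finset.range (r + 1) ×ˢ Finset.range N, Γ i) ≤
      (r + 1) * (N + 1) * (100 * k) := by
    rw [Multiset.card_sum]
    refine (Finset.sum_le_card_nsmul _ _ _ g1).trans ?_
    rw [Finset.card_product, Finset.card_range, Finset.card_range, smul_eq_mul]
    gcongr
    lia
  have hf := x2.append g2
  have hle : ∑ i ∈ Finset.range (r + 1) ×ˢ Finset.range N, Γ i +
      (∑ j ∈ Finset.range r, ∑ i ∈ Finset.range N, b (I (j + 1) i) +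
      ∑ i ∈ Finset.range M, b (I (r + 1) i)) ≤
      (∑ i ∈ Finset.range (r + 1) ×ˢ Finset.range (N + 1), b (x i)) +
        ∑ i ∈ Finset.range (r + 1) ×ˢ Finset.range N, Γ i := by
    rw [add_comm]
    refine add_le_add_left ?_ _
    rw [Finset.sum_product, Finset.sum_range_succ]
    simp only [I1]
    gcongr
    · simp
    · lia
  refine ⟨_, ?_, hf.sub hle, fun A hA hAM => ?_⟩
  · refine (Multiset.card_le_card hle).trans ?_
    rw [Multiset.card_add]
    lia
  · have := Dec.concentrate (k := k) hN (fun j i => b (I j i)) (fun j i => Γ (j, i))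
      (fun j hj i hi => (g3 (j, i) (by simp; lia)).1)
      (fun j hj i hi => (g3 (j, i) (by simp; lia)).2.1)
      (fun j hj i hi h => by
        have := (g3 (j, i) (by simp; lia)).2.2
        rwa [if_pos h] at this) hA
    refine this.congr ?_
    rw [hAM, Finset.sum_product]
    simp only [I0]
    abel

variable [Fintype G]

theorem Rich.exists_vertex_concentrator (hR : Rich R c) {a : G} (ha : ¬ Dbl a) {k r N M : ℕ}
    (hk : 3 ≤ k) (hg : ∀ g, cl g ∈ R → Good g) (u : ℕ → G)
    (X : Multiset (G ⊕ G)) (hX : ∀ i < N, vx (u i) ∈ X) (hN : N ≤ 2 ^ (r + 1)) (hM : M ≤ N)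
    (hc : Multiset.card X + (r + 1) * (N + 1) * (200 * k) + 20000 * k ≤ c) :
    ∃ S, Multiset.card S ≤ (r + 1) * (N + 1) * (200 * k) ∧ Fresh R X S ∧
      ∀ A ⊆ Finset.range N, A.card = M → Dec k (S + ∑ i ∈ Finset.range N \ A, {vx (u i)}) := by
  refine exists_concentrator (c := c - 20000 * k) hk (fun x => {vx x}) (fun _ => True) vx
    (fun x => Multiset.mem_singleton_self _) (fun Y hY => ?_) (fun x₁ x₂ x₃ _ _ _ h₁ h₂ h₃ Y hY =>
      hR.exists_vertex_triangle ha hk hg h₁ h₂ h₃ Y (by lia)) u (fun _ _ => trivial) X hX hN hM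
      (by lia)
  obtain ⟨x, f, -⟩ := hR.exists_fresh (.vp 0) [] (by simp)
    (by simp [Form.Compat]) [] [] (X := Y) (by simp; lia)
  simp only [List.map_cons, List.map_nil, Form.eval, zero_add, coe_cons_eq, Multiset.coe_nil,
    add_zero] at f
  exact ⟨x, by simp, f, trivial⟩

/-- The bundle of the colours `g` and `a - g`. -/
def bundle (a g : G) : Multiset (G ⊕ G) := {cl g} + {cl (a - g)}

theorem Rich.exists_bundle_concentrator (hR : Rich R c) {a : G} (ha : ¬ Dbl a) {k r N M : ℕ}
    (hk : 3 ≤ k) (hg : ∀ g, cl g ∈ R → Good g) (u : ℕ → G)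
    (hug : ∀ i < N, Good (u i) ∧ Good (a - u i))
    (X : Multiset (G ⊕ G)) (hX : ∀ i < N, cl (u i) ∈ X) (hN : N ≤ 2 ^ (r + 1)) (hM : M ≤ N)
    (hc : Multiset.card X + (r + 1) * (N + 1) * (200 * k) + 20000 * k ≤ c) :
    ∃ S, Multiset.card S ≤ (r + 1) * (N + 1) * (200 * k) ∧ Fresh R X S ∧
      ∀ A ⊆ Finset.range N, A.card = M →
        Dec k (S + ∑ i ∈ Finset.range N \ A, bundle a (u i)) := by
  refine exists_concentrator (c := c - 20000 * k) hk (bundle a) (fun x => Good x ∧ Good (a - x)) cl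
    (fun x => by simp [bundle]) (fun Y hY => ?_) (fun x₁ x₂ x₃ q₁ q₂ q₃ h₁ h₂ h₃ Y hY =>
      hR.exists_colour_triangle ha hk hg q₁.1 q₂.1 q₃.1 q₁.2 q₂.2 q₃.2 (by abel) (by abel)
        h₁ h₂ h₃ Y (by lia)) u hug X hX hN hM (by lia)
  obtain ⟨x, f, -⟩ := hR.exists_fresh (.cp 0) [.cm a] (by simp)
    (by simpa [Form.Compat] using fun h => ha (by simpa using h.neg)) [] [] (X := Y) (by simp; lia)
  simp only [List.map_cons, List.map_nil, Form.eval, zero_add, coe_cons_eq, Multiset.coe_nil,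
    add_zero] at f
  exact ⟨x, by simp [bundle], f, hg _ (f.2 _ (by simp)).1, hg _ (f.2 _ (by simp)).1⟩

end Concentrators

section Ladder

variable {G : Type} [AddCommGroup G] [Fintype G]

theorem Good.of_eq {g h : G} (hg : Good g) (e : h = g) : Good h := e ▸ hg

theorem Good.of_neg {g h : G} (hg : Good g) (e : h = -g) : Good h :=
  ⟨by rw [e]; exact neg_ne_zero.2 hg.1, fun h' => hg.2 (h'.neg_shift 0 (by rw [e]; abel))⟩

theorem Good.ne {g h : G} (hg : Good (g - h)) : g ≠ h := fun e => hg.1 (sub_eq_zero.2 e)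

/-- Three paths to be closed up to `k`-cycles. -/
structure Triple (G : Type) where
  p₁ : G
  q₁ : G
  W₁ : Multiset (G ⊕ G)
  p₂ : G
  q₂ : G
  W₂ : Multiset (G ⊕ G)
  p₃ : G
  q₃ : G
  W₃ : Multiset (G ⊕ G)

namespace Triple

/-- The vertices and colours of the paths, but for their last vertices. -/
def total (t : Triple G) : Multiset (G ⊕ G) :=
  {vx t.p₁} + t.W₁ + ({vx t.p₂} + t.W₂) + ({vx t.p₃} + t.W₃)

/-- The sum of the differences between the end points of the paths. -/
def diff (t : Triple G) : G := t.p₁ - t.q₁ + (t.p₂ - t.q₂) + (t.p₃ - t.q₃)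

/-- The paths have the right length and their end points are in general position. -/
structure Valid (k : ℕ) (a : G) (t : Triple G) : Prop where
  split₁ : Split k t.p₁ t.q₁ t.W₁
  split₂ : Split k t.p₂ t.q₂ t.W₂
  split₃ : Split k t.p₃ t.q₃ t.W₃
  good₁ : Good (t.p₁ - (t.p₂ - a))
  good₂ : Good (t.p₃ - (t.q₁ + a))
  good₃ : Good (t.q₃ - t.q₂ + a)

/-- A condition for the first completed path. -/
structure GoodT (t : Triple G) (a s : G) : Prop where
  h₁ : Good s
  h₂ : Good (s - a)
  h₃ : Good (t.p₁ - (t.q₁ + a - s))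
  h₄ : Good (t.q₁ + a - s - (t.p₂ - a))
  h₅ : Good (t.p₁ - (t.p₃ - s))
  h₆ : Good (t.p₂ - a - (t.p₃ - s))

/-- A condition for the third completed path. -/
structure GoodB (t : Triple G) (a s u : G) : Prop where
  h₁ : Good u
  h₂ : Good (u - a)
  h₃ : Good (u - s)
  h₄ : Good (u + s - a)
  h₅ : Good (t.q₃ + a - u - t.p₁)
  h₆ : Good (t.q₃ + a - u - (t.q₁ + a - s))
  h₇ : Good (t.q₃ + a - u - (t.p₂ - a))
  h₈ : Good (t.q₃ + a - u - (t.p₃ - s))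

/-- A condition for the second completed path. -/
structure GoodA (t : Triple G) (a s l : G) : Prop where
  h₁ : Good l
  h₂ : Good (l - a)
  h₃ : Good (l - s)
  h₄ : Good (l + s - a)
  h₅ : Good (t.q₂ + l - t.p₁)
  h₆ : Good (t.q₂ + l - (t.q₁ + a - s))
  h₇ : Good (t.q₂ + l - (t.p₂ - a))
  h₈ : Good (t.q₂ + l - (t.p₃ - s))

/-- A condition relating the second and third completed paths. -/
structure GoodAB (t : Triple G) (a u l : G) : Prop where
  h₁ : Good (l - u)
  h₂ : Good (l + u - a)
  h₃ : Good (t.q₂ + l - (t.q₃ + a - u))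

theorem exists_goodT (t : Triple G) (a e : G) : ∃ E : List G, E.length ≤ 6 ∧
    ∀ τ, (∀ z ∈ E, Good (τ - z)) → t.GoodT a (e + τ) := by
  refine ⟨[-e, a - e, t.q₁ + a - t.p₁ - e, t.q₁ + a - (t.p₂ - a) - e, t.p₃ - t.p₁ - e,
    t.p₃ - (t.p₂ - a) - e], by simp, fun τ h => ?_⟩
  simp only [List.mem_cons, List.not_mem_nil, or_false, forall_eq_or_imp, forall_eq] at h
  obtain ⟨h₁, h₂, h₃, h₄, h₅, h₆⟩ := h
  exact ⟨h₁.of_eq (by abel), h₂.of_eq (by abel), h₃.of_eq (by abel), h₄.of_neg (by abel),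
    h₅.of_eq (by abel), h₆.of_eq (by abel)⟩

theorem exists_goodB (t : Triple G) (a s e : G) : ∃ E : List G, E.length ≤ 8 ∧
    ∀ β, (∀ z ∈ E, Good (β - z)) → t.GoodB a s (e + β) := by
  refine ⟨[-e, a - e, s - e, a - s - e, t.q₃ + a - t.p₁ - e, t.q₃ + a - (t.q₁ + a - s) - e,
    t.q₃ + a - (t.p₂ - a) - e, t.q₃ + a - (t.p₃ - s) - e], by simp, fun β h => ?_⟩
  simp only [List.mem_cons, List.not_mem_nil, or_false, forall_eq_or_imp, forall_eq] at h
  obtain ⟨h₁, h₂, h₃, h₄, h₅, h₆, h₇, h₈⟩ := h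
  exact ⟨h₁.of_eq (by abel), h₂.of_eq (by abel), h₃.of_eq (by abel), h₄.of_eq (by abel),
    h₅.of_neg (by abel), h₆.of_neg (by abel), h₇.of_neg (by abel), h₈.of_neg (by abel)⟩

theorem exists_goodA (t : Triple G) (a s e : G) : ∃ E : List G, E.length ≤ 8 ∧
    ∀ α, (∀ z ∈ E, Good (α - z)) → t.GoodA a s (e - α) := by
  refine ⟨[e, e - a, e - s, e + s - a, t.q₂ + e - t.p₁, t.q₂ + e - (t.q₁ + a - s),
    t.q₂ + e - (t.p₂ - a), t.q₂ + e - (t.p₃ - s)], by simp, fun β h => ?_⟩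
  simp only [List.mem_cons, List.not_mem_nil, or_false, forall_eq_or_imp, forall_eq] at h
  obtain ⟨h₁, h₂, h₃, h₄, h₅, h₆, h₇, h₈⟩ := h
  exact ⟨h₁.of_neg (by abel), h₂.of_neg (by abel), h₃.of_neg (by abel), h₄.of_neg (by abel),
    h₅.of_neg (by abel), h₆.of_neg (by abel), h₇.of_neg (by abel), h₈.of_neg (by abel)⟩

theorem exists_goodAB (t : Triple G) (a u e : G) : ∃ E : List G, E.length ≤ 3 ∧
    ∀ α, (∀ z ∈ E, Good (α - z)) → t.GoodAB a u (e - α) := by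
  refine ⟨[e - u, e + u - a, t.q₂ + e - (t.q₃ + a - u)], by simp, fun β h => ?_⟩
  simp only [List.mem_cons, List.not_mem_nil, or_false, forall_eq_or_imp, forall_eq] at h
  obtain ⟨h₁, h₂, h₃⟩ := h
  exact ⟨h₁.of_neg (by abel), h₂.of_neg (by abel), h₃.of_neg (by abel)⟩

/-- A condition for the third completed path of the last triple. -/
structure GoodC (t : Triple G) (a s l : G) : Prop where
  h₁ : Good (t.q₃ + a - l - t.p₁)
  h₂ : Good (t.q₃ + a - l - (t.q₁ + a - s))
  h₃ : Good (t.q₃ + a - l - (t.p₂ - a))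
  h₄ : Good (t.q₃ + a - l - (t.p₃ - s))

theorem exists_goodC (t : Triple G) (a s e : G) : ∃ E : List G, E.length ≤ 4 ∧
    ∀ α, (∀ z ∈ E, Good (α - z)) → t.GoodC a s (e - α) := by
  refine ⟨[t.p₁ - t.q₃ - a + e, t.q₁ + a - s - t.q₃ - a + e, t.p₂ - a - t.q₃ - a + e,
    t.p₃ - s - t.q₃ - a + e], by simp, fun β h => ?_⟩
  simp only [List.mem_cons, List.not_mem_nil, or_false, forall_eq_or_imp, forall_eq] at h
  obtain ⟨h₁, h₂, h₃, h₄⟩ := h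
  exact ⟨h₁.of_eq (by abel), h₂.of_eq (by abel), h₃.of_eq (by abel), h₄.of_eq (by abel)⟩

end Triple

/-- The forms of the colours in the bundles of `s + x`, for `s` in `S`. -/
def bundleForms (a : G) (S : List G) : List (Form G) := S.flatMap fun s => [.cp s, .cm (a - s)]

theorem pairwise_bundleForms {a : G} (ha : ¬ Dbl a) {S : List G}
    (h : S.Pairwise fun s s' => s ≠ s' ∧ ¬ Dbl (s + s' - a)) :
    (bundleForms a S).Pairwise Form.Compat := by
  rw [bundleForms, List.pairwise_flatMap]
  refine ⟨fun s _ => ?_, h.imp fun {s s'} hs => ?_⟩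
  · simpa [Form.Compat] using fun h => ha (h.neg_shift s (by abel))
  · simp only [List.mem_cons, List.not_mem_nil, or_false, forall_eq_or_imp, forall_eq, Form.Compat]
    exact ⟨⟨hs.1, fun h => hs.2 (h.shift 0 (by abel))⟩, fun h => hs.2 (h.neg_shift 0 (by abel)),
      fun h => hs.1 (by simpa using h)⟩

theorem Form.compat_vertex_bundleForms {a : G} {L : List (Form G)} {S : List G}
    (hL : ∀ f ∈ L, ∃ s, f = .vp s ∨ f = .vm s) :
    ∀ f ∈ L, ∀ g ∈ bundleForms a S, Form.Compat f g := by
  intro f hf g hg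
  obtain ⟨s, rfl | rfl⟩ := hL f hf <;>
  · simp only [bundleForms, List.mem_flatMap, List.mem_cons, List.not_mem_nil, or_false] at hg
    obtain ⟨s, -, rfl | rfl⟩ := hg <;> trivial

omit [Fintype G] in
theorem map_eval_bundleForms (a x : G) (S : List G) :
    (((bundleForms a S).map (Form.eval x) : List (G ⊕ G)) : Multiset (G ⊕ G)) =
      ((S.map (· + x) : List G) : Multiset G).bind (bundle a) := by
  induction S with
  | nil => rfl
  | cons s S ih =>
    rw [bundleForms, List.flatMap_cons, List.map_append, ← Multiset.coe_add, ← bundleForms, ih]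
    simp only [List.map_cons, List.map_nil, Form.eval, coe_cons_eq, Multiset.coe_nil, add_zero,
      Multiset.add_bind, Multiset.singleton_bind, bundle, sub_sub]

end Ladder

section Ladder

variable {G : Type} [AddCommGroup G] [Fintype G] {R : Set (G ⊕ G)} {c : ℕ}

theorem Rich.exists_step (hR : Rich R c) {a : G} (ha : ¬ Dbl a) {k : ℕ} {t : Triple G}
    (ht : t.Valid k a) {τ α β : G} {s u l : G} (hs : s = a - (t.p₁ - t.q₁) + τ)
    (hu : u = a - (t.p₃ - t.q₃) + s + β) (hl : l = t.p₂ - t.q₂ - a - α)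
    (hT : t.GoodT a s) (hB : t.GoodB a s u) (hA : t.GoodA a s l) (hAB : t.GoodAB a u l)
    (EA EB : List G) (X : Multiset (G ⊕ G))
    (hX : Multiset.card X + 800 * (EA.length + EB.length) ≤ c) :
    ∃ (A B : Multiset G) (α' γ' : G) (Y : Multiset (G ⊕ G)), Multiset.card A = 6 ∧
      Multiset.card B = 4 ∧ Fresh R X (A.map vx + B.bind (bundle a)) ∧
      B.bind (bundle a) = Y + {cl α'} + {cl γ'} ∧
      Dec k (t.total + {cl τ} + {cl α} + {cl β} + A.map vx + Y) ∧
      (∀ z ∈ EA, Good (α' - z)) ∧ (∀ z ∈ EB, Good (γ' - z)) ∧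
      α' + γ' = α + β + τ + (a + a + a + a) - t.diff := by
  obtain ⟨x, f, hx⟩ := hR.exists_fresh (.vm t.p₁) ([.vm (t.q₁ + a - s), .vp (t.p₂ - a),
    .vp (t.q₂ + l), .vm (t.p₃ - s), .vm (t.q₃ + a - u)] ++ bundleForms a [0, s, l, u])
    (by simp [bundleForms]) (by
      rw [← List.cons_append, List.pairwise_append]
      refine ⟨?_, pairwise_bundleForms ha ?_, Form.compat_vertex_bundleForms (by simp)⟩
      · simp only [Form.Compat, List.pairwise_cons, List.mem_cons, List.not_mem_nil, or_false,
          forall_eq_or_imp, forall_eq, and_true, IsEmpty.forall_iff, implies_true,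
          List.Pairwise.nil]
        exact ⟨⟨hT.h₃.ne, ht.good₁.2, (hA.h₅.of_neg (by abel)).2, hT.h₅.ne, hB.h₅.ne.symm⟩,
          ⟨hT.h₄.2, (hA.h₆.of_neg (by abel)).2, (ht.good₂.of_neg (by abel)).ne, hB.h₆.ne.symm⟩,
          ⟨hA.h₇.ne.symm, hT.h₆.2, (hB.h₇.of_neg (by abel)).2⟩, ⟨hA.h₈.2, hAB.h₃.2⟩, hB.h₈.ne.symm⟩
      · simp only [List.pairwise_cons, List.mem_cons, List.not_mem_nil, or_false,
          forall_eq_or_imp, forall_eq, and_true, IsEmpty.forall_iff, implies_true,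
          List.Pairwise.nil]
        refine ⟨⟨⟨hT.h₁.1.symm, ?_⟩, ⟨hA.h₁.1.symm, ?_⟩, hB.h₁.1.symm, ?_⟩,
          ⟨⟨hA.h₃.ne.symm, (hA.h₄.of_eq (by abel)).2⟩, hB.h₃.ne.symm, (hB.h₄.of_eq (by abel)).2⟩,
          hAB.h₁.ne, hAB.h₂.2⟩
        · simpa using hT.h₂.2
        · simpa using hA.h₂.2
        · simpa using hB.h₂.2)
    (EA.map (fun z => a - l - z) ++ EB.map (fun z => z - u))
    (EA.map (fun z => a - l - z) ++ EB.map (fun z => z - u)) (X := X) (by simp; lia)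
  rw [← List.cons_append, List.map_append, ← Multiset.coe_add, map_eval_bundleForms] at f
  simp only [List.map_cons, List.map_nil, Form.eval, zero_add, coe_cons_eq, Multiset.coe_nil,
    add_zero] at f
  refine ⟨{t.p₁ - x} + ({t.q₁ + a - s - x} + ({t.p₂ - a + x} + ({t.q₂ + l + x} +
    ({t.p₃ - s - x} + {t.q₃ + a - u - x})))), {x} + ({s + x} + ({l + x} + {u + x})),
    a - (l + x), u + x, {cl x} + {cl (a - x)} + {cl (s + x)} + {cl (a - (s + x))} +
    {cl (l + x)} + {cl (a - (u + x))}, by simp, by simp, ?_, ?_, ?_, ?_, ?_, ?_⟩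
  · simpa only [Multiset.map_add, Multiset.map_singleton] using f
  · simp only [Multiset.add_bind, Multiset.singleton_bind, bundle]
    abel
  · refine (((ht.split₁.dec (t.p₁ - x) (t.q₁ + a - s - x) x τ (a - (s + x)) (by abel)
      (by rw [hs]; abel) (by abel)).append (ht.split₂.dec (t.p₂ - a + x) (t.q₂ + l + x) (a - x) α
      (l + x) (by abel) (by rw [hl]; abel) (by abel))).append (ht.split₃.dec (t.p₃ - s - x)
      (t.q₃ + a - u - x) (s + x) β (a - (u + x)) (by abel) (by rw [hu]; abel) (by abel))).congr ?_
    simp only [Triple.total, Multiset.map_add, Multiset.map_singleton]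
    abel
  · intro z hz
    have hg : Good (x - (a - l - z)) := ⟨sub_ne_zero.2 (hx.1 _ (List.mem_append_left _
      (List.mem_map_of_mem hz))), hx.2 _ (List.mem_append_left _ (List.mem_map_of_mem hz))⟩
    exact hg.of_neg (by abel)
  · intro z hz
    have hg : Good (x - (z - u)) := ⟨sub_ne_zero.2 (hx.1 _ (List.mem_append_right _
      (List.mem_map_of_mem hz))), hx.2 _ (List.mem_append_right _ (List.mem_map_of_mem hz))⟩
    exact hg.of_eq (by abel)
  · rw [hu, hl, hs, Triple.diff]; abel

theorem Rich.exists_close (hR : Rich R c) {a : G} (ha : ¬ Dbl a) {k : ℕ} {t : Triple G}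
    (ht : t.Valid k a) {α β γ : G} {s l : G} (hs : s = a - (t.p₁ - t.q₁) + β)
    (hl : l = t.p₂ - t.q₂ - a - α) (hT : t.GoodT a s) (hA : t.GoodA a s l) (hC : t.GoodC a s l)
    (hsum : α + β + γ = t.diff - (a + a + a)) (X : Multiset (G ⊕ G)) (hX : Multiset.card X ≤ c) :
    ∃ A B : Multiset G, Multiset.card A = 6 ∧ Multiset.card B = 3 ∧
      Fresh R X (A.map vx + B.bind (bundle a)) ∧
      Dec k (t.total + {cl α} + {cl β} + {cl γ} + A.map vx + B.bind (bundle a)) := by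
  obtain ⟨x, f, -⟩ := hR.exists_fresh (.vm t.p₁) ([.vm (t.q₁ + a - s), .vp (t.p₂ - a),
    .vp (t.q₂ + l), .vm (t.p₃ - s), .vm (t.q₃ + a - l)] ++ bundleForms a [0, s, l])
    (by simp [bundleForms]) (by
      rw [← List.cons_append, List.pairwise_append]
      refine ⟨?_, pairwise_bundleForms ha ?_, Form.compat_vertex_bundleForms (by simp)⟩
      · simp only [Form.Compat, List.pairwise_cons, List.mem_cons, List.not_mem_nil, or_false,
          forall_eq_or_imp, forall_eq, and_true, IsEmpty.forall_iff, implies_true,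
          List.Pairwise.nil]
        exact ⟨⟨hT.h₃.ne, ht.good₁.2, (hA.h₅.of_neg (by abel)).2, hT.h₅.ne, hC.h₁.ne.symm⟩,
          ⟨hT.h₄.2, (hA.h₆.of_neg (by abel)).2, (ht.good₂.of_neg (by abel)).ne, hC.h₂.ne.symm⟩,
          ⟨hA.h₇.ne.symm, hT.h₆.2, (hC.h₃.of_neg (by abel)).2⟩,
          ⟨hA.h₈.2, fun h => ht.good₃.2 (h.neg_shift l (by abel))⟩, hC.h₄.ne.symm⟩
      · simp only [List.pairwise_cons, List.mem_cons, List.not_mem_nil, or_false,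
          forall_eq_or_imp, forall_eq, and_true, IsEmpty.forall_iff, implies_true,
          List.Pairwise.nil]
        refine ⟨⟨⟨hT.h₁.1.symm, ?_⟩, hA.h₁.1.symm, ?_⟩, hA.h₃.ne.symm, (hA.h₄.of_eq (by abel)).2⟩
        · simpa using hT.h₂.2
        · simpa using hA.h₂.2) [] [] (X := X) (by simpa)
  rw [← List.cons_append, List.map_append, ← Multiset.coe_add, map_eval_bundleForms] at f
  simp only [List.map_cons, List.map_nil, Form.eval, zero_add, coe_cons_eq, Multiset.coe_nil,
    add_zero] at f
  refine ⟨{t.p₁ - x} + ({t.q₁ + a - s - x} + ({t.p₂ - a + x} + ({t.q₂ + l + x} +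
    ({t.p₃ - s - x} + {t.q₃ + a - l - x})))), {x} + ({s + x} + {l + x}),
    by simp, by simp, ?_, ?_⟩
  · simpa only [Multiset.map_add, Multiset.map_singleton] using f
  · have hγ : γ = t.p₃ - s - x - (t.q₃ + a - l - x) := by
      rw [← sub_eq_of_eq_add' hsum.symm, hs, hl, Triple.diff]; abel
    refine (((ht.split₁.dec (t.p₁ - x) (t.q₁ + a - s - x) x β (a - (s + x)) (by abel)
      (by rw [hs]; abel) (by abel)).append (ht.split₂.dec (t.p₂ - a + x) (t.q₂ + l + x) (a - x) α
      (l + x) (by abel) (by rw [hl]; abel) (by abel))).append (ht.split₃.dec (t.p₃ - s - x)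
      (t.q₃ + a - l - x) (s + x) γ (a - (l + x)) (by abel) hγ (by abel))).congr ?_
    simp only [Triple.total, Multiset.map_add, Multiset.map_singleton, Multiset.add_bind,
      Multiset.singleton_bind, bundle]
    abel

end Ladder

section Ladder

variable {G : Type} [AddCommGroup G] [Fintype G] {R : Set (G ⊕ G)} {c : ℕ}

/-- The shift of the second flexible colour when the first path is closed up with the colour `τ`. -/
def Triple.shift₁ (a : G) (t : Triple G) (τ : G) : G := a - (t.p₁ - t.q₁) + τ

/-- The condition on the second pending colour of a ladder. -/
def LadderB (a : G) (e : Triple G) : List (Triple G × G) → G → Prop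
  | [], β => e.GoodT a (e.shift₁ a β)
  | (t, τ) :: _, β => t.GoodB a (t.shift₁ a τ) (a - (t.p₃ - t.q₃) + t.shift₁ a τ + β)

/-- The condition on the first pending colour of a ladder. -/
def LadderA (a : G) (e : Triple G) : List (Triple G × G) → G → G → Prop
  | [], β, α => e.GoodA a (e.shift₁ a β) (e.p₂ - e.q₂ - a - α) ∧
      e.GoodC a (e.shift₁ a β) (e.p₂ - e.q₂ - a - α)
  | (t, τ) :: _, β, α => t.GoodA a (t.shift₁ a τ) (t.p₂ - t.q₂ - a - α) ∧
      t.GoodAB a (a - (t.p₃ - t.q₃) + t.shift₁ a τ + β) (t.p₂ - t.q₂ - a - α)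

theorem exists_ladderB (a : G) (e : Triple G) (L : List (Triple G × G)) :
    ∃ E : List G, E.length ≤ 8 ∧ ∀ β, (∀ z ∈ E, Good (β - z)) → LadderB a e L β := by
  rcases L with _ | ⟨⟨t, τ⟩, L⟩
  · obtain ⟨E, h, hE⟩ := e.exists_goodT a (a - (e.p₁ - e.q₁))
    exact ⟨E, by lia, hE⟩
  · exact t.exists_goodB a _ _

theorem exists_ladderA (a : G) (e : Triple G) (L : List (Triple G × G)) (β : G) :
    ∃ E : List G, E.length ≤ 12 ∧ ∀ α, (∀ z ∈ E, Good (α - z)) → LadderA a e L β α := by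
  rcases L with _ | ⟨⟨t, τ⟩, L⟩
  · obtain ⟨E, h, hE⟩ := e.exists_goodA a (e.shift₁ a β) (e.p₂ - e.q₂ - a)
    obtain ⟨E', h', hE'⟩ := e.exists_goodC a (e.shift₁ a β) (e.p₂ - e.q₂ - a)
    exact ⟨E ++ E', by simp; lia, fun α hα => ⟨hE α fun z hz => hα z (List.mem_append_left _ hz),
      hE' α fun z hz => hα z (List.mem_append_right _ hz)⟩⟩
  · obtain ⟨E, h, hE⟩ := t.exists_goodA a (t.shift₁ a τ) (t.p₂ - t.q₂ - a)
    obtain ⟨E', h', hE'⟩ := t.exists_goodAB a (a - (t.p₃ - t.q₃) + t.shift₁ a τ + β)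
      (t.p₂ - t.q₂ - a)
    exact ⟨E ++ E', by simp; lia, fun α hα => ⟨hE α fun z hz => hα z (List.mem_append_left _ hz),
      hE' α fun z hz => hα z (List.mem_append_right _ hz)⟩⟩

/-- The sum of the pending colours at the start of a ladder. -/
def ladderSum (a : G) (e : Triple G) (L : List (Triple G × G)) : G :=
  e.diff - (a + a + a) + (L.map fun t => t.1.diff - t.2 - (a + a + a + a)).sum

theorem Rich.exists_ladder (hR : Rich R c) {a : G} (ha : ¬ Dbl a) {k : ℕ} {e : Triple G}
    (he : e.Valid k a) (L : List (Triple G × G)) (hL : ∀ t ∈ L, t.1.Valid k a)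
    (hT : ∀ t ∈ L, t.1.GoodT a (t.1.shift₁ a t.2)) {α β γ : G} (hβ : LadderB a e L β)
    (hα : LadderA a e L β α) (hγ : LadderB a e L.tail γ) (hsum : α + β + γ = ladderSum a e L)
    (X : Multiset (G ⊕ G)) (hX : Multiset.card X + 14 * L.length + 16000 ≤ c) :
    ∃ A B : Multiset G, Multiset.card A = 6 * L.length + 6 ∧
      Multiset.card B = 4 * L.length + 3 ∧
      Fresh R X (A.map vx + B.bind (bundle a)) ∧
      Dec k (e.total + ((L.map fun t => t.1.total + {cl t.2} : List (Multiset (G ⊕ G)))).sum +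
        {cl α} + {cl β} + {cl γ} + A.map vx + B.bind (bundle a)) := by
  induction L generalizing α β γ X with
  | nil =>
    obtain ⟨A, B, cA, cB, f, d⟩ := hR.exists_close ha he rfl rfl hβ hα.1 hα.2
      (γ := γ) (by simpa [ladderSum] using hsum) X (by lia)
    exact ⟨A, B, by simpa, by simpa, f, by simpa using d⟩
  | cons t L ih =>
    obtain ⟨t, τ⟩ := t
    obtain ⟨EA, hEA, hEA'⟩ := exists_ladderA a e L γ
    obtain ⟨EB, hEB, hEB'⟩ := exists_ladderB a e L.tail
    obtain ⟨A, B, α', γ', Y, cA, cB, f, e₁, d, h₁, h₂, h₃⟩ := hR.exists_step ha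
      (hL _ List.mem_cons_self) (τ := τ) rfl rfl rfl (hT _ List.mem_cons_self) hβ hα.1 hα.2 EA EB X
      (by lia)
    have cB' : Multiset.card (B.bind (bundle a)) = 8 := by
      rw [Multiset.card_bind]
      simp [bundle, cB, Function.comp_def]
    obtain ⟨A', B', cA', cB', f', d'⟩ := ih (α := α') (β := γ) (γ := γ')
      (fun t ht => hL t (List.mem_cons_of_mem _ ht)) (fun t ht => hT t (List.mem_cons_of_mem _ ht))
      hγ (hEA' _ h₁) (hEB' _ h₂) (by
        rw [add_right_comm, h₃]
        calc _ = α + β + γ + (τ + (a + a + a + a) - t.diff) := by abel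
          _ = _ := by
            rw [hsum, ladderSum, ladderSum, List.map_cons, List.sum_cons]
            abel) (A.map vx + B.bind (bundle a) + X) (by
        simp only [List.length_cons] at hX
        simp only [Multiset.card_add, Multiset.card_map, cA, cB']
        lia)
    refine ⟨A + A', B + B', by simp; lia, by simp; lia, ?_, ?_⟩
    · convert f.append f' using 1
      rw [Multiset.map_add, Multiset.add_bind]
      abel
    · refine (d.append d').congr ?_
      rw [Multiset.map_add, Multiset.add_bind, e₁, List.map_cons, List.sum_cons]
      abel

end Ladder

section LadderPlan

theorem sum_map_zip {α β M : Type*} [AddCommMonoid M] (f : α → M) (g : β → M) (l : List α)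
    (l' : List β) (h : l.length = l'.length) :
    ((l.zip l').map fun t => f t.1 + g t.2).sum = (l.map f).sum + (l'.map g).sum := by
  induction l generalizing l' with
  | nil => cases l' <;> simp_all
  | cons a l ih =>
    cases l' with
    | nil => simp at h
    | cons b l' =>
      simp only [List.zip_cons_cons, List.map_cons, List.sum_cons]
      rw [ih l' (by simpa using h)]
      exact add_add_add_comm _ _ _ _

theorem sum_map_range {M : Type*} [AddCommMonoid M] (f : ℕ → M) (n : ℕ) :
    ((List.range n).map f).sum = ∑ i ∈ Finset.range n, f i := rfl

variable {G : Type} [AddCommGroup G] [Fintype G] {R : Set (G ⊕ G)} {c : ℕ}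

theorem Avoid.good {E : List G} {x : G} (h : Avoid E E x) : ∀ z ∈ E, Good (x - z) :=
  fun z hz => ⟨sub_ne_zero.2 (h.1 z hz), h.2 z hz⟩

theorem Rich.exists_colour (hR : Rich R c) (E D : List G) (X : Multiset (G ⊕ G))
    (hX : Multiset.card X + 400 * (E.length + D.length) ≤ c) :
    ∃ x, Fresh R X {cl x} ∧ Avoid E D x := by
  obtain ⟨x, f, h⟩ := hR.exists_fresh (.cp 0) [] (by simp) (by simp [Form.Compat]) E D (X := X) hX
  simp only [List.map_cons, List.map_nil, Form.eval, zero_add, coe_cons_eq, Multiset.coe_nil,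
    add_zero] at f
  exact ⟨x, f, h⟩

theorem Rich.exists_vertex (hR : Rich R c) (E D : List G) (X : Multiset (G ⊕ G))
    (hX : Multiset.card X + 400 * (E.length + D.length) ≤ c) :
    ∃ x, Fresh R X {vx x} ∧ Avoid E D x := by
  obtain ⟨x, f, h⟩ := hR.exists_fresh (.vp 0) [] (by simp) (by simp [Form.Compat]) E D (X := X) hX
  simp only [List.map_cons, List.map_nil, Form.eval, zero_add, coe_cons_eq, Multiset.coe_nil,
    add_zero] at f
  exact ⟨x, f, h⟩

theorem Rich.exists_triple (hR : Rich R c) {a : G} (ha : ¬ Dbl a) {k : ℕ} (hk : 3 ≤ k)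
    (X : Multiset (G ⊕ G)) (hX : Multiset.card X + 2000 * k ≤ c) :
    ∃ t : Triple G, Multiset.card t.total ≤ 9 * k ∧ Fresh R X t.total ∧ t.Valid k a := by
  obtain ⟨p₁, f₁, -⟩ := hR.exists_vertex [] [] X (by simp; lia)
  obtain ⟨q₁, W₁, c₁, g₁, s₁, -⟩ := hR.exists_split ha hk p₁ [] [] (by simp [Avoid])
    ({vx p₁} + X) (by simp; lia)
  replace f₁ := f₁.append g₁
  obtain ⟨p₂, f₂, h₂⟩ := hR.exists_vertex [p₁ + a] [p₁ + a] ({vx p₁} + W₁ + X) (by simp; lia)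
  obtain ⟨q₂, W₂, c₂, g₂, s₂, -⟩ := hR.exists_split ha hk p₂ [] [] (by simp [Avoid])
    ({vx p₂} + ({vx p₁} + W₁ + X)) (by simp; lia)
  replace f₂ := f₁.append (f₂.append g₂)
  obtain ⟨p₃, f₃, h₃⟩ := hR.exists_vertex [q₂ - a, q₁ + a] [q₂ - a, q₁ + a]
    ({vx p₁} + W₁ + ({vx p₂} + W₂) + X) (by simp; lia)
  obtain ⟨q₃, W₃, c₃, g₃, s₃, h₃'⟩ := hR.exists_split ha hk p₃ [q₂ - a] [q₂ - a]
    (h₃.mono (by simp) (by simp)) ({vx p₃} + ({vx p₁} + W₁ + ({vx p₂} + W₂) + X)) (by simp; lia)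
  have g₃ := f₂.append (f₃.append g₃)
  refine ⟨⟨p₁, q₁, W₁, p₂, q₂, W₂, p₃, q₃, W₃⟩, ?_, g₃, s₁, s₂, s₃, ?_, ?_, ?_⟩
  · simp [Triple.total]; lia
  · exact (h₂.good (p₁ + a) (by simp)).of_neg (by dsimp only; abel)
  · exact (h₃.good (q₁ + a) (by simp)).of_eq (by dsimp only)
  · exact (h₃'.good (q₂ - a) (by simp)).of_eq (by dsimp only; abel)

theorem Rich.exists_ladder_plan (hR : Rich R c) {a : G} (ha : ¬ Dbl a) {k : ℕ} (hk : 3 ≤ k) (M : ℕ)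
    (X : Multiset (G ⊕ G)) (hX : Multiset.card X + (M + 3) * (9 * k) + 40000 * k ≤ c) :
    ∃ (P : Multiset (G ⊕ G)) (E : List G), E.length ≤ 6 * M ∧
      Multiset.card P ≤ (M + 3) * (9 * k) + 5 ∧ Fresh R X P ∧
      ∀ Θ : List G, Θ.length = M → Θ.sum = M • a → (∀ τ ∈ Θ, ∀ z ∈ E, Good (τ - z)) →
        ∀ {F : Set (G ⊕ G)} {c' : ℕ}, Rich F c' → ∀ X' : Multiset (G ⊕ G),
          Multiset.card X' + 14 * M + 20000 ≤ c' → ∃ A B : Multiset G,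
            Multiset.card A = 6 * M + 18 ∧ Multiset.card B = 4 * M + 11 ∧
            Fresh F X' (A.map vx + B.bind (bundle a)) ∧
            Dec k (P + ((Θ : Multiset G).map cl) + A.map vx + B.bind (bundle a)) := by
  obtain ⟨t, t1, t2, t3⟩ := exists_fresh_family (R := R) Triple.total
    (fun (_ : ℕ) t => t.Valid k a) (Finset.range (M + 3)) (9 * k) (c - 2000 * k) X
    (by simp; lia) (fun i _ Y hY _ => hR.exists_triple ha hk Y (by lia))
    (fun _ => ⟨0, 0, 0, 0, 0, 0, 0, 0, 0⟩)
  have ct : Multiset.card (∑ i ∈ Finset.range (M + 3), (t i).total) ≤ (M + 3) * (9 * k) := by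
    rw [Multiset.card_sum]
    simpa using Finset.sum_le_card_nsmul _ _ _ t1
  obtain ⟨T, eT, fT⟩ := t2.exists_eq
  rw [← eT] at ct
  choose E' hE' hE using fun i => (t i).exists_goodT a (a - ((t i).p₁ - (t i).q₁))
  obtain ⟨d₁, f₁, h₁⟩ := hR.exists_colour (E' 0) (E' 0) (T + X) (by
    have := hE' 0
    simp; lia)
  obtain ⟨d₂, f₂, h₂⟩ := hR.exists_colour (E' 1) (E' 1) ({cl d₁} + (T + X)) (by
    have := hE' 1
    simp; lia)
  obtain ⟨U, hU⟩ : ∃ U : List G → List (Triple G × G), ∀ Θ, U Θ =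
      (((List.range M).map fun i => t (i + 2)).zip Θ) := ⟨_, fun _ => rfl⟩
  obtain ⟨S, hS⟩ : ∃ S, S = (t (M + 2)).diff - (a + a + a) +
      ((t 0).diff - d₁ - (a + a + a + a) + ((t 1).diff - d₂ - (a + a + a + a) +
      (∑ i ∈ Finset.range M, ((t (i + 2)).diff - (a + a + a + a)) - M • a))) := ⟨_, rfl⟩
  have hUS : ∀ Θ : List G, Θ.length = M → Θ.sum = M • a →
      ladderSum a (t (M + 2)) ((t 0, d₁) :: (t 1, d₂) :: U Θ) = S := by
    intro Θ hΘ hΘs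
    rw [ladderSum, List.map_cons, List.sum_cons, List.map_cons, List.sum_cons, hS, hU]
    congr 3
    calc _ = ((((List.range M).map fun i => t (i + 2)).zip Θ).map fun t =>
          (t.1.diff - (a + a + a + a)) + -t.2).sum := by
          congr 2; ext t; abel
      _ = _ := by
          rw [sum_map_zip (fun t : Triple G => t.diff - (a + a + a + a)) (fun τ => -τ) _ _
            (by simp [hΘ]), List.map_map, ← sum_map_range, ← hΘs, sub_eq_add_neg, List.sum_neg]
          rfl
  obtain ⟨EB, hEB, hEB'⟩ := exists_ladderB a (t (M + 2)) [(t 0, d₁), (t 1, d₂)]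
  obtain ⟨β, f₃, h₃⟩ := hR.exists_colour (EB ++ [S]) (EB ++ [S])
    ({cl d₁} + {cl d₂} + (T + X)) (by simp; lia)
  obtain ⟨EA, hEA, hEA'⟩ := exists_ladderA a (t (M + 2)) [(t 0, d₁), (t 1, d₂)] β
  obtain ⟨EC, hEC, hEC'⟩ := exists_ladderB a (t (M + 2)) [(t 1, d₂)]
  obtain ⟨α, f₄, h₄⟩ := hR.exists_fresh (.cp 0) [.cm (S - β)] (by simp) (by
      have := (h₃.good S (by simp)).2
      simpa [Form.Compat] using this)
    (EA ++ EC.map (fun z => S - β - z)) (EA ++ EC.map (fun z => S - β - z))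
    (X := {cl d₁} + {cl d₂} + {cl β} + (T + X)) (by simp; lia)
  simp only [List.map_cons, List.map_nil, Form.eval, zero_add, coe_cons_eq, Multiset.coe_nil,
    add_zero] at f₄
  have f := fT.append (((f₁.append f₂).append f₃).append
    f₄)
  refine ⟨_, (List.range M).flatMap fun i => E' (i + 2), ?_, ?_, f, ?_⟩
  · rw [List.length_flatMap]
    refine (List.sum_le_card_nsmul _ 6 ?_).trans (by simp; lia)
    intro x hx
    obtain ⟨i, -, rfl⟩ := List.mem_map.1 hx
    exact hE' _
  · simp; lia
  intro Θ hΘ hΘs hΘE F c' hF X' hX'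
  have hUm : ∀ x ∈ U Θ, ∃ i < M, x.1 = t (i + 2) ∧ x.2 ∈ Θ := by
    rintro ⟨x, τ⟩ hx
    rw [hU] at hx
    obtain ⟨h, h'⟩ := List.of_mem_zip hx
    obtain ⟨i, hi, rfl⟩ := List.mem_map.1 h
    exact ⟨i, List.mem_range.1 hi, rfl, h'⟩
  have hT : ∀ x ∈ (t 0, d₁) :: (t 1, d₂) :: U Θ,
      x.1.Valid k a ∧ x.1.GoodT a (x.1.shift₁ a x.2) := by
    intro x hx
    rcases List.mem_cons.1 hx with rfl | hx
    · exact ⟨t3 0 (by simp), hE 0 d₁ h₁.good⟩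
    rcases List.mem_cons.1 hx with rfl | hx
    · exact ⟨t3 1 (by simp), hE 1 d₂ h₂.good⟩
    obtain ⟨x, τ⟩ := x
    obtain ⟨i, hi, rfl, hτ⟩ := hUm _ hx
    exact ⟨t3 (i + 2) (by simp; lia), hE (i + 2) τ fun z hz => hΘE τ hτ z
      (List.mem_flatMap.2 ⟨i, List.mem_range.2 hi, hz⟩)⟩
  obtain ⟨A, B, cA, cB, fAB, d⟩ := hF.exists_ladder ha (t3 (M + 2) (by simp))
    ((t 0, d₁) :: (t 1, d₂) :: U Θ) (fun x hx => (hT x hx).1)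
    (fun x hx => (hT x hx).2) (α := α) (β := β) (γ := S - β - α)
    (hEB' _ fun z hz => h₃.good z (by simp [hz]))
    (hEA' _ fun z hz => h₄.good z (by simp [hz]))
    (hEC' _ fun z hz => (h₄.good (S - β - z)
      (List.mem_append_right _ (List.mem_map_of_mem hz))).of_neg (by abel))
    (by rw [hUS Θ hΘ hΘs]; abel) X' (by simp [hU, hΘ]; lia)
  refine ⟨A, B, by simp [cA, hU, hΘ]; lia, by simp [cB, hU, hΘ]; lia, fAB, d.congr ?_⟩
  rw [eT, List.map_cons, List.sum_cons, List.map_cons, List.sum_cons, hU,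
    sum_map_zip Triple.total (fun τ => {cl τ}) _ _ (by simp [hΘ]), List.map_map,
    Finset.sum_range_succ, Finset.sum_range_succ', Finset.sum_range_succ', ← sum_map_range]
  have hs : (Θ.map fun τ => ({cl τ} : Multiset (G ⊕ G))).sum = (Θ : Multiset G).map cl := by
    rw [Multiset.map_coe, ← Multiset.sum_map_singleton (↑(Θ.map cl) : Multiset (G ⊕ G)),
      Multiset.map_coe, List.map_map, Multiset.sum_coe]
    rfl
  rw [hs]
  have hr : ((List.range M).map (Triple.total ∘ fun i => t (i + 2))).sum =
      ((List.range M).map fun i => (t (i + 1 + 1)).total).sum := rfl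
  rw [hr]
  abel

end LadderPlan

section Start

variable {G : Type} [AddCommGroup G] [Fintype G] {R : Set (G ⊕ G)} {c : ℕ}

theorem card_le_nodup_start {a v t q : G} (ha : ¬ Dbl a) (ht : t ≠ 0) (h₁ : v - q ≠ t)
    (h₂ : v - q ≠ a + t) :
    Fintype.card G ≤ 4 * (Finset.univ.filter fun x : G =>
      ([Form.vp 0, .vp (-t), .cm v, .cp (a - v), .cp (-t - q), .cm (a + t + q)].map
        (Form.eval x)).Nodup).card := by
  have hd : 2 * (Finset.univ.filter fun x : G => x + x = v + t + q).card ≤ Fintype.card G := by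
    apply card_double_fiber_le_half
    by_cases h : ∃ y : G, y + y ≠ 0
    · exact Or.inr h
    · push Not at h
      refine Or.inl fun h' => h₁ ?_
      calc v - q = v + t + q - (q + q) - t := by abel
        _ = -t := by rw [h', h]; abel
        _ = t := neg_eq_of_add_eq_zero_left (h t)
  have b₁ := Form.card_bad [Form.vp 0, .vp (-t), .cm v, .cp (a - v)] (by
    simp [Form.Compat]
    exact ⟨ht, fun h => ha (h.neg_shift v (by abel))⟩)
  have b₂ := Form.card_bad [Form.cp (-t - q), .cm (a + t + q)] (by
    simp [Form.Compat]
    exact fun h => ha (h.neg_shift (-t - q) (by abel)))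
  have b₃ := Form.card_bad [Form.cm v, .cm (a + t + q)] (by
    simp [Form.Compat]
    grind)
  have b₄ := Form.card_bad [Form.cp (a - v), .cp (-t - q)] (by
    simp [Form.Compat]
    grind)
  set B₁ := Finset.univ.filter fun x : G => x + x = v + t + q
  set B₂ := Finset.univ.filter fun x : G =>
    ¬ ([Form.vp 0, .vp (-t), .cm v, .cp (a - v)].map (Form.eval x)).Nodup
  set B₃ := Finset.univ.filter fun x : G =>
    ¬ ([Form.cp (-t - q), .cm (a + t + q)].map (Form.eval x)).Nodup
  set B₄ := Finset.univ.filter fun x : G =>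
    ¬ ([Form.cm v, .cm (a + t + q)].map (Form.eval x)).Nodup
  set B₅ := Finset.univ.filter fun x : G =>
    ¬ ([Form.cp (a - v), .cp (-t - q)].map (Form.eval x)).Nodup
  have hb : (Finset.univ.filter fun x : G =>
      ¬ ([Form.vp 0, .vp (-t), .cm v, .cp (a - v), .cp (-t - q), .cm (a + t + q)].map
        (Form.eval x)).Nodup) ⊆ B₁ ∪ B₂ ∪ B₃ ∪ B₄ ∪ B₅ := by
    intro x hx
    by_contra h
    simp only [Finset.mem_union, not_or, Finset.mem_filter, Finset.mem_univ, true_and, B₁, B₂, B₃,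
      B₄, B₅, not_not] at h hx
    obtain ⟨⟨⟨⟨h1, h2⟩, h3⟩, h4⟩, h5⟩ := h
    apply hx
    simp only [List.map_cons, List.map_nil, Form.eval, List.nodup_cons, List.mem_cons,
      List.not_mem_nil, or_false, not_or, List.nodup_nil, not_false_eq_true, and_true, vx, cl,
      reduceCtorEq, Sum.inl.injEq, Sum.inr.injEq] at h2 h3 h4 h5 ⊢
    have e1 : v - x ≠ -t - q + x := fun h => h1 (by
      calc x + x = (-t - q + x) + x + t + q := by abel
        _ = _ := by rw [← h]; abel)
    have e2 : a - v + x ≠ a + t + q - x := fun h => h1 (by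
      calc x + x = (a - v + x) + x + v - a := by abel
        _ = _ := by rw [h]; abel)
    tauto
  have hc := Finset.card_le_card hb
  have u1 := Finset.card_union_le (B₁ ∪ B₂ ∪ B₃ ∪ B₄) B₅
  have u2 := Finset.card_union_le (B₁ ∪ B₂ ∪ B₃) B₄
  have u3 := Finset.card_union_le (B₁ ∪ B₂) B₃
  have u4 := Finset.card_union_le B₁ B₂
  have hs := Finset.card_filter_add_card_filter_not (s := (Finset.univ : Finset G))
    (fun x : G => ([Form.vp 0, .vp (-t), .cm v, .cp (a - v), .cp (-t - q), .cm (a + t + q)].map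
        (Form.eval x)).Nodup)
  rw [Finset.card_univ] at hs
  simp only [List.length_cons, List.length_nil] at b₁ b₂ b₃ b₄
  lia

omit [Fintype G] in
theorem map_add_map_eq_bind (a : G) (s : Multiset G) :
    s.map cl + s.map (fun y => cl (a - y)) = s.bind (bundle a) := by
  induction s using Multiset.induction_on with
  | empty => simp
  | cons x s ih =>
    rw [Multiset.cons_bind, ← ih, bundle]
    simp only [Multiset.map_cons]
    simp only [← Multiset.singleton_add]
    abel

theorem Rich.exists_start (hR : Rich R c) {a : G} (ha : ¬ Dbl a) {k : ℕ} (hk : 3 ≤ k) {v t : G}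
    (ht : t ≠ 0) (hta : a + t ≠ 0) (X : Multiset (G ⊕ G)) (hX : Multiset.card X + 4 * k ≤ c) :
    ∃ s : Multiset G × Multiset G, Multiset.card s.1 = k - 1 ∧ Multiset.card s.2 = k - 1 ∧
      Fresh R X (s.1.map vx + s.2.bind (bundle a)) ∧
      Dec k ({vx v} + {cl t} + s.1.map vx + s.2.map cl) := by
  obtain ⟨q, vs, cs, h1, h2, h3, h4, h5, h6⟩ := hR.exists_split_mates ha v
    (fun q => v - q ≠ t ∧ v - q ≠ a + t) 2 ((Finset.card_le_card (t := {v - t, v - (a + t)}) (by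
      intro x hx
      simp only [Finset.mem_filter, Finset.mem_univ, true_and, Finset.mem_insert,
        Finset.mem_singleton] at hx ⊢
      grind)).trans Finset.card_le_two) (by simp [ht.symm, hta.symm]) (k - 3) X (by lia)
  obtain ⟨x, f, -⟩ := hR.exists_avoid (fun _ => True) 0 (by simp) (.vp 0)
    [.vp (-t), .cm v, .cp (a - v), .cp (-t - q), .cm (a + t + q)] (by simp)
    (card_le_nodup_start ha ht h5 h6)
    (X := vs.map vx + cs.map cl + (cs.map fun y => cl (a - y)) + X) (by simp [h1, h2]; lia)
  simp only [List.map_cons, List.map_nil, Form.eval, zero_add, coe_cons_eq, Multiset.coe_nil,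
    add_zero] at f
  refine ⟨(vs + {x} + {-t + x}, cs + {v - x} + {-t - q + x}), by simp [h1]; lia, by simp [h2]; lia,
    ?_, ?_⟩
  · convert h3.append f using 1
    rw [← map_add_map_eq_bind]
    simp only [Multiset.map_add, Multiset.map_singleton]
    rw [show a - (v - x) = a - v + x by abel, show a - (-t - q + x) = a + t + q - x by abel]
    abel
  · rw [Nat.sub_add_cancel hk] at h4
    refine (h4.dec x (-t + x) (v - x) t (-t - q + x) rfl (by abel) (by abel)).congr ?_
    simp only [Multiset.map_add, Multiset.map_singleton]
    abel

theorem sum_map {ι α β : Type*} (s : Finset ι) (f : ι → Multiset α) (g : α → β) :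
    ∑ i ∈ s, (f i).map g = (∑ i ∈ s, f i).map g :=
  (map_sum (Multiset.mapAddMonoidHom g) f s).symm

theorem sum_bind {ι α β : Type*} (s : Finset ι) (f : ι → Multiset α) (g : α → Multiset β) :
    ∑ i ∈ s, (f i).bind g = (∑ i ∈ s, f i).bind g := by
  induction s using Finset.induction_on with
  | empty => simp
  | insert a s ha ih => rw [Finset.sum_insert ha, Finset.sum_insert ha, ih, Multiset.add_bind]

theorem Rich.exists_starts (hR : Rich R c) {a : G} (ha : ¬ Dbl a) {k : ℕ} (hk : 3 ≤ k) (m : ℕ)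
    {v t : ℕ → G} (ht : ∀ i < m, t i ≠ 0 ∧ a + t i ≠ 0) (X : Multiset (G ⊕ G))
    (hX : Multiset.card X + m * (3 * k) + 4 * k ≤ c) :
    ∃ A C : Multiset G, Multiset.card A = m * (k - 1) ∧ Multiset.card C = m * (k - 1) ∧
      Fresh R X (A.map vx + C.bind (bundle a)) ∧
      Dec k (∑ i ∈ Finset.range m, ({vx (v i)} + {cl (t i)}) + A.map vx + C.map cl) := by
  obtain ⟨s, s1, s2, s3⟩ := exists_fresh_family (R := R)
    (fun s : Multiset G × Multiset G => s.1.map vx + s.2.bind (bundle a))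
    (fun (i : ℕ) s => Multiset.card s.1 = k - 1 ∧ Multiset.card s.2 = k - 1 ∧
      Dec k ({vx (v i)} + {cl (t i)} + s.1.map vx + s.2.map cl)) (Finset.range m) (3 * k)
    (c - 4 * k) X (by simp; lia) (by
      intro i hi Y hY _
      obtain ⟨s, h1, h2, h3, h4⟩ := hR.exists_start ha hk (v := v i) (ht i (by simpa using hi)).1
        (ht i (by simpa using hi)).2 Y (by lia)
      refine ⟨s, ?_, h3, h1, h2, h4⟩
      have : Multiset.card (s.2.bind (bundle a)) = 2 * (k - 1) := by
        simp [Multiset.card_bind, bundle, h2, Function.comp_def]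
        lia
      rw [Multiset.card_add, Multiset.card_map, this, h1]
      lia) (fun _ => (0, 0))
  refine ⟨∑ i ∈ Finset.range m, (s i).1, ∑ i ∈ Finset.range m, (s i).2, ?_, ?_, ?_, ?_⟩
  · rw [Multiset.card_sum, Finset.sum_congr rfl fun i hi => (s3 i hi).1]
    simp
  · rw [Multiset.card_sum, Finset.sum_congr rfl fun i hi => (s3 i hi).2.1]
    simp
  · rwa [Finset.sum_add_distrib, sum_map, sum_bind] at s2
  · refine (Dec.sum _ _ fun i hi => (s3 i hi).2.2).congr ?_
    simp only [Finset.sum_add_distrib, sum_map]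

end Start

section Absorb

variable {G : Type} [AddCommGroup G] [Fintype G] {R : Set (G ⊕ G)} {c : ℕ}

/-- The colours which fail to be good after a translation by an element of `E`. -/
noncomputable def badShifts (E : List G) : Multiset (G ⊕ G) :=
  (E : Multiset G).bind fun z => (Finset.univ.filter fun d : G => ¬ Good d).val.map fun d =>
    cl (z + d)

theorem card_filter_not_good : (Finset.univ.filter fun d : G => ¬ Good d).card ≤ 401 := by
  have h : (Finset.univ.filter fun d : G => ¬ Good d) ⊆
      {0} ∪ Finset.univ.filter fun d : G => Dbl d := by
    intro d
    simp [Good]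
    tauto
  exact (Finset.card_le_card h).trans ((Finset.card_union_le _ _).trans
    (by have := card_filter_dbl (G := G); simp; lia))

theorem card_badShifts (E : List G) : Multiset.card (badShifts E) ≤ E.length * 401 := by
  rw [badShifts, Multiset.card_bind]
  refine (Multiset.sum_le_card_nsmul _ 401 ?_).trans (by simp)
  intro x hx
  obtain ⟨z, -, rfl⟩ := Multiset.mem_map.1 hx
  rw [Function.comp_apply, Multiset.card_map]
  exact card_filter_not_good

theorem good_of_notMem_badShifts {E : List G} {τ : G} (h : cl τ ∉ badShifts E) :
    ∀ z ∈ E, Good (τ - z) := by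
  intro z hz
  by_contra hg
  refine h (Multiset.mem_bind.2 ⟨z, hz, Multiset.mem_map.2 ⟨τ - z, by simpa using hg, ?_⟩⟩)
  rw [add_sub_cancel]

theorem Rich.exists_absorber (hR : Rich R c) {a : G} (ha : ¬ Dbl a) {k : ℕ} (hk : 3 ≤ k) (m M : ℕ)
    (hM : M = m * (k - 1)) (X : Multiset (G ⊕ G))
    (hX : Multiset.card X + (M + 3) * (9 * k) + 40000 * k ≤ c) :
    ∃ P : Multiset (G ⊕ G), Multiset.card P ≤ (M + 3) * (9 * k) + 5 ∧ Fresh R X P ∧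
      ∀ v t : ℕ → G, (∀ i < m, t i ≠ 0 ∧ a + t i ≠ 0) → ∑ i ∈ Finset.range m, t i = 0 →
        ∀ {F : Set (G ⊕ G)} {c' : ℕ}, Rich F c' → 3000 * M + m * (3 * k) + 4 * k + 20000 ≤ c' →
          ∃ A B : Multiset G, Multiset.card A = 7 * M + 18 ∧ Multiset.card B = 5 * M + 11 ∧
            Fresh F 0 (A.map vx + B.bind (bundle a)) ∧
            Dec k (P + ∑ i ∈ Finset.range m, ({vx (v i)} + {cl (t i)}) + A.map vx +
              B.bind (bundle a)) := by
  obtain ⟨P, E, hE, cP, fP, hP⟩ := hR.exists_ladder_plan ha hk M X hX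
  refine ⟨P, cP, fP, fun v t ht hs F c' hF hc => ?_⟩
  have cE := card_badShifts E
  obtain ⟨A, C, cA, cC, f, d⟩ := hF.exists_starts ha hk m (v := v) ht (badShifts E) (by lia)
  have hC : C.sum = 0 := by
    have := d.colSum_eq_zero
    simpa [Finset.sum_add_distrib, hs, colSum_map_vx, colSum_map_cl] using this
  obtain ⟨A', B', cA', cB', f', d'⟩ := hP (C.map fun y => a - y).toList (by simp [cC, hM]) (by
      rw [Multiset.sum_toList, Multiset.sum_map_sub]
      simp [hC, cC, hM]) (by
      intro τ hτ
      obtain ⟨y, hy, rfl⟩ := Multiset.mem_map.1 (Multiset.mem_toList.1 hτ)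
      exact good_of_notMem_badShifts (f.2 (cl (a - y)) (Multiset.mem_add.2 (Or.inr
        (Multiset.mem_bind.2 ⟨y, hy, by simp [bundle]⟩)))).2) hF
      (A.map vx + C.bind (bundle a)) (by
        have : Multiset.card (C.bind (bundle a)) = 2 * M := by
          simp [Multiset.card_bind, bundle, cC, Function.comp_def, hM]
          lia
        rw [Multiset.card_add, Multiset.card_map, this, cA]
        lia)
  refine ⟨A + A', C + B', by rw [Multiset.card_add, cA, cA']; lia,
    by rw [Multiset.card_add, cC, cB']; lia, ?_, (d.append d').congr ?_⟩
  · convert (f.mono subset_rfl (Multiset.zero_subset _)).append (f'.mono subset_rfl (by simp))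
      using 1
    rw [Multiset.map_add, Multiset.add_bind]
    abel
  · rw [Multiset.map_add, Multiset.add_bind, ← map_add_map_eq_bind a C, Multiset.coe_toList,
      Multiset.map_map]
    simp only [Function.comp_def]
    abel

end Absorb

section Deterministic

theorem exists_enumeration {α : Type*} [Nonempty α] (T : Finset α) :
    ∃ u : ℕ → α, Set.BijOn u (Finset.range T.card : Set ℕ) T := by
  refine ⟨fun i => if h : i < T.card then T.equivFin.symm ⟨i, h⟩ else Classical.arbitrary α, ?_, ?_, ?_⟩
  · intro i hi
    have h : i < T.card := by simpa using hi
    simp [h]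
  · intro i hi j hj hij
    have h : i < T.card := by simpa using hi
    have h' : j < T.card := by simpa using hj
    simp only [h, h', dite_true] at hij
    simpa using T.equivFin.symm.injective (Subtype.ext hij)
  · intro x hx
    refine ⟨T.equivFin ⟨x, hx⟩, by simp, ?_⟩
    simp

theorem sum_range_of_bijOn {α M : Type*} [AddCommMonoid M] {T : Finset α} {u : ℕ → α}
    (hu : Set.BijOn u (Finset.range T.card : Set ℕ) T) (f : α → M) :
    ∑ i ∈ Finset.range T.card, f (u i) = ∑ g ∈ T, f g :=
  Finset.sum_nbij u hu.mapsTo hu.injOn hu.surjOn fun _ _ => rfl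

theorem dec_sum_sdiff {G α : Type} [AddCommGroup G] {k M : ℕ} {T : Finset α} {u : ℕ → α}
    (hu : Set.BijOn u (Finset.range T.card : Set ℕ) T) (f : α → Multiset (G ⊕ G))
    {S : Multiset (G ⊕ G)} (h : ∀ A ⊆ Finset.range T.card, A.card = M →
      Dec k (S + ∑ i ∈ Finset.range T.card \ A, f (u i))) {B : Finset α} (hB : B ⊆ T)
    (hM : B.card = M) : Dec k (S + ∑ g ∈ T \ B, f g) := by
  have hA : ((Finset.range T.card).filter fun i => u i ∈ B).card = M := by
    rw [← hM]
    refine Finset.card_nbij u ?_ (hu.injOn.mono fun i hi => (Finset.mem_filter.1 hi).1) ?_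
    · intro i hi
      exact (Finset.mem_filter.1 hi).2
    · intro g hg
      obtain ⟨i, hi, rfl⟩ := hu.surjOn (hB hg)
      exact ⟨i, Finset.mem_coe.2 (Finset.mem_filter.2 ⟨hi, hg⟩), rfl⟩
  refine (h _ (Finset.filter_subset _ _) hA).congr ?_
  congr 1
  symm
  refine Finset.sum_nbij u ?_ (hu.injOn.mono fun i hi => (Finset.mem_sdiff.1 hi).1) ?_
    fun _ _ => rfl
  · intro i hi
    simp only [Finset.mem_sdiff, Finset.mem_filter] at hi ⊢
    exact ⟨hu.mapsTo hi.1, fun h => hi.2 ⟨hi.1, h⟩⟩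
  · intro g hg
    obtain ⟨hg, hg'⟩ := Finset.mem_sdiff.1 hg
    obtain ⟨i, hi, rfl⟩ := hu.surjOn hg
    refine ⟨i, ?_, rfl⟩
    simp only [Finset.coe_sdiff, Finset.coe_filter, Set.mem_sdiff, Set.mem_ofPred_eq, not_and]
    exact ⟨hi, fun _ => hg'⟩

variable {G : Type} [AddCommGroup G] [Fintype G] {R : Set (G ⊕ G)} {c : ℕ}

/-- The representative of the bundle of a colour. -/
noncomputable def bundleRep (a g : G) : G :=
  if Fintype.equivFin G g ≤ Fintype.equivFin G (a - g) then g else a - g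

omit [Fintype G] in
theorem bundle_symm (a g : G) : bundle a (a - g) = bundle a g := by
  rw [bundle, bundle, sub_sub_cancel, add_comm]

theorem bundle_bundleRep (a g : G) : bundle a (bundleRep a g) = bundle a g := by
  rw [bundleRep]
  split_ifs
  · rfl
  · exact bundle_symm a g

theorem bundleRep_symm (a g : G) : bundleRep a (a - g) = bundleRep a g := by
  have := (Fintype.equivFin G).injective.eq_iff (a := g) (b := a - g)
  rw [bundleRep, bundleRep, sub_sub_cancel]
  grind

/-- The representatives of the bundles in `F`. -/
noncomputable def bundleReps (a : G) (F : Finset (G ⊕ G)) : Finset G :=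
  Finset.univ.filter fun g => bundleRep a g = g ∧ bundle a g ≤ F.val

theorem bundleRep_mem {a g : G} {F : Finset (G ⊕ G)} (h : bundle a g ≤ F.val) :
    bundleRep a g ∈ bundleReps a F := by
  rw [bundleReps, Finset.mem_filter, bundle_bundleRep]
  refine ⟨Finset.mem_univ _, ?_, h⟩
  by_cases h : bundleRep a g = g
  · rw [h, h]
  · have : bundleRep a g = a - g := by
      rw [bundleRep] at h ⊢
      grind
    rw [this, bundleRep_symm, this]

/-- The vertices and the bundles of colours in `F`. -/
noncomputable def flexible (a : G) (F : Finset (G ⊕ G)) : Multiset (G ⊕ G) :=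
  F.toLeft.val.map vx + (bundleReps a F).val.bind (bundle a)

omit [AddCommGroup G] [Fintype G] in
theorem sum_singleton_vx (s : Finset G) :
    ∑ v ∈ s, ({vx v} : Multiset (G ⊕ G)) = s.val.map vx := by
  rw [Finset.sum, ← Multiset.sum_map_singleton (s.val.map vx), Multiset.map_map]
  rfl

omit [AddCommGroup G] [Fintype G] in
theorem sum_singleton_cl (s : Finset G) :
    ∑ v ∈ s, ({cl v} : Multiset (G ⊕ G)) = s.val.map cl := by
  rw [Finset.sum, ← Multiset.sum_map_singleton (s.val.map cl), Multiset.map_map]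
  rfl

theorem nodup_bind_bundleReps (a : G) (F : Finset (G ⊕ G)) :
    ((bundleReps a F).val.bind (bundle a)).Nodup := by
  rw [Multiset.nodup_bind]
  refine ⟨fun g hg => Multiset.nodup_of_le (Finset.mem_filter.1 hg).2.2 F.nodup,
    Multiset.Nodup.pairwise (fun g hg g' hg' hne => ?_) (bundleReps a F).nodup⟩
  have h := (Finset.mem_filter.1 hg).2.1
  have h' := (Finset.mem_filter.1 hg').2.1
  have key : g ≠ a - g' := fun e => hne (by rw [← h, e, bundleRep_symm, h'])
  simp only [Function.onFun, bundle, Multiset.disjoint_left, Multiset.mem_add,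
    Multiset.mem_singleton, cl, not_or]
  rintro x (rfl | rfl)
  · exact ⟨by simpa using hne, by simpa using key⟩
  · refine ⟨fun e => key ?_, by simpa using hne⟩
    rw [← Sum.inr.inj e, sub_sub_cancel]

theorem flexible_le (a : G) (F : Finset (G ⊕ G)) : flexible a F ≤ F.val := by
  rw [Multiset.le_iff_subset]
  · intro e he
    rcases Multiset.mem_add.1 he with h | h
    · obtain ⟨v, hv, rfl⟩ := Multiset.mem_map.1 h
      exact Finset.mem_toLeft.1 hv
    · obtain ⟨g, hg, h⟩ := Multiset.mem_bind.1 h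
      exact Multiset.mem_of_le (Finset.mem_filter.1 hg).2.2 h
  · refine Multiset.nodup_add.2 ⟨F.toLeft.nodup.map Sum.inl_injective,
      nodup_bind_bundleReps a F, ?_⟩
    rw [Multiset.disjoint_left]
    intro e h h'
    obtain ⟨v, -, rfl⟩ := Multiset.mem_map.1 h
    obtain ⟨g, -, h'⟩ := Multiset.mem_bind.1 h'
    simp [bundle, vx, cl] at h'

theorem exists_reps {a : G} {F : Finset (G ⊕ G)} {B : Multiset G}
    (h : Fresh (F : Set (G ⊕ G)) 0 (B.bind (bundle a))) :
    ∃ S ⊆ bundleReps a F, S.card = Multiset.card B ∧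
      B.bind (bundle a) = S.val.bind (bundle a) := by
  have hb : (B.map (bundleRep a)).bind (bundle a) = B.bind (bundle a) := by
    rw [Multiset.bind_map]
    exact Multiset.bind_congr fun g _ => bundle_bundleRep a g
  have hn : (B.map (bundleRep a)).Nodup := by
    have := h.1
    rw [← hb, ← map_add_map_eq_bind] at this
    exact ((Multiset.nodup_add.1 this).1).of_map
  have hF : B.bind (bundle a) ≤ F.val :=
    (Multiset.le_iff_subset h.1).2 fun e he => (h.2 e he).1
  refine ⟨⟨_, hn⟩, fun g hg => ?_, Multiset.card_map _ _, hb.symm⟩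
  obtain ⟨y, hy, rfl⟩ := Multiset.mem_map.1 (Finset.mem_mk.1 hg)
  exact bundleRep_mem ((Multiset.le_bind B hy).trans hF)

theorem card_bundleReps_lt {a : G} (ha : ¬ Dbl a) {F : Finset (G ⊕ G)} {c' : ℕ}
    (hF : Rich (F : Set (G ⊕ G)) c') : c' < 2 * (bundleReps a F).card := by
  by_contra! h
  obtain ⟨x, f, -⟩ := hF.exists_fresh (.cp 0) [.cm a] (by simp)
    (by simpa [Form.Compat] using fun h => ha (by simpa using h.neg)) [] []
    (X := (bundleReps a F).val.bind (bundle a)) (by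
      simp [Multiset.card_bind, bundle, Function.comp_def]; lia)
  simp only [List.map_cons, List.map_nil, Form.eval, zero_add, coe_cons_eq, Multiset.coe_nil,
    add_zero] at f
  change Fresh _ _ (bundle a x) at f
  refine (f.2 (cl x) (by simp [bundle])).2 (Multiset.mem_bind.2 ⟨bundleRep a x, ?_, ?_⟩)
  · exact bundleRep_mem ((Multiset.le_iff_subset f.1).2 fun e he => (f.2 e he).1)
  · rw [bundle_bundleRep]
    simp [bundle]

theorem card_toLeft_lt {F : Finset (G ⊕ G)} {c' : ℕ} (hF : Rich (F : Set (G ⊕ G)) c') :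
    c' < F.toLeft.card := by
  by_contra! h
  obtain ⟨x, f, -⟩ := hF.exists_vertex [] [] (F.toLeft.val.map vx) (by simpa using h)
  have := f.2 (vx x) (by simp)
  exact this.2 (Multiset.mem_map.2 ⟨x, Finset.mem_toLeft.2 this.1, rfl⟩)

end Deterministic

section AbsorbingSet

variable {G : Type} [AddCommGroup G] [Fintype G] {R : Set (G ⊕ G)} {c : ℕ}

theorem exists_absorbing_multiset (hR : Rich R c) {F : Finset (G ⊕ G)} {c' : ℕ}
    (hF : Rich (F : Set (G ⊕ G)) c') (hFR : (F : Set (G ⊕ G)) ⊆ R) (hg : ∀ g, cl g ∈ R → Good g)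
    {k : ℕ} (hk : 3 ≤ k) (m M r : ℕ) (hM : M = m * (k - 1)) (hr : Fintype.card G ≤ 2 ^ (r + 1))
    (hc : 2 * ((r + 1) * (F.card + 1) * (200 * k)) + F.card + (M + 3) * (9 * k) + 100000 * k ≤ c)
    (hc' : 3000 * M + m * (3 * k) + 4 * k + 20000 ≤ c') :
    ∃ W : Multiset (G ⊕ G), Fresh R 0 W ∧ ∀ V' C' : Finset G, (∀ v ∈ V', vx v ∉ W) →
      (∀ t ∈ C', cl t ∉ W) → V'.card = m → C'.card = m → ∑ t ∈ C', t = 0 → 0 ∉ C' →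
        Dec k (W + V'.val.map vx + C'.val.map cl) := by
  obtain ⟨x, fx, -⟩ := hR.exists_colour [] [] F.val (by simp; lia)
  obtain ⟨a, rfl⟩ : ∃ a, x = -a := ⟨-x, by simp⟩
  have ha : Good a := (hg (-a) (fx.2 _ (by simp)).1).of_neg (by simp)
  obtain ⟨S₀, c₀, f₀, d₀⟩ := hR.exists_cycle_of_colour ha.2 ha.1 hk ({cl (-a)} + F.val)
    (by simp; lia)
  replace f₀ := fx.append f₀
  obtain ⟨P, cP, fP, dP⟩ := hR.exists_absorber ha.2 hk m M hM ({cl (-a)} + S₀ + F.val)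
    (by simp; lia)
  replace fP := f₀.append fP
  have hle := flexible_le a F
  have cl_le : F.toLeft.card ≤ F.card := Finset.card_toLeft_le
  have cr_le : (bundleReps a F).card ≤ F.card := by
    have := Multiset.card_le_card hle
    simp [flexible, Multiset.card_bind, bundle, Function.comp_def] at this
    lia
  have hcl := card_toLeft_lt hF
  have hcr := card_bundleReps_lt ha.2 hF
  have hN : ∀ s : Finset G, s.card ≤ 2 ^ (r + 1) := fun s => s.card_le_univ.trans hr
  obtain ⟨u, hu⟩ := exists_enumeration F.toLeft
  have huF : ∀ i < F.toLeft.card, vx (u i) ∈ F := fun i hi =>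
    Finset.mem_toLeft.1 (hu.mapsTo (by simpa using hi))
  have b₁ : (r + 1) * (F.toLeft.card + 1) * (200 * k) ≤ (r + 1) * (F.card + 1) * (200 * k) := by
    gcongr
  have b₂ : (r + 1) * ((bundleReps a F).card + 1) * (200 * k) ≤
      (r + 1) * (F.card + 1) * (200 * k) := by
    gcongr
  obtain ⟨S₁, c₁, f₁, d₁⟩ := hR.exists_vertex_concentrator ha.2 (M := 7 * M + 18) hk hg u
    ({cl (-a)} + S₀ + P + F.val) (fun i hi => Multiset.mem_add.2 (Or.inr (huF i hi))) (hN _)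
    (by lia) (by simp; lia)
  replace f₁ := fP.append f₁
  obtain ⟨w, hw⟩ := exists_enumeration (bundleReps a F)
  have hwF : ∀ i < (bundleReps a F).card, bundle a (w i) ≤ F.val := fun i hi =>
    (Finset.mem_filter.1 (hw.mapsTo (by simpa using hi))).2.2
  have hwm : ∀ i < (bundleReps a F).card, ∀ e ∈ bundle a (w i), e ∈ F.val := fun i hi e he =>
    Multiset.mem_of_le (hwF i hi) he
  obtain ⟨S₂, c₂, f₂, d₂⟩ := hR.exists_bundle_concentrator ha.2 (M := 5 * M + 11) hk hg w
    (fun i hi => ⟨hg _ (hFR (hwm i hi (cl (w i)) (by simp [bundle]))),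
      hg _ (hFR (hwm i hi (cl (a - w i)) (by simp [bundle])))⟩)
    ({cl (-a)} + S₀ + P + S₁ + F.val)
    (fun i hi => Multiset.mem_add.2 (Or.inr (hwm i hi _ (by simp [bundle])))) (hN _)
    (by lia) (by simp; lia)
  replace f₂ := f₁.append f₂
  have fF : Fresh R 0 F.val := ⟨F.nodup, fun e he => ⟨hFR he, Multiset.notMem_zero _⟩⟩
  refine ⟨flexible a F + ({cl (-a)} + S₀ + P + S₁ + S₂), (fF.sub hle).append
    (f₂.mono subset_rfl (by simpa using Multiset.subset_of_le hle)), ?_⟩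
  intro V' C' hV' hC' cV' cC' hs h0
  obtain ⟨v, hv⟩ := exists_enumeration V'
  obtain ⟨t, ht⟩ := exists_enumeration C'
  have e₁ := sum_range_of_bijOn hv fun x => ({vx x} : Multiset (G ⊕ G))
  have e₂ := sum_range_of_bijOn ht fun x => ({cl x} : Multiset (G ⊕ G))
  have e₃ := sum_range_of_bijOn ht id
  rw [cV', sum_singleton_vx] at e₁
  rw [cC'] at e₂ e₃ ht
  rw [sum_singleton_cl] at e₂
  obtain ⟨A, B, cA, cB, fAB, d⟩ := dP v t (fun i hi => by
      have hi : t i ∈ C' := ht.mapsTo (by simpa using hi)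
      refine ⟨fun h => h0 (h ▸ hi), fun h => hC' _ hi ?_⟩
      rw [eq_neg_of_add_eq_zero_right h]
      simp) (e₃.trans hs) hF hc'
  have hA : A.Nodup := ((Multiset.nodup_add.1 fAB.1).1).of_map
  obtain ⟨B', hB', cB', eB⟩ := exists_reps (fAB.sub (Multiset.le_add_left _ _))
  have hA' : (⟨A, hA⟩ : Finset G) ⊆ F.toLeft := fun g hg => Finset.mem_toLeft.2
    (fAB.2 (vx g) (Multiset.mem_add.2 (Or.inl (Multiset.mem_map_of_mem _ hg)))).1
  have d₁' := dec_sum_sdiff hu (fun g => ({vx g} : Multiset (G ⊕ G))) d₁ hA' cA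
  have d₂' := dec_sum_sdiff hw (bundle a) d₂ hB' (cB'.trans cB)
  refine ((d.append d₁').append (d₂'.append d₀)).congr ?_
  rw [flexible, Finset.sum_add_distrib, e₁, e₂]
  have g₁ : F.toLeft.val.map vx = A.map vx +
      ∑ g ∈ F.toLeft \ (⟨A, hA⟩ : Finset G), ({vx g} : Multiset (G ⊕ G)) := by
    rw [← sum_singleton_vx, ← Finset.sum_sdiff hA', add_comm, sum_singleton_vx ⟨A, hA⟩]
  have g₂ : (bundleReps a F).val.bind (bundle a) = B.bind (bundle a) +
      ∑ g ∈ bundleReps a F \ B', bundle a g := by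
    rw [eB, add_comm]
    exact (Finset.sum_sdiff (f := bundle a) hB').symm
  rw [g₁, g₂]
  abel

theorem exists_absorbing_set {R₁ R₂ U : Finset G} (hR : R ⊆ {e | Sum.elim (· ∈ R₁ \ U) (· ∈ R₂ \ U) e})
    (hRich : Rich R c) {F : Finset (G ⊕ G)} {c' : ℕ}
    (hF : Rich (F : Set (G ⊕ G)) c') (hFR : (F : Set (G ⊕ G)) ⊆ R) (hg : ∀ g, cl g ∈ R → Good g)
    {k : ℕ} (hk : 3 ≤ k) (m r : ℕ) (hr : Fintype.card G ≤ 2 ^ (r + 1))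
    (hc : 2 * ((r + 1) * (F.card + 1) * (200 * k)) + F.card + (m * k + 3) * (9 * k) + 100000 * k ≤ c)
    (hc' : 3004 * (m * k) + 20000 + 4 * k ≤ c') :
    ∃ V C : Finset G, V ⊆ R₁ \ U ∧ C ⊆ R₂ \ U ∧ ∀ V' C' : Finset G, Disjoint V' V →
      Disjoint C' C → V'.card = m → C'.card = m → ∑ t ∈ C', t = 0 → 0 ∉ C' →
        IsRainbowCycleFactor k (V ∪ V') (C ∪ C') := by
  obtain ⟨W, fW, hW⟩ := exists_absorbing_multiset hRich hF hFR hg hk m _ r rfl hr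
    (by
      have : (m * (k - 1) + 3) * (9 * k) ≤ (m * k + 3) * (9 * k) := by gcongr; lia
      lia)
    (by
      have : m * (k - 1) ≤ m * k := by gcongr; lia
      lia)
  refine ⟨Finset.univ.filter fun v => vx v ∈ W, Finset.univ.filter fun g => cl g ∈ W, ?_, ?_, ?_⟩
  · intro v hv
    exact hR (fW.2 _ (Finset.mem_filter.1 hv).2).1
  · intro v hv
    exact hR (fW.2 _ (Finset.mem_filter.1 hv).2).1
  intro V' C' hV hC cV cC hs h0
  have hV' : ∀ v ∈ V', vx v ∉ W := fun v hv h => Finset.disjoint_left.1 hV hv (by simpa using h)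
  have hC' : ∀ v ∈ C', cl v ∉ W := fun v hv h => Finset.disjoint_left.1 hC hv (by simpa using h)
  refine (hW V' C' hV' hC' cV cC hs h0).isRainbowCycleFactor (by lia) ?_ ?_ ?_
  · rw [add_assoc, Multiset.nodup_add]
    refine ⟨fW.1, Multiset.nodup_add.2 ⟨V'.nodup.map Sum.inl_injective,
      C'.nodup.map Sum.inr_injective, ?_⟩, ?_⟩
    · rw [Multiset.disjoint_left]
      simp [vx, cl]
    · rw [Multiset.disjoint_right]
      intro e he
      rcases Multiset.mem_add.1 he with h | h <;> obtain ⟨v, hv, rfl⟩ := Multiset.mem_map.1 h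
      · exact hV' v hv
      · exact hC' v hv
  · intro v
    simp [vx, cl]
  · intro v
    simp [vx, cl]

end AbsorbingSet

section RandomSets

variable {α : Type} [Fintype α] [DecidableEq α]

theorem setProb_nonneg {p : ℝ} (h0 : 0 ≤ p) (h1 : p ≤ 1) (A : Finset α) : 0 ≤ setProb α p A :=
  mul_nonneg (pow_nonneg h0 _) (pow_nonneg (sub_nonneg.2 h1) _)

theorem sum_setProb_superset (p : ℝ) (A : Finset α) :
    ∑ W : Finset α, (if A ⊆ W then setProb α p W else 0) = p ^ A.card := by
  have h := Finset.prod_add (fun _ => p) (fun i => if i ∈ A then 0 else 1 - p)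
    (Finset.univ : Finset α)
  have h1 : ∏ i : α, (p + if i ∈ A then 0 else 1 - p) = p ^ A.card := by
    rw [← Finset.prod_const, ← Finset.prod_subset (Finset.subset_univ A)
      (f := fun i => p + if i ∈ A then 0 else 1 - p)]
    · exact Finset.prod_congr rfl fun i hi => by simp [hi]
    · intro i _ hi
      simp [hi]
  rw [← h1, h, Finset.powerset_univ]
  refine Finset.sum_congr rfl fun W _ => ?_
  rw [Finset.prod_const]
  split_ifs with hW
  · rw [Finset.prod_congr rfl fun i hi => if_neg fun h => (Finset.mem_sdiff.1 hi).2 (hW h),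
      Finset.prod_const, Finset.card_sdiff_of_subset (Finset.subset_univ W), Finset.card_univ,
      setProb]
  · obtain ⟨i, hi, hi'⟩ := Finset.not_subset.1 hW
    rw [Finset.prod_eq_zero (Finset.mem_sdiff.2 ⟨Finset.mem_univ i, hi'⟩) (by simp [hi]), mul_zero]

theorem sum_setProb (p : ℝ) : ∑ W : Finset α, setProb α p W = 1 := by
  simpa using sum_setProb_superset p (∅ : Finset α)

theorem sum_setProb_mul_card (p : ℝ) :
    ∑ W : Finset α, setProb α p W * W.card = Fintype.card α * p := by
  have h : ∀ W : Finset α, setProb α p W * W.card =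
      ∑ e : α, if {e} ⊆ W then setProb α p W else 0 := by
    intro W
    simp [Finset.sum_ite_mem, mul_comm]
  simp_rw [h]
  rw [Finset.sum_comm, Finset.sum_congr rfl fun e _ => sum_setProb_superset p {e}]
  simp

theorem sum_setProb_card_gt {p f : ℝ} (h0 : 0 ≤ p) (h1 : p ≤ 1) (hf : 0 < f) :
    ∑ W : Finset α, (if f < W.card then setProb α p W else 0) ≤ Fintype.card α * p / f := by
  rw [le_div_iff₀ hf, ← sum_setProb_mul_card, Finset.sum_mul]
  refine Finset.sum_le_sum fun W _ => ?_
  have := setProb_nonneg h0 h1 W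
  split_ifs with h
  · gcongr
  · rw [zero_mul]
    positivity

theorem sum_setProb_mul_prod {ι : Type*} (p : ℝ) (T : Finset ι) (B : ι → Finset α) (θ : ι → ℝ)
    (hB : (T : Set ι).PairwiseDisjoint B) :
    ∑ W : Finset α, setProb α p W * ∏ j ∈ T, (1 - if B j ⊆ W then θ j else 0) =
      ∏ j ∈ T, (1 - θ j * p ^ (B j).card) := by
  have key : ∀ f : ι → ℝ, ∏ j ∈ T, (1 - f j) = ∑ J ∈ T.powerset, (-1) ^ J.card * ∏ j ∈ J, f j := by
    intro f
    simp_rw [sub_eq_neg_add]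
    rw [Finset.prod_add]
    refine Finset.sum_congr rfl fun J _ => ?_
    rw [Finset.prod_neg, Finset.prod_const_one, mul_one]
  simp_rw [key, Finset.mul_sum]
  rw [Finset.sum_comm]
  refine Finset.sum_congr rfl fun J hJ => ?_
  have hJ := Finset.mem_powerset.1 hJ
  rw [Finset.prod_mul_distrib, Finset.prod_pow_eq_pow_sum, ← Finset.card_biUnion
    (fun i hi j hj h => hB (hJ hi) (hJ hj) h), ← sum_setProb_superset, Finset.mul_sum,
    Finset.mul_sum]
  refine Finset.sum_congr rfl fun W _ => ?_
  by_cases h : J.biUnion B ⊆ W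
  · rw [if_pos h, Finset.prod_congr rfl fun j hj =>
      if_pos ((Finset.subset_biUnion_of_mem B hj).trans h)]
    ring
  · rw [if_neg h]
    obtain ⟨j, hj, hj'⟩ : ∃ j ∈ J, ¬ B j ⊆ W := by
      by_contra! h'
      exact h (Finset.biUnion_subset.2 h')
    rw [Finset.prod_eq_zero hj (if_neg hj')]
    ring

/-- An exponential moment bound for the probability that few events occur. -/
theorem sum_few_le {Ω ι : Type*} [Fintype Ω] (μ : Ω → ℝ) (hμ : ∀ ω, 0 ≤ μ ω) (T : Finset ι)
    (ok : ι → Ω → Prop) [∀ j ω, Decidable (ok j ω)] (n : ℕ) :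
    ∑ ω, (if (T.filter fun j => ok j ω).card ≤ n then μ ω else 0) ≤
      2 ^ n * ∑ ω, μ ω * ∏ j ∈ T, (1 - if ok j ω then (1 / 2 : ℝ) else 0) := by
  rw [Finset.mul_sum]
  refine Finset.sum_le_sum fun ω _ => ?_
  have h : ∏ j ∈ T, (1 - if ok j ω then (1 / 2 : ℝ) else 0) =
      (1 / 2) ^ (T.filter fun j => ok j ω).card := by
    rw [← Finset.prod_const, Finset.prod_filter]
    refine Finset.prod_congr rfl fun j _ => ?_
    split_ifs <;> norm_num
  rw [h]
  split_ifs with hn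
  · calc μ ω = μ ω * 1 := (mul_one _).symm
      _ ≤ μ ω * (2 ^ n * (1 / 2) ^ (T.filter fun j => ok j ω).card) := by
        gcongr
        · exact hμ ω
        · rw [one_div, inv_pow, ← div_eq_mul_inv, one_le_div (by positivity)]
          exact pow_le_pow_right₀ (by norm_num) hn
      _ = _ := by ring
  · have := hμ ω
    positivity

theorem sum_setProb_few_le {ι : Type*} {p q : ℝ} (hp : 0 ≤ p) (hp1 : p ≤ 1) (hq : 0 ≤ q)
    (hq1 : q ≤ 1) (T : Finset ι) (B : ι → Finset α) (hB : (T : Set ι).PairwiseDisjoint B)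
    (hB' : ∀ j ∈ T, (B j).card ≤ 14) (n : ℕ) :
    ∑ x : Finset α × Finset α, (if (T.filter fun j => B j ⊆ x.1 ∩ x.2).card ≤ n then
      setProb α p x.1 * setProb α q x.2 else 0) ≤
      2 ^ n * Real.exp (- (T.card * ((p * q) ^ 14 / 2))) := by
  have h0 := sum_few_le (fun x : Finset α × Finset α => setProb α p x.1 * setProb α q x.2)
    (fun x => mul_nonneg (setProb_nonneg hp hp1 _) (setProb_nonneg hq hq1 _)) T
    (fun j x => B j ⊆ x.1 ∩ x.2) n
  refine h0.trans ?_
  gcongr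
  have h : ∀ x y : Finset α, setProb α p x * setProb α q y *
      ∏ j ∈ T, (1 - if B j ⊆ x ∩ y then (1 / 2 : ℝ) else 0) = setProb α p x *
      (setProb α q y * ∏ j ∈ T, (1 - if B j ⊆ y then (if B j ⊆ x then 1 / 2 else 0) else 0)) := by
    intro x y
    rw [mul_assoc, Finset.prod_congr rfl fun j _ => ?_]
    by_cases h1 : B j ⊆ x <;> by_cases h2 : B j ⊆ y <;> simp [Finset.subset_inter_iff, h1, h2]
  rw [Fintype.sum_prod_type]
  simp_rw [h, ← Finset.mul_sum]
  simp_rw [sum_setProb_mul_prod q T B _ hB, ite_mul, zero_mul]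
  rw [sum_setProb_mul_prod p T B _ hB]
  calc _ ≤ ∏ j ∈ T, Real.exp (- ((p * q) ^ 14 / 2)) := by
        refine Finset.prod_le_prod ?_ ?_
        · intro j _
          have h1 : p ^ (B j).card ≤ 1 := pow_le_one₀ hp hp1
          have h2 : q ^ (B j).card ≤ 1 := pow_le_one₀ hq hq1
          have h3 : 0 ≤ p ^ (B j).card := by positivity
          have h4 : 0 ≤ q ^ (B j).card := by positivity
          nlinarith
        · intro j hj
          have h1 : (p * q) ^ 14 ≤ (p * q) ^ (B j).card :=
            pow_le_pow_of_le_one (by positivity) (mul_le_one₀ hp1 hq hq1) (hB' j hj)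
          have h2 := Real.add_one_le_exp (- ((p * q) ^ 14 / 2))
          rw [mul_pow p q (B j).card] at h1
          linarith
    _ = _ := by
        rw [Finset.prod_const, ← Real.exp_nat_mul]
        congr 1
        ring

end RandomSets

section RandomRich

variable {G : Type} [AddCommGroup G] [Fintype G] {R : Finset (G ⊕ G)} {c : ℕ}

/-- The set of values at `x` of a list of forms. -/
noncomputable def values (l : List (Form G)) (x : G) : Finset (G ⊕ G) :=
  (l.map (Form.eval x)).toFinset

omit [Fintype G] in
theorem card_values_le (l : List (Form G)) (x : G) : (values l x).card ≤ l.length :=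
  (List.toFinset_card_le _).trans (by simp)

theorem exists_disjoint_values (l : List (Form G)) (hl : l.length ≤ 14) (Z : Finset G) :
    ∃ T ⊆ Z, (T : Set G).PairwiseDisjoint (values l) ∧ Z.card ≤ 197 * T.card := by
  obtain ⟨T, hT, hmax⟩ := Finset.exists_max_image
    (Z.powerset.filter fun T : Finset G => (T : Set G).PairwiseDisjoint (values l)) Finset.card
    ⟨∅, by simp⟩
  simp only [Finset.mem_filter, Finset.mem_powerset] at hT hmax
  refine ⟨T, hT.1, hT.2, ?_⟩
  set N : G → Finset G := fun y => insert y ((l.toFinset ×ˢ values l y).biUnion fun z =>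
    Finset.univ.filter fun x => z.1.eval x = z.2) with hN
  have hsub : Z ⊆ T.biUnion N := by
    intro x hx
    rw [Finset.mem_biUnion]
    by_cases hxT : x ∈ T
    · exact ⟨x, hxT, Finset.mem_insert_self _ _⟩
    · have h : ¬ ((insert x T : Finset G) : Set G).PairwiseDisjoint (values l) := by
        intro h
        have := hmax _ ⟨Finset.insert_subset hx hT.1, h⟩
        rw [Finset.card_insert_of_notMem hxT] at this
        omega
      rw [Finset.coe_insert, Set.pairwiseDisjoint_insert] at h
      push Not at h
      obtain ⟨y, hy, -, hxy⟩ := h hT.2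
      obtain ⟨e, he, he'⟩ := Finset.not_disjoint_iff.1 hxy
      obtain ⟨f, hf, rfl⟩ := List.mem_map.1 (List.mem_toFinset.1 he)
      refine ⟨y, hy, Finset.mem_insert_of_mem (Finset.mem_biUnion.2 ⟨(f, f.eval x), ?_, by simp⟩)⟩
      exact Finset.mem_product.2 ⟨List.mem_toFinset.2 hf, he'⟩
  refine (Finset.card_le_card hsub).trans ?_
  rw [mul_comm]
  refine Finset.card_biUnion_le_card_mul _ _ _ fun y _ => ?_
  refine (Finset.card_insert_le _ _).trans ?_
  have h1 := Finset.card_biUnion_le_card_mul (l.toFinset ×ˢ values l y)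
    (fun z => Finset.univ.filter fun x => z.1.eval x = z.2) 1 fun z _ =>
      Finset.card_le_one.2 fun a ha b hb => z.1.eval_injective
        ((Finset.mem_filter.1 ha).2.trans (Finset.mem_filter.1 hb).2.symm)
  have h2 : (l.toFinset ×ˢ values l y).card ≤ 14 * 14 := by
    rw [Finset.card_product]
    exact Nat.mul_le_mul ((List.toFinset_card_le l).trans hl) ((card_values_le l y).trans hl)
  omega

omit [Fintype G] in
theorem card_filter_values_le {S : Set (G ⊕ G)} {X : Multiset (G ⊕ G)} (l : List (Form G))
    (hX : Multiset.card X ≤ c) (h : ∀ x, ¬ Fresh S X (l.map (Form.eval x))) (T : Finset G)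
    (hT : ∀ x ∈ T, (l.map (Form.eval x)).Nodup) (hd : (T : Set G).PairwiseDisjoint (values l)) :
    (T.filter fun x => ((values l x : Finset _) : Set (G ⊕ G)) ⊆ S).card ≤ c := by
  have key : ∀ x ∈ T.filter fun x => ((values l x : Finset _) : Set (G ⊕ G)) ⊆ S,
      ∃ e ∈ values l x, e ∈ X := by
    intro x hx
    obtain ⟨hx, hS⟩ := Finset.mem_filter.1 hx
    by_contra! hn
    refine h x ⟨by simpa using hT x hx, fun e he => ?_⟩
    have he : e ∈ values l x := List.mem_toFinset.2 (by simpa using he)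
    exact ⟨hS he, hn e he⟩
  choose! e he heX using key
  refine le_trans ?_ ((Multiset.toFinset_card_le X).trans hX)
  refine Finset.card_le_card_of_injOn e (fun x hx => Multiset.mem_toFinset.2 (heX x hx)) ?_
  intro x hx y hy hxy
  by_contra hne
  exact Finset.disjoint_left.1 (hd (Finset.mem_filter.1 hx).1 (Finset.mem_filter.1 hy).1 hne)
    (he x hx) (hxy ▸ he y hy)

/-- The form with given signs, type and base point. -/
def formOf : Bool × Bool × G → Form G
  | (true, true, g) => .vp g
  | (true, false, g) => .vm g
  | (false, true, g) => .cp g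
  | (false, false, g) => .cm g

/-- An enumeration of the lists of at most `14` forms. -/
def formList (i : Fin 15 × (Fin 14 → Bool × Bool × G)) : List (Form G) :=
  (List.ofFn fun j => formOf (i.2 j)).take i.1

omit [AddCommGroup G] [Fintype G] in
theorem length_formList_le (i : Fin 15 × (Fin 14 → Bool × Bool × G)) :
    (formList i).length ≤ 14 := by
  simp [formList]

omit [Fintype G] in
theorem exists_formList (l : List (Form G)) (hl : l.length ≤ 14) : ∃ i, formList i = l := by
  have h : ∀ f : Form G, ∃ t, formOf t = f := by
    rintro (g | g | g | g)
    exacts [⟨(true, true, g), rfl⟩, ⟨(true, false, g), rfl⟩, ⟨(false, true, g), rfl⟩,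
      ⟨(false, false, g), rfl⟩]
  choose t ht using h
  refine ⟨(⟨l.length, by omega⟩, fun j => t (l.getD j (.vp 0))), ?_⟩
  refine List.ext_getElem (by simp [formList, hl]) fun j h1 h2 => ?_
  simp only [formList, ht, List.getElem_take, List.getElem_ofFn]
  exact List.getD_eq_getElem _ _ h2

omit [AddCommGroup G] in
theorem card_formList :
    (Finset.univ : Finset (Fin 15 × (Fin 14 → Bool × Bool × G))).card =
      15 * (4 * Fintype.card G) ^ 14 := by
  simp only [Finset.card_univ, Fintype.card_prod, Fintype.card_fin, Fintype.card_fun,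
    Fintype.card_bool]
  ring

theorem sum_not_rich_le {p q : ℝ} (hp : 0 ≤ p) (hp1 : p ≤ 1) (hq : 0 ≤ q) (hq1 : q ≤ 1) (c : ℕ) :
    ∑ x : Finset (G ⊕ G) × Finset (G ⊕ G), (if ¬ Rich ((x.1 ∩ x.2 : Finset _) : Set (G ⊕ G)) c then
      setProb (G ⊕ G) p x.1 * setProb (G ⊕ G) q x.2 else 0) ≤
    15 * (4 * Fintype.card G) ^ 14 *
      (2 ^ c * Real.exp (- (Fintype.card G / 788 * ((p * q) ^ 14 / 2)))) := by
  have hμ : ∀ x : Finset (G ⊕ G) × Finset (G ⊕ G),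
      0 ≤ setProb (G ⊕ G) p x.1 * setProb (G ⊕ G) q x.2 := fun x =>
    mul_nonneg (setProb_nonneg hp hp1 _) (setProb_nonneg hq hq1 _)
  set Z : List (Form G) → Finset G := fun l =>
    Finset.univ.filter fun x : G => (l.map (Form.eval x)).Nodup with hZ
  have hT : ∀ i : Fin 15 × (Fin 14 → Bool × Bool × G), ∃ T ⊆ Z (formList i),
      (T : Set G).PairwiseDisjoint (values (formList i)) ∧ (Z (formList i)).card ≤ 197 * T.card :=
    fun i => exists_disjoint_values _ (length_formList_le i) _
  choose T hTZ hTd hTc using hT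
  set few : Fin 15 × (Fin 14 → Bool × Bool × G) → Finset (G ⊕ G) × Finset (G ⊕ G) → Prop :=
    fun i x => ((T i).filter fun j => values (formList i) j ⊆ x.1 ∩ x.2).card ≤ c with hfew
  set I := Finset.univ.filter fun i : Fin 15 × (Fin 14 → Bool × Bool × G) =>
    Fintype.card G ≤ 4 * (Z (formList i)).card with hI
  have key : ∀ x : Finset (G ⊕ G) × Finset (G ⊕ G),
      (if ¬ Rich ((x.1 ∩ x.2 : Finset _) : Set (G ⊕ G)) c then
        setProb (G ⊕ G) p x.1 * setProb (G ⊕ G) q x.2 else 0) ≤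
      ∑ i ∈ I, if few i x then setProb (G ⊕ G) p x.1 * setProb (G ⊕ G) q x.2 else 0 := by
    intro x
    have hnn : ∀ i ∈ I, 0 ≤ if few i x then
        setProb (G ⊕ G) p x.1 * setProb (G ⊕ G) q x.2 else 0 := by
      intro i _
      split_ifs
      exacts [hμ x, le_rfl]
    by_cases h : Rich ((x.1 ∩ x.2 : Finset _) : Set (G ⊕ G)) c
    · rw [if_neg (not_not.2 h)]
      exact Finset.sum_nonneg hnn
    · rw [if_pos h]
      rw [Rich] at h
      push Not at h
      obtain ⟨l, hl, hl', X, hX, hf⟩ := h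
      obtain ⟨i, rfl⟩ := exists_formList l hl
      refine le_trans ?_ (Finset.single_le_sum hnn (Finset.mem_filter.2 ⟨Finset.mem_univ i, hl'⟩))
      rw [if_pos]
      have := card_filter_values_le _ hX hf (T i)
        (fun x hx => (Finset.mem_filter.1 (hTZ i hx)).2) (hTd i)
      simpa only [hfew, Finset.coe_subset] using this
  refine (Finset.sum_le_sum fun x _ => key x).trans ?_
  rw [Finset.sum_comm]
  have hbound : ∀ i ∈ I, ∑ x, (if few i x then
      setProb (G ⊕ G) p x.1 * setProb (G ⊕ G) q x.2 else 0) ≤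
      2 ^ c * Real.exp (- (Fintype.card G / 788 * ((p * q) ^ 14 / 2))) := by
    intro i hi
    have h0 := sum_setProb_few_le hp hp1 hq hq1 (T i) (values (formList i)) (hTd i)
      (fun j _ => (card_values_le _ _).trans (length_formList_le i)) c
    refine le_trans (le_of_eq (Finset.sum_congr rfl fun x _ => by congr)) (h0.trans ?_)
    have h1 : (Fintype.card G : ℝ) ≤ 788 * (T i).card := by
      have h1 := (Finset.mem_filter.1 hi).2
      have h2 := hTc i
      exact_mod_cast (by omega : Fintype.card G ≤ 788 * (T i).card)
    gcongr
    linarith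
  refine (Finset.sum_le_card_nsmul I _ _ hbound).trans ?_
  rw [nsmul_eq_mul]
  have h2 : (I.card : ℝ) ≤ 15 * (4 * Fintype.card G) ^ 14 := by
    have := (Finset.card_filter_le Finset.univ fun i : Fin 15 × (Fin 14 → Bool × Bool × G) =>
      Fintype.card G ≤ 4 * (Z (formList i)).card).trans card_formList.le
    exact_mod_cast this
  gcongr

end RandomRich

section RandomRich

variable {G : Type} [AddCommGroup G] [Fintype G]

theorem sum_not_rich_le_of_single {p : ℝ} (hp : 0 ≤ p) (hp1 : p ≤ 1) (c : ℕ) :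
    ∑ x : Finset (G ⊕ G), (if ¬ Rich (x : Set (G ⊕ G)) c then setProb (G ⊕ G) p x else 0) ≤
    15 * (4 * Fintype.card G) ^ 14 *
      (2 ^ c * Real.exp (- (Fintype.card G / 788 * (p ^ 14 / 2)))) := by
  have h := sum_not_rich_le (G := G) hp hp1 zero_le_one le_rfl c
  rw [mul_one, Fintype.sum_prod_type] at h
  refine le_trans (Finset.sum_le_sum fun x _ => ?_) h
  refine le_trans ?_ (Finset.single_le_sum (fun y _ => ?_) (Finset.mem_univ Finset.univ))
  · simp [setProb]
  · have h1 := setProb_nonneg hp hp1 x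
    have h2 := setProb_nonneg zero_le_one le_rfl y
    split_ifs
    exacts [le_rfl, mul_nonneg h1 h2]

/-- `R` is rich, and contains a rich set of size at most `f`. -/
def Adequate (R : Finset (G ⊕ G)) (c₁ c₂ : ℕ) (f : ℝ) : Prop :=
  Rich (R : Set (G ⊕ G)) c₁ ∧
    ∃ Q : Finset (G ⊕ G), (Q.card : ℝ) ≤ f ∧ Rich ((R ∩ Q : Finset _) : Set (G ⊕ G)) c₂

theorem sum_not_adequate_le {p q f : ℝ} (hp : 0 ≤ p) (hp1 : p ≤ 1) (hq : 0 ≤ q) (hq1 : q ≤ 1)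
    (hf : 0 < f) (c₁ c₂ : ℕ) :
    ∑ R : Finset (G ⊕ G), (if ¬ Adequate R c₁ c₂ f then setProb (G ⊕ G) p R else 0) ≤
    15 * (4 * Fintype.card G) ^ 14 *
      (2 ^ c₁ * Real.exp (- (Fintype.card G / 788 * (p ^ 14 / 2)))) +
    (2 * Fintype.card G * q / f +
    15 * (4 * Fintype.card G) ^ 14 *
      (2 ^ c₂ * Real.exp (- (Fintype.card G / 788 * ((p * q) ^ 14 / 2))))) := by
  have h1 := sum_not_rich_le_of_single (G := G) hp hp1 c₁
  have h2 := sum_not_rich_le (G := G) hp hp1 hq hq1 c₂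
  have h3 : ∑ R : Finset (G ⊕ G), setProb (G ⊕ G) p R *
      ∑ Q : Finset (G ⊕ G), (if f < Q.card then setProb (G ⊕ G) q Q else 0) ≤
      2 * Fintype.card G * q / f := by
    rw [← Finset.sum_mul, sum_setProb, one_mul]
    refine (sum_setProb_card_gt hq hq1 hf).trans (le_of_eq ?_)
    rw [Fintype.card_sum]
    push_cast
    ring
  rw [Fintype.sum_prod_type] at h2
  refine le_trans ?_ (add_le_add h1 (add_le_add h3 h2))
  rw [← Finset.sum_add_distrib, ← Finset.sum_add_distrib]
  refine Finset.sum_le_sum fun R _ => ?_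
  have hR := setProb_nonneg hp hp1 R
  have hQ : ∀ Q : Finset (G ⊕ G), 0 ≤ setProb (G ⊕ G) q Q := setProb_nonneg hq hq1
  have e1 : 0 ≤ if ¬ Rich (R : Set (G ⊕ G)) c₁ then setProb (G ⊕ G) p R else 0 := by
    split_ifs
    exacts [le_rfl, hR]
  have e2 : 0 ≤ ∑ Q : Finset (G ⊕ G), (if f < Q.card then setProb (G ⊕ G) q Q else 0) :=
    Finset.sum_nonneg fun Q _ => by
      split_ifs
      exacts [hQ Q, le_rfl]
  have e3 : 0 ≤ ∑ Q : Finset (G ⊕ G), (if ¬ Rich ((R ∩ Q : Finset _) : Set (G ⊕ G)) c₂ then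
      setProb (G ⊕ G) p R * setProb (G ⊕ G) q Q else 0) :=
    Finset.sum_nonneg fun Q _ => by
      split_ifs
      exacts [le_rfl, mul_nonneg hR (hQ Q)]
  have e4 := mul_nonneg hR e2
  by_cases hA : Adequate R c₁ c₂ f
  · rw [if_neg (not_not.2 hA)]
    positivity
  rw [if_pos hA]
  by_cases hr : Rich (R : Set (G ⊕ G)) c₁
  swap
  · rw [if_pos hr]
    linarith
  have h5 : ∀ Q : Finset (G ⊕ G), setProb (G ⊕ G) p R * setProb (G ⊕ G) q Q ≤
      setProb (G ⊕ G) p R * (if f < Q.card then setProb (G ⊕ G) q Q else 0) +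
      (if ¬ Rich ((R ∩ Q : Finset _) : Set (G ⊕ G)) c₂ then
        setProb (G ⊕ G) p R * setProb (G ⊕ G) q Q else 0) := by
    intro Q
    have := mul_nonneg hR (hQ Q)
    by_cases h6 : f < Q.card
    · rw [if_pos h6]
      split_ifs <;> linarith
    · have h7 : ¬ Rich ((R ∩ Q : Finset _) : Set (G ⊕ G)) c₂ := fun h7 =>
        hA ⟨hr, Q, not_lt.1 h6, h7⟩
      rw [if_pos h7, if_neg h6, mul_zero, zero_add]
  have h6 := Finset.sum_le_sum fun Q (_ : Q ∈ Finset.univ) => h5 Q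
  rw [Finset.sum_add_distrib, ← Finset.mul_sum, ← Finset.mul_sum, sum_setProb, mul_one] at h6
  linarith

omit [AddCommGroup G] in
theorem setProb_disjSum (p : ℝ) (A B : Finset G) :
    setProb (G ⊕ G) p (A.disjSum B) = setProb G p A * setProb G p B := by
  have h1 := A.card_le_univ
  have h2 := B.card_le_univ
  rw [setProb, setProb, setProb, Finset.card_disjSum, Fintype.card_sum,
    show Fintype.card G + Fintype.card G - (A.card + B.card) =
      (Fintype.card G - A.card) + (Fintype.card G - B.card) by omega, pow_add, pow_add]
  ring

omit [AddCommGroup G] in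
theorem one_sub_le_sum {p δ : ℝ} (hp : 0 ≤ p) (hp1 : p ≤ 1) (P : Finset (G ⊕ G) → Prop)
    (h : ∑ R : Finset (G ⊕ G), (if ¬ P R then setProb (G ⊕ G) p R else 0) ≤ δ)
    (Q : Finset G → Finset G → Prop) [∀ A B, Decidable (Q A B)]
    (hPQ : ∀ A B : Finset G, P (A.disjSum B) → Q A B) :
    1 - δ ≤ ∑ A : Finset G, ∑ B : Finset G, if Q A B then setProb G p A * setProb G p B else 0 := by
  have h1 : ∑ A : Finset G, ∑ B : Finset G,
      (if ¬ P (A.disjSum B) then setProb G p A * setProb G p B else 0) ≤ δ := by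
    refine le_trans (le_of_eq ?_) h
    rw [← Finset.sumEquiv.symm.toEquiv.sum_comp, Fintype.sum_prod_type]
    refine Finset.sum_congr rfl fun A _ => Finset.sum_congr rfl fun B _ => ?_
    simp [setProb_disjSum]
  have h2 : ∑ A : Finset G, ∑ B : Finset G, setProb G p A * setProb G p B = 1 := by
    simp_rw [← Finset.mul_sum, sum_setProb, mul_one]
    exact sum_setProb p
  rw [sub_le_iff_le_add]
  refine le_trans ?_ (add_le_add_right h1 _)
  rw [← h2, ← Finset.sum_add_distrib]
  refine Finset.sum_le_sum fun A _ => ?_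
  rw [← Finset.sum_add_distrib]
  refine Finset.sum_le_sum fun B _ => ?_
  have := mul_nonneg (setProb_nonneg hp hp1 A) (setProb_nonneg hp hp1 B)
  by_cases h3 : P (A.disjSum B)
  · rw [if_pos (hPQ A B h3), if_neg (not_not.2 h3), add_zero]
  · rw [if_pos h3]
    split_ifs <;> linarith

theorem Rich.sdiff {R : Set (G ⊕ G)} {c d : ℕ} (hR : Rich R (c + d)) (D : Finset (G ⊕ G))
    (hD : D.card ≤ d) : Rich (R \ D) c := by
  intro l hl hl' X hX
  obtain ⟨x, hx, hx'⟩ := hR l hl hl' (X + D.val) (by rw [Multiset.card_add]; exact add_le_add hX hD)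
  refine ⟨x, hx, fun e he => ?_⟩
  obtain ⟨h1, h2⟩ := hx' e he
  rw [Multiset.mem_add, not_or] at h2
  exact ⟨⟨h1, h2.2⟩, h2.1⟩

theorem Rich.mono_right {R : Set (G ⊕ G)} {c d : ℕ} (hR : Rich R d) (h : c ≤ d) : Rich R c :=
  fun l hl hl' X hX => hR l hl hl' X (hX.trans h)

theorem Adequate.exists_absorbing_set {R₁ R₂ : Finset G} {c₁ c₂ : ℕ} {f : ℝ}
    (hR : Adequate (R₁.disjSum R₂) c₁ c₂ f) (U : Finset G) {k : ℕ} (hk : 3 ≤ k) (m r : ℕ)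
    (hr : Fintype.card G ≤ 2 ^ (r + 1))
    (h₁ : 2 * ((r + 1) * (⌊f⌋₊ + 1) * (200 * k)) + ⌊f⌋₊ + (m * k + 3) * (9 * k) + 100000 * k +
      (2 * U.card + 401) ≤ c₁)
    (h₂ : 3004 * (m * k) + 20000 + 4 * k + (2 * U.card + 401) ≤ c₂) :
    ∃ V C : Finset G, V ⊆ R₁ \ U ∧ C ⊆ R₂ \ U ∧
      ∀ V' C' : Finset G, Disjoint V' V → Disjoint C' C → V'.card = m → C'.card = m →
        (∑ c ∈ C', c) = 0 → (0 : G) ∉ C' → IsRainbowCycleFactor k (V ∪ V') (C ∪ C') := by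
  obtain ⟨hR1, Q, hQ, hR2⟩ := hR
  set D : Finset (G ⊕ G) := U.disjSum (U ∪ Finset.univ.filter fun d : G => ¬ Good d) with hD
  have hDc : D.card ≤ 2 * U.card + 401 := by
    have h1 := Finset.card_union_le U (Finset.univ.filter fun d : G => ¬ Good d)
    have h2 := card_filter_not_good (G := G)
    rw [hD, Finset.card_disjSum]
    omega
  have hF : ((R₁.disjSum R₂ ∩ Q) \ D).card ≤ ⌊f⌋₊ :=
    (Finset.card_le_card (Finset.sdiff_subset.trans Finset.inter_subset_right)).trans
      (Nat.le_floor hQ)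
  have hR1' := (hR1.mono_right h₁).sdiff D hDc
  have hR2' := (hR2.mono_right h₂).sdiff D hDc
  rw [← Finset.coe_sdiff] at hR2'
  refine ZeroSumAbsorption.exists_absorbing_set ?_ hR1' hR2' ?_ ?_ hk m r hr ?_ le_rfl
  · rintro (e | e) ⟨he, he'⟩
    · simp_all
    · simp_all
  · rw [Finset.coe_sdiff]
    exact Set.sdiff_subset_sdiff_left (Finset.coe_subset.2 Finset.inter_subset_left)
  · rintro g ⟨-, hg⟩
    by_contra h
    exact hg (by simp [hD, cl, h])
  · gcongr

end RandomRich

section Parameters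

open Real Filter

theorem size_bounds {n p s ℓ k m δ y u r : ℝ} (hn : 0 < n) (hp1 : p ≤ 1) (hs : 0 < s)
    (hk : 1 ≤ k) (hℓ : 1 ≤ ℓ) (hδ : 0 < δ) (hsp : s * (k * ℓ) = p) (hkℓ : k ≤ ℓ ^ 10)
    (hm : m ≤ s ^ 300 * n) (hy : y ≤ s ^ 224 * n) (hℓy : ℓ ^ 11 ≤ y / 10 ^ 10)
    (hu : u ≤ y / 10 ^ 10) (h1 : 10 ^ 10 ≤ ℓ) (h2 : 10 ^ 10 ≤ δ * ℓ) (hr : r + 1 ≤ 3 * ℓ) :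
    2 * ((r + 1) * (6 * n * s ^ 15 / δ + 1) * (200 * k)) + 6 * n * s ^ 15 / δ +
      (m * k + 3) * (9 * k) + 100000 * k + (2 * u + 401) ≤ p ^ 14 * n / 4000 ∧
    3004 * (m * k) + 20000 + 4 * k + (2 * u + 401) ≤ (p * s ^ 15) ^ 14 * n / 4000 := by
  have hk0 : 0 < k := by linarith
  have hℓ0 : 0 < ℓ := by linarith
  have hkℓ1 : 1 ≤ k * ℓ := one_le_mul_of_one_le_of_one_le hk hℓ
  have hsp' : s ≤ p := by nlinarith
  have hs1 : s ≤ 1 := hsp'.trans hp1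
  have hp0 : 0 < p := hs.trans_le hsp'
  have hsℓ : s * ℓ ≤ p := by
    rw [← hsp, ← mul_assoc, mul_right_comm]
    exact le_mul_of_one_le_right (by positivity) hk
  set A := s ^ 224 * n with hA
  set B := p ^ 14 * n with hB
  have hA0 : 0 < A := by positivity
  have hB0 : 0 < B := by positivity
  have hAP : A ≤ (p * s ^ 15) ^ 14 * n := by
    rw [hA]
    gcongr
    calc s ^ 224 = (s * s ^ 15) ^ 14 := by ring
      _ ≤ _ := by gcongr
  have hAB : A ≤ B := by
    refine hAP.trans ?_
    rw [hB]
    gcongr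
    exact mul_le_of_le_one_right hp0.le (pow_le_one₀ hs.le hs1)
  have hkℓ' : k * ℓ ≤ A / 10 ^ 10 := by
    calc k * ℓ ≤ ℓ ^ 10 * ℓ := by gcongr
      _ = ℓ ^ 11 := by ring
      _ ≤ y / 10 ^ 10 := hℓy
      _ ≤ _ := by gcongr
  have hkA : k ≤ A / 10 ^ 10 := le_trans (by nlinarith) hkℓ'
  have hone : 1 ≤ A / 10 ^ 10 := hkℓ1.trans hkℓ'
  have huA : u ≤ A / 10 ^ 10 := hu.trans (by gcongr)
  have hks : s * k ≤ 1 / ℓ := by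
    rw [le_div_iff₀ hℓ0]
    linarith
  have hℓinv : 1 / ℓ ≤ 1 / 10 ^ 10 := by gcongr
  have hmk : m * k ≤ A / 10 ^ 10 := by
    calc m * k ≤ s ^ 300 * n * k := by gcongr
      _ = (s * k) * s ^ 75 * (s ^ 224 * n) := by ring
      _ ≤ (1 / 10 ^ 10) * 1 * (s ^ 224 * n) := by
        gcongr
        · exact hks.trans hℓinv
        · exact pow_le_one₀ hs.le hs1
      _ = _ := by rw [hA]; ring
  have hmkk : m * k * k ≤ B / 10 ^ 10 := by
    calc m * k * k ≤ s ^ 300 * n * k * k := by gcongr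
      _ = (s * k) * (s * k) * s ^ 284 * (s ^ 14 * n) := by ring
      _ ≤ (1 / 10 ^ 10) * 1 * 1 * (p ^ 14 * n) := by
        gcongr
        · exact hks.trans hℓinv
        · exact (hks.trans hℓinv).trans (by norm_num)
        · exact pow_le_one₀ hs.le hs1
      _ = _ := by rw [hB]; ring
  have hf : k * ℓ * (6 * n * s ^ 15 / δ) ≤ 6 * (B / 10 ^ 10) := by
    have h3 : s ^ 14 * ℓ ≤ p ^ 14 := by
      calc s ^ 14 * ℓ ≤ s ^ 14 * ℓ ^ 14 := by
            gcongr
            exact le_self_pow₀ hℓ (by norm_num)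
        _ = (s * ℓ) ^ 14 := by ring
        _ ≤ _ := by gcongr
    have h4 : k * ℓ * (6 * n * s ^ 15 / δ) = 6 * (p * (s ^ 14 * ℓ) * n / (δ * ℓ)) := by
      rw [← hsp]
      field_simp
    rw [h4]
    gcongr
    rw [hB]
    gcongr
    calc p * (s ^ 14 * ℓ) ≤ 1 * p ^ 14 := by gcongr
      _ = _ := one_mul _
  have hf0 : 0 ≤ 6 * n * s ^ 15 / δ := by positivity
  have hf1 : 6 * n * s ^ 15 / δ ≤ 6 * (B / 10 ^ 10) := le_trans (by nlinarith) hf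
  generalize 6 * n * s ^ 15 / δ = f at *
  have hrf : (r + 1) * (f + 1) * (200 * k) ≤ 3 * ℓ * (f + 1) * (200 * k) := by gcongr
  constructor
  · nlinarith
  · have : A / 4000 ≤ (p * s ^ 15) ^ 14 * n / 4000 := by gcongr
    linarith

theorem tail_bound {n P δ y : ℝ} {c : ℕ} (hn : 0 < n) (hy : y ≤ P * n)
    (hc : (c : ℝ) ≤ P * n / 4000) (h : 15 * (4 * n) ^ 14 * exp (- (y / 4000)) ≤ δ) :
    15 * (4 * n) ^ 14 * (2 ^ c * exp (- (n / 788 * (P / 2)))) ≤ δ := by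
  refine le_trans ?_ h
  gcongr
  calc 2 ^ c * exp (- (n / 788 * (P / 2))) ≤ exp 1 ^ c * exp (- (n / 788 * (P / 2))) := by
        gcongr
        have := add_one_le_exp 1
        linarith
    _ = exp (c - n / 788 * (P / 2)) := by
        rw [← exp_nat_mul, ← exp_add]
        congr 1
        ring
    _ ≤ _ := by
        gcongr
        have : 0 ≤ P * n := by
          have := Nat.cast_nonneg (α := ℝ) c
          linarith
        linarith

theorem eventually_large {ε δ : ℝ} (hε : 0 < ε) (hδ : 0 < δ) : ∀ᶠ n : ℕ in atTop,
    1 ≤ n ∧ log n ^ 11 ≤ (n : ℝ) ^ ε ∧ log n ^ 11 ≤ (n : ℝ) ^ (9 / 10 : ℝ) / 10 ^ 10 ∧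
    (n : ℝ) ^ (4 / 5 : ℝ) ≤ (n : ℝ) ^ (9 / 10 : ℝ) / 10 ^ 10 ∧ 10 ^ 10 ≤ log n ∧
    10 ^ 10 ≤ δ * log n ∧
    15 * (4 * (n : ℝ)) ^ 14 * exp (- ((n : ℝ) ^ (9 / 10 : ℝ) / 4000)) ≤ δ := by
  have hlog : ∀ c b : ℝ, 0 < c → 0 < b → ∀ᶠ x : ℝ in atTop, log x ^ 11 ≤ c * x ^ b := by
    intro c b hc hb
    have h := (isLittleO_log_rpow_rpow_atTop 11 hb).bound hc
    filter_upwards [h, eventually_ge_atTop 1] with x hx hx1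
    have hx2 : 0 ≤ log x ^ (11 : ℝ) := rpow_nonneg (log_nonneg hx1) _
    rw [norm_of_nonneg hx2, norm_of_nonneg (by positivity)] at hx
    exact_mod_cast hx
  have hpow : ∀ᶠ x : ℝ in atTop, x ^ (4 / 5 : ℝ) ≤ x ^ (9 / 10 : ℝ) / 10 ^ 10 := by
    filter_upwards [(tendsto_rpow_atTop (show (0 : ℝ) < 1 / 10 by norm_num)).eventually_ge_atTop
      (10 ^ 10), eventually_gt_atTop 0] with x hx hx0
    rw [show (9 / 10 : ℝ) = 4 / 5 + 1 / 10 by norm_num, rpow_add hx0, le_div_iff₀ (by norm_num)]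
    gcongr
  have hexp : ∀ᶠ x : ℝ in atTop,
      15 * (4 * x) ^ 14 * exp (- (x ^ (9 / 10 : ℝ) / 4000)) ≤ δ := by
    have h := (isLittleO_pow_exp_pos_mul_atTop (k := 16)
      (show (0 : ℝ) < 1 / 4000 by norm_num)).bound
      (show 0 < δ / (15 * 4 ^ 14) by positivity)
    filter_upwards [(tendsto_rpow_atTop (show (0 : ℝ) < 9 / 10 by norm_num)).eventually h,
      eventually_ge_atTop 1] with x hx hx1
    rw [norm_of_nonneg (by positivity), norm_of_nonneg (by positivity), ← rpow_natCast,
      ← rpow_mul (by positivity)] at hx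
    have h1 : x ^ 14 ≤ x ^ (9 / 10 * (16 : ℕ) : ℝ) := by
      rw [← rpow_natCast]
      exact rpow_le_rpow_of_exponent_le hx1 (by norm_num)
    rw [exp_neg, ← div_eq_mul_inv, div_le_iff₀ (exp_pos _), mul_pow]
    have h2 := h1.trans hx
    rw [div_mul_eq_mul_div, le_div_iff₀ (by positivity)] at h2
    calc 15 * (4 ^ 14 * x ^ 14) = x ^ 14 * (15 * 4 ^ 14) := by ring
      _ ≤ _ := h2
      _ = _ := by
        congr 2
        ring
  have h : ∀ᶠ x : ℝ in atTop,
      1 ≤ x ∧ log x ^ 11 ≤ x ^ ε ∧ log x ^ 11 ≤ x ^ (9 / 10 : ℝ) / 10 ^ 10 ∧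
      x ^ (4 / 5 : ℝ) ≤ x ^ (9 / 10 : ℝ) / 10 ^ 10 ∧ 10 ^ 10 ≤ log x ∧
      10 ^ 10 ≤ δ * log x ∧ 15 * (4 * x) ^ 14 * exp (- (x ^ (9 / 10 : ℝ) / 4000)) ≤ δ := by
    filter_upwards [eventually_ge_atTop 1, hlog 1 ε one_pos hε,
      hlog (1 / 10 ^ 10) (9 / 10) (by norm_num) (by norm_num), hpow,
      tendsto_log_atTop.eventually_ge_atTop (10 ^ 10),
      (tendsto_log_atTop.const_mul_atTop hδ).eventually_ge_atTop (10 ^ 10), hexp]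
      with x a1 a2 a3 a4 a5 a6 a7
    exact ⟨a1, by linarith, by linarith, a4, a5, a6, a7⟩
  filter_upwards [tendsto_natCast_atTop_atTop.eventually h] with n hn
  exact_mod_cast hn

end Parameters

section Parameters

open Real Filter

theorem scale_bounds {n p k ℓ ε : ℝ} (hn : 1 ≤ n) (hk : 1 ≤ k) (hℓ : 1 ≤ ℓ) (hkℓ : k ≤ ℓ ^ 10)
    (hℓε : ℓ ^ 11 ≤ n ^ ε) (hε : 448 * ε ≤ 1 / 10) (hp : n ^ (-ε) ≤ p) :
    0 < p / (k * ℓ) ∧ p / (k * ℓ) ≤ p ∧ n ^ (9 / 10 : ℝ) ≤ (p / (k * ℓ)) ^ 224 * n := by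
  have hn0 : 0 < n := by linarith
  have hp0 : 0 < p := (rpow_pos_of_pos hn0 _).trans_le hp
  have hkℓ0 : 0 < k * ℓ := by positivity
  have hs : n ^ (-(2 * ε)) ≤ p / (k * ℓ) := by
    rw [le_div_iff₀ hkℓ0]
    calc n ^ (-(2 * ε)) * (k * ℓ) ≤ n ^ (-(2 * ε)) * n ^ ε := by
          gcongr
          calc k * ℓ ≤ ℓ ^ 10 * ℓ := by gcongr
            _ = ℓ ^ 11 := by ring
            _ ≤ _ := hℓε
      _ = n ^ (-ε) := by
          rw [← rpow_add hn0]
          ring_nf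
      _ ≤ p := hp
  refine ⟨by positivity, div_le_self hp0.le (one_le_mul_of_one_le_of_one_le hk hℓ), ?_⟩
  calc n ^ (9 / 10 : ℝ) ≤ n ^ (-(2 * ε) * (224 : ℕ) + 1 : ℝ) :=
        rpow_le_rpow_of_exponent_le hn (by push_cast; linarith)
    _ = (n ^ (-(2 * ε))) ^ 224 * n := by
        rw [rpow_add hn0, rpow_one, rpow_mul hn0.le, rpow_natCast]
    _ ≤ _ := by gcongr

theorem natLog_add_one_le {n : ℕ} (hn : n ≠ 0) (h : 10 ≤ log n) :
    ((Nat.log 2 n : ℕ) : ℝ) + 1 ≤ 3 * log n := by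
  have h1 : ((2 ^ Nat.log 2 n : ℕ) : ℝ) ≤ n := Nat.cast_le.2 (Nat.pow_log_le_self 2 hn)
  have h2 := log_le_log (by positivity) h1
  rw [Nat.cast_pow, log_pow] at h2
  have h3 := log_two_gt_d9
  have h4 : (0 : ℝ) ≤ (Nat.log 2 n : ℕ) := Nat.cast_nonneg _
  push_cast at h2
  nlinarith

end Parameters

theorem one_sub_le_sum_absorbing {G : Type} [AddCommGroup G] [Fintype G] {k m : ℕ}
    {n p s y ℓ δ u : ℝ} (hn : (Fintype.card G : ℝ) = n) (hn0 : 0 < n) (hℓ : ℓ = Real.log n)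
    (hk : 3 ≤ k) (hkℓ : (k : ℝ) ≤ ℓ ^ 10) (hp1 : p ≤ 1) (hδ : 0 < δ) (hs0 : 0 < s) (hsp' : s ≤ p)
    (hsp : s * (k * ℓ) = p) (hm : m ≤ s ^ 300 * n) (hy : y ≤ s ^ 224 * n)
    (hℓy : ℓ ^ 11 ≤ y / 10 ^ 10) (hu : u ≤ y / 10 ^ 10) (hl : 10 ^ 10 ≤ ℓ)
    (hlδ : 10 ^ 10 ≤ δ * ℓ) (hexp : 15 * (4 * n) ^ 14 * Real.exp (- (y / 4000)) ≤ δ / 3) :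
    1 - δ ≤ ∑ R₁ : Finset G, ∑ R₂ : Finset G,
      (if (∀ U : Finset G, (U.card : ℝ) ≤ u →
        ∃ V C : Finset G, V ⊆ R₁ \ U ∧ C ⊆ R₂ \ U ∧
          ∀ V' C' : Finset G, Disjoint V' V → Disjoint C' C →
            V'.card = m → C'.card = m →
            (∑ c ∈ C', c) = 0 → (0 : G) ∉ C' →
            IsRainbowCycleFactor k (V ∪ V') (C ∪ C'))
      then setProb G p R₁ * setProb G p R₂ else 0) := by
  have hℓ1 : 1 ≤ ℓ := le_trans (by norm_num) hl
  have hk1 : (1 : ℝ) ≤ k := by exact_mod_cast (by omega : 1 ≤ k)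
  have hp0 : 0 < p := hs0.trans_le hsp'
  have hq1 : s ^ 15 ≤ 1 := pow_le_one₀ hs0.le (hsp'.trans hp1)
  have hy₂ : y ≤ (p * s ^ 15) ^ 14 * n := by
    refine hy.trans ?_
    gcongr
    calc s ^ 224 = (s * s ^ 15) ^ 14 := by ring
      _ ≤ _ := by gcongr
  have hy₁ : y ≤ p ^ 14 * n := by
    refine hy₂.trans ?_
    gcongr
    exact mul_le_of_le_one_right hp0.le hq1
  have hf0 : 0 < 6 * n * s ^ 15 / δ := by positivity
  have hr : ((Nat.log 2 (Fintype.card G) : ℕ) : ℝ) + 1 ≤ 3 * ℓ := by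
    have := natLog_add_one_le (Fintype.card_ne_zero (α := G))
    rw [hn, ← hℓ] at this
    exact this (le_trans (by norm_num) hl)
  refine one_sub_le_sum hp0.le hp1 (fun R => Adequate R ⌊p ^ 14 * n / 4000⌋₊
    ⌊(p * s ^ 15) ^ 14 * n / 4000⌋₊ (6 * n * s ^ 15 / δ)) ?_ _ ?_
  · refine (sum_not_adequate_le hp0.le hp1 (pow_nonneg hs0.le 15) hq1 hf0 _ _).trans ?_
    have t1 := tail_bound hn0 hy₁ (Nat.floor_le (by positivity)) hexp
    have t2 := tail_bound hn0 hy₂ (Nat.floor_le (by positivity)) hexp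
    have t3 : 2 * n * s ^ 15 / (6 * n * s ^ 15 / δ) = δ / 3 := by
      field_simp
      norm_num
    rw [hn]
    linarith
  · intro R₁ R₂ hR U hU
    obtain ⟨b1, b2⟩ := size_bounds hn0 hp1 hs0 hk1 hℓ1 hδ hsp hkℓ hm hy hℓy (hU.trans hu) hl hlδ hr
    refine hR.exists_absorbing_set U hk m (Nat.log 2 (Fintype.card G))
      (Nat.lt_pow_succ_log_self (by norm_num) _).le (Nat.le_floor ?_) (Nat.le_floor ?_)
    · refine le_trans ?_ b1
      have := Nat.floor_le hf0.le
      push_cast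
      gcongr
    · refine le_trans (le_of_eq ?_) b2
      push_cast
      rfl

end ZeroSumAbsorption

/-- Zero-sum absorption lemma. -/
theorem zero_sum_absorption :
    ∃ ε K : ℝ, 0 < ε ∧ 1 ≤ K ∧ ε * K ≤ 1 / 10 ^ 10 ∧
    ∀ δ : ℝ, 0 < δ → ∃ N : ℕ,
      ∀ (G : Type) [AddCommGroup G] [Fintype G] [DecidableEq G], ∀ (k m : ℕ) (p : ℝ),
      N ≤ Fintype.card G →
      3 ≤ k → (k : ℝ) ≤ (Real.log (Fintype.card G)) ^ 10 →
      (Fintype.card G : ℝ) ^ (-ε) ≤ p → p ≤ 1 →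
      0 < m → k ∣ m →
      (m : ℝ) ≤ (p / (k * Real.log (Fintype.card G))) ^ K * Fintype.card G →
      1 - δ ≤ ∑ R₁ : Finset G, ∑ R₂ : Finset G,
        (if (∀ U : Finset G,
              ((U.card : ℝ) ≤ (Fintype.card G : ℝ) ^ ((4 : ℝ) / 5)) →
              ∃ V C : Finset G, V ⊆ R₁ \ U ∧ C ⊆ R₂ \ U ∧
                ∀ V' C' : Finset G, Disjoint V' V → Disjoint C' C →
                  V'.card = m → C'.card = m →
                  (∑ c ∈ C', c) = 0 → (0 : G) ∉ C' →
                  IsRainbowCycleFactor k (V ∪ V') (C ∪ C'))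
        then setProb G p R₁ * setProb G p R₂ else 0) := by
  refine ⟨1 / 10 ^ 10 / 300, 300, by norm_num, by norm_num, by norm_num, fun δ hδ => ?_⟩
  obtain ⟨N, hN⟩ := Filter.eventually_atTop.1 (ZeroSumAbsorption.eventually_large
    (ε := 1 / 10 ^ 10 / 300) (by norm_num) (show 0 < δ / 3 by positivity))
  refine ⟨N, fun G _ _ inst k m p hG hk hkℓ hp hp1 _ _ hm => ?_⟩
  obtain rfl : inst = fun a b => Classical.propDecidable (a = b) := Subsingleton.elim _ _
  obtain ⟨hn, hℓε, hℓy, hu, hl, hlδ, hexp⟩ := hN _ hG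
  have hn1 : (1 : ℝ) ≤ (Fintype.card G : ℕ) := Nat.one_le_cast.2 hn
  have hℓ1 : 1 ≤ Real.log (Fintype.card G) := le_trans (by norm_num) hl
  have hk1 : (1 : ℝ) ≤ k := by exact_mod_cast (by omega : 1 ≤ k)
  obtain ⟨hs, hsp, hy⟩ := ZeroSumAbsorption.scale_bounds hn1 hk1 hℓ1 hkℓ hℓε (by norm_num) hp
  have hm' : (m : ℝ) ≤ (p / (k * Real.log (Fintype.card G))) ^ 300 * (Fintype.card G : ℕ) := by
    rw [← Real.rpow_natCast]
    exact_mod_cast hm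
  exact ZeroSumAbsorption.one_sub_le_sum_absorbing rfl (by linarith) rfl hk hkℓ hp1 hδ hs hsp
    (div_mul_cancel₀ _ (by positivity)) hm' hy hℓy hu hl (by linarith) hexp
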